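/- arXiv:1911.01689 — 4 statements merged into one kernel-verified Lean document; each statement's English description precedes it below -/
import Mathlib

section
/- There exists an absolute constant K < ∞ such that the following holds: for all C*-algebras A and B with A unital, every ε ≥ 0, every self-adjoint bounded linear ε-order zero map ψ : A → B with h := ψ(1_A), and every x ∈ A, one has dist(ψ(x), closure{h·b·h : b ∈ B}) ≤ K‖ψ‖^{3/5}ε^{1/5}‖x‖. -/
/-- `ψ` is an ε-order zero map: `‖ψ(x)ψ(y)‖ ≤ ε‖x‖‖y‖` for all positive `x, y` with `xy = 0`. -/
def IsEpsOrderZero {A B : Type*} [NonUnitalCStarAlgebra A] [PartialOrder A] [StarOrderedRing A]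
    [NonUnitalCStarAlgebra B] (ε : ℝ) (ψ : A →L[ℂ] B) : Prop :=
  ∀ x y : A, 0 ≤ x → 0 ≤ y → x * y = 0 → ‖ψ x * ψ y‖ ≤ ε * ‖x‖ * ‖y‖

/-!
Write `h = ψ 1` and measure distances to `hB + Bh` and to `hBh` by quotient seminorms. For a
positive contraction `x`, cut `n • x` into layers `y₀, …, yₙ₋₁` of height one. For `j < k` the
layer `y_j` is a unit for `y_k`, so `ψ (y_j) ψ (y_k)` is `ε`-close to `h ψ (y_k)`, and
symmetrically for `k < j`; expanding the square of `n ψ x`, only the `n` diagonal terms may fail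
to be `ε`-close to `hB + Bh`, and `n → ∞` puts `(ψ x)²` within `ε` of `hB + Bh`.

If `g` is a contractive approximate unit for `h`, then `(1 - g) z (1 - g)` vanishes in the limit
for `z ∈ hB + Bh`, so `‖ψ x - ψ x g‖² = ‖(1 - g) (ψ x)² (1 - g)‖` is of order `ε`, and `ψ x` is
within a multiple of `√ε` of `g (ψ x) g ∈ hBh`. Interpolating with the trivial bound `‖ψ‖ ‖x‖`
gives the exponents `3 / 5` and `1 / 5`.
-/

open Filter Topology

section Ramp

/-- The height of `t` inside the slab `[k, k + 1]`: `0` below it, `t - k` in it and `1` above. -/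
noncomputable def ramp (k : ℕ) (t : ℝ) : ℝ := min t (k + 1) - min t k

lemma continuous_ramp (k : ℕ) : Continuous (ramp k) := by
  unfold ramp
  fun_prop

lemma ramp_nonneg (k : ℕ) (t : ℝ) : 0 ≤ ramp k t :=
  sub_nonneg.2 <| min_le_min_left t (by linarith)

lemma ramp_le_one (k : ℕ) (t : ℝ) : ramp k t ≤ 1 := by
  unfold ramp
  grind

lemma one_sub_ramp_mul_ramp {j k : ℕ} (hjk : j < k) (t : ℝ) :
    (1 - ramp j t) * ramp k t = 0 := by
  have hjk' : (j : ℝ) + 1 ≤ k := by exact_mod_cast hjk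
  rcases le_total t k with ht | ht
  · have : ramp k t = 0 := by unfold ramp; grind
    rw [this, mul_zero]
  · have : ramp j t = 1 := by unfold ramp; grind
    rw [this, sub_self, zero_mul]

lemma sum_range_ramp {n : ℕ} {t : ℝ} (ht₀ : 0 ≤ t) (htn : t ≤ n) :
    ∑ k ∈ Finset.range n, ramp k t = t := by
  have telescope := Finset.sum_range_sub (fun k : ℕ ↦ min t k) n
  simp only [Nat.cast_add, Nat.cast_one, Nat.cast_zero, min_eq_left htn, min_eq_right ht₀,
    sub_zero] at telescope
  exact telescope

end Ramp

section Layer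

variable {A : Type*} [CStarAlgebra A]

/-- The `k`-th unit-height layer of a positive element of a C⋆-algebra. -/
noncomputable def layer (k : ℕ) (x : A) : A := cfc (ramp k) x

lemma one_sub_layer {x : A} (hx : IsSelfAdjoint x) (k : ℕ) :
    1 - layer k x = cfc (fun t ↦ 1 - ramp k t) x := by
  rw [layer, cfc_sub _ _ x (by fun_prop) (continuous_ramp k).continuousOn, cfc_const_one ℝ x]

lemma one_sub_layer_mul_layer {x : A} (hx : IsSelfAdjoint x) {j k : ℕ} (hjk : j < k) :
    (1 - layer j x) * layer k x = 0 := by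
  have hcont : Continuous fun t ↦ 1 - ramp j t := continuous_const.sub (continuous_ramp j)
  rw [one_sub_layer hx, layer,
    ← cfc_mul _ _ x hcont.continuousOn (continuous_ramp k).continuousOn]
  simp [one_sub_ramp_mul_ramp hjk]

lemma layer_mul_one_sub_layer {x : A} (hx : IsSelfAdjoint x) {j k : ℕ} (hjk : j < k) :
    layer k x * (1 - layer j x) = 0 := by
  rw [one_sub_layer hx, layer, cfc_commute_cfc, ← layer, ← one_sub_layer hx,
    one_sub_layer_mul_layer hx hjk]

variable [PartialOrder A] [StarOrderedRing A]

lemma layer_nonneg (k : ℕ) (x : A) : 0 ≤ layer k x :=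
  cfc_nonneg fun t _ ↦ ramp_nonneg k t

lemma layer_le_one (k : ℕ) (x : A) : layer k x ≤ 1 :=
  cfc_le_one _ _ fun t _ ↦ ramp_le_one k t

lemma norm_layer_le_one (k : ℕ) (x : A) : ‖layer k x‖ ≤ 1 :=
  (CStarAlgebra.norm_le_one_iff_of_nonneg _ (layer_nonneg k x)).2 (layer_le_one k x)

lemma norm_one_sub_layer_le_one (k : ℕ) (x : A) : ‖1 - layer k x‖ ≤ 1 :=
  (CStarAlgebra.norm_le_one_iff_of_nonneg _ (sub_nonneg.2 (layer_le_one k x))).2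
    (sub_le_self 1 (layer_nonneg k x))

lemma sum_range_layer {x : A} (hx : 0 ≤ x) {n : ℕ} (hxn : ‖x‖ ≤ n) :
    ∑ k ∈ Finset.range n, layer k x = x := by
  simp only [layer]
  rw [← cfc_sum _ _ _ fun k _ ↦ (continuous_ramp k).continuousOn]
  conv_rhs => rw [← cfc_id ℝ x]
  refine cfc_congr fun t ht ↦ ?_
  have t_le_norm : ‖t‖ ≤ ‖x‖ := by
    simpa only [id, cfc_id ℝ x] using norm_apply_le_norm_cfc (id : ℝ → ℝ) x ht
  rw [Finset.sum_apply, id, sum_range_ramp (spectrum_nonneg_of_nonneg hx ht)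
    ((Real.le_norm_self t).trans (t_le_norm.trans hxn))]

end Layer

section QuotientNorm

variable {R M : Type*} [Ring R] [SeminormedAddCommGroup M] [Module R M]

lemma norm_mkQL_le_norm_sub {S : Submodule R M} (a : M) {s : M} (hs : s ∈ S) :
    ‖S.mkQL a‖ ≤ ‖a - s‖ := by
  have mkQL_sub : S.mkQL (a - s) = S.mkQL a := by
    rw [map_sub, show S.mkQL s = 0 from (Submodule.Quotient.mk_eq_zero S).2 hs, sub_zero]
  exact mkQL_sub ▸ Submodule.Quotient.norm_mk_le S (a - s)

lemma infDist_eq_norm_mkQL (S : Submodule R M) (a : M) :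
    Metric.infDist a (S : Set M) = ‖S.mkQL a‖ :=
  (QuotientAddGroup.norm_mk (S := S.toAddSubgroup) a).symm

end QuotientNorm

section Multiples

variable {B : Type*} [NonUnitalRing B] [Module ℂ B] [IsScalarTower ℂ B B] [SMulCommClass ℂ B B]

/-- The subspace `hBh`; if `h` is a self-adjoint element of a C⋆-algebra, its closure is the
hereditary subalgebra generated by `h`. -/
def twoSidedMultiples (h : B) : Submodule ℂ B :=
  LinearMap.range (LinearMap.mulLeftRight ℂ (h, h))

/-- The subspace `hB + Bh`. -/
def oneSidedMultiples (h : B) : Submodule ℂ B :=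
  LinearMap.range (LinearMap.mulLeft ℂ h) ⊔ LinearMap.range (LinearMap.mulRight ℂ h)

lemma mul_mul_mem_twoSidedMultiples (h b : B) : h * b * h ∈ twoSidedMultiples h :=
  ⟨b, by simp⟩

lemma coe_twoSidedMultiples (h : B) :
    (twoSidedMultiples h : Set B) = {y | ∃ b, y = h * b * h} := by
  ext y
  simp [twoSidedMultiples, eq_comm]

lemma mem_oneSidedMultiples {h y : B} :
    y ∈ oneSidedMultiples h ↔ ∃ b c, h * b + c * h = y := by
  simp [oneSidedMultiples, Submodule.mem_sup]

end Multiples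

section Cutoff

variable {B : Type*} [NonUnitalCStarAlgebra B] {h : B} {δ : ℝ}

/-- The regularised inverse `h (h² + δ²)⁻¹` of a self-adjoint element of a non-unital algebra. -/
noncomputable def regInverse (h : B) (δ : ℝ) : B := cfcₙ (fun t : ℝ ↦ t / (t ^ 2 + δ ^ 2)) h

lemma isSelfAdjoint_regInverse (h : B) (δ : ℝ) : IsSelfAdjoint (regInverse h δ) :=
  cfcₙ_predicate _ _

lemma commute_regInverse (h : B) (δ : ℝ) : Commute h (regInverse h δ) :=
  ((Commute.refl h).cfcₙ_real _).symm

lemma mul_regInverse (hh : IsSelfAdjoint h) (hδ : 0 < δ) :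
    h * regInverse h δ = cfcₙ (fun t : ℝ ↦ t * (t / (t ^ 2 + δ ^ 2))) h := by
  have hcont : Continuous fun t : ℝ ↦ t / (t ^ 2 + δ ^ 2) := by
    fun_prop (disch := intros; positivity)
  rw [cfcₙ_mul (fun t ↦ t) _ h (by fun_prop) rfl hcont.continuousOn (by simp), cfcₙ_id' ℝ h,
    regInverse]

lemma norm_mul_regInverse_le_one (hh : IsSelfAdjoint h) (hδ : 0 < δ) :
    ‖h * regInverse h δ‖ ≤ 1 := by
  rw [mul_regInverse hh hδ]
  refine norm_cfcₙ_le fun t _ ↦ ?_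
  rw [← mul_div_assoc, ← sq, Real.norm_of_nonneg (by positivity), div_le_one (by positivity)]
  exact le_add_of_nonneg_right (sq_nonneg δ)

lemma norm_sub_mul_mul_regInverse_le (hh : IsSelfAdjoint h) (hδ : 0 < δ) :
    ‖h - h * (h * regInverse h δ)‖ ≤ δ := by
  have hcont : Continuous fun t : ℝ ↦ t * (t / (t ^ 2 + δ ^ 2)) := by
    fun_prop (disch := intros; positivity)
  have hcont' : Continuous fun t : ℝ ↦ t * (t * (t / (t ^ 2 + δ ^ 2))) := continuous_id.mul hcont
  have as_cfcₙ : h - h * (h * regInverse h δ)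
      = cfcₙ (fun t : ℝ ↦ t - t * (t * (t / (t ^ 2 + δ ^ 2)))) h := by
    rw [cfcₙ_sub (fun t ↦ t) _ h (by fun_prop) rfl hcont'.continuousOn (by simp),
      cfcₙ_mul (fun t ↦ t) _ h (by fun_prop) rfl hcont.continuousOn (by simp), cfcₙ_id' ℝ h,
      mul_regInverse hh hδ]
  rw [as_cfcₙ]
  refine norm_cfcₙ_le fun t _ ↦ ?_
  have : t - t * (t * (t / (t ^ 2 + δ ^ 2))) = t * δ ^ 2 / (t ^ 2 + δ ^ 2) := by
    field_simp
    ring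
  rw [this, Real.norm_eq_abs, abs_div, abs_mul, abs_of_pos (pow_pos hδ 2),
    abs_of_pos (by positivity : 0 < t ^ 2 + δ ^ 2), div_le_iff₀ (by positivity), ← sq_abs t]
  nlinarith [two_mul_le_add_sq |t| δ, abs_nonneg t]

end Cutoff

section Corner

variable {B : Type*} [NonUnitalNormedRing B] {a g h : B}

lemma norm_sub_mul_le_left (hg : ‖g‖ ≤ 1) (z : B) : ‖z - g * z‖ ≤ 2 * ‖z‖ := by
  have : ‖g * z‖ ≤ ‖z‖ := (norm_mul_le _ _).trans (mul_le_of_le_one_left (norm_nonneg z) hg)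
  linarith [norm_sub_le z (g * z)]

lemma norm_sub_mul_le_right (hg : ‖g‖ ≤ 1) (z : B) : ‖z - z * g‖ ≤ 2 * ‖z‖ := by
  have : ‖z * g‖ ≤ ‖z‖ := (norm_mul_le _ _).trans (mul_le_of_le_one_right (norm_nonneg z) hg)
  linarith [norm_sub_le z (z * g)]

/-- The compression `(1 - g) z (1 - g)`, written without the unit, which need not lie in `B`. -/
def complCorner (g z : B) : B := (z - g * z) - (z - g * z) * g

lemma complCorner_add (g z w : B) :
    complCorner g (z + w) = complCorner g z + complCorner g w := by
  unfold complCorner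
  noncomm_ring

lemma norm_complCorner_le (hg : ‖g‖ ≤ 1) (z : B) : ‖complCorner g z‖ ≤ 4 * ‖z‖ := by
  have := norm_sub_mul_le_right hg (z - g * z)
  unfold complCorner
  linarith [norm_sub_mul_le_left hg z]

lemma norm_complCorner_mul_right_le (hg : ‖g‖ ≤ 1) (h b : B) :
    ‖complCorner g (h * b)‖ ≤ 2 * (‖h - g * h‖ * ‖b‖) := by
  have factor : h * b - g * (h * b) = (h - g * h) * b := by noncomm_ring
  rw [complCorner, factor]
  linarith [norm_sub_mul_le_right hg ((h - g * h) * b), norm_mul_le (h - g * h) b]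

lemma norm_complCorner_mul_left_le (hg : ‖g‖ ≤ 1) (c h : B) :
    ‖complCorner g (c * h)‖ ≤ 2 * (‖c‖ * ‖h - h * g‖) := by
  have factor : complCorner g (c * h) = c * (h - h * g) - g * (c * (h - h * g)) := by
    unfold complCorner
    noncomm_ring
  rw [factor]
  linarith [norm_sub_mul_le_left hg (c * (h - h * g)), norm_mul_le c (h - h * g)]

variable [StarRing B] [CStarRing B]

lemma norm_complCorner_mul_self (ha : IsSelfAdjoint a) (hg : IsSelfAdjoint g) :
    ‖complCorner g (a * a)‖ = ‖a - a * g‖ ^ 2 := by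
  rw [sq, ← CStarRing.norm_star_mul_self, star_sub, star_mul, ha.star_eq, hg.star_eq, complCorner]
  congr 1
  noncomm_ring

lemma norm_sub_mul_sq_le (ha : IsSelfAdjoint a) (hg : IsSelfAdjoint g) (hg₁ : ‖g‖ ≤ 1)
    (hgh : Commute g h) (b c : B) :
    ‖a - a * g‖ ^ 2 ≤
      4 * ‖a * a - (h * b + c * h)‖ + 2 * ‖h - h * g‖ * (‖b‖ + ‖c‖) := by
  set r := a * a - (h * b + c * h)
  have split : complCorner g (a * a)
      = complCorner g r + (complCorner g (h * b) + complCorner g (c * h)) := by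
    rw [← complCorner_add, ← complCorner_add, sub_add_cancel]
  have right_le := norm_complCorner_mul_right_le hg₁ h b
  rw [hgh.eq] at right_le
  calc ‖a - a * g‖ ^ 2 = ‖complCorner g (a * a)‖ := (norm_complCorner_mul_self ha hg).symm
    _ ≤ ‖complCorner g r‖ + (‖complCorner g (h * b)‖ + ‖complCorner g (c * h)‖) :=
        split ▸ norm_add_le_of_le le_rfl (norm_add_le _ _)
    _ ≤ 4 * ‖r‖ + 2 * ‖h - h * g‖ * (‖b‖ + ‖c‖) := by
        linarith [norm_complCorner_le hg₁ r, norm_complCorner_mul_left_le hg₁ c h]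

lemma norm_sub_mul_mul_le (ha : IsSelfAdjoint a) (hg : IsSelfAdjoint g) (hg₁ : ‖g‖ ≤ 1) :
    ‖a - g * a * g‖ ≤ 2 * ‖a - a * g‖ := by
  have left_eq_right : ‖a - g * a‖ = ‖a - a * g‖ := by
    rw [← norm_star, star_sub, star_mul, ha.star_eq, hg.star_eq]
  have : a - g * a * g = (a - g * a) + g * (a - a * g) := by noncomm_ring
  rw [this]
  linarith [norm_add_le_of_le left_eq_right.le
    ((norm_mul_le _ _).trans (mul_le_of_le_one_left (norm_nonneg (a - a * g)) hg₁))]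

end Corner

section Distance

variable {B : Type*} [NonUnitalCStarAlgebra B] {a h : B}

lemma norm_mkQL_twoSidedMultiples_sq_le_add (hh : IsSelfAdjoint h) (ha : IsSelfAdjoint a) (b c : B)
    {δ : ℝ} (hδ : 0 < δ) :
    ‖(twoSidedMultiples h).mkQL a‖ ^ 2 ≤
      16 * ‖a * a - (h * b + c * h)‖ + 8 * δ * (‖b‖ + ‖c‖) := by
  set k := regInverse h δ
  have hk : Commute h k := commute_regInverse h δ
  have hg : IsSelfAdjoint (h * k) := (hh.commute_iff (isSelfAdjoint_regInverse h δ)).1 hk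
  have hg₁ : ‖h * k‖ ≤ 1 := norm_mul_regInverse_le_one hh hδ
  have hgh : Commute (h * k) h := (Commute.refl h).mul_left hk.symm
  have corner_mem : h * k * a * (h * k) ∈ twoSidedMultiples h := by
    have := mul_mul_mem_twoSidedMultiples h (k * a * k)
    rwa [← mul_assoc, ← mul_assoc, mul_assoc _ k h, ← hk.eq] at this
  have dist_le : ‖(twoSidedMultiples h).mkQL a‖ ≤ 2 * ‖a - a * (h * k)‖ :=
    (norm_mkQL_le_norm_sub a corner_mem).trans (norm_sub_mul_mul_le ha hg hg₁)
  have cutoff_le : ‖h - h * (h * k)‖ * (‖b‖ + ‖c‖) ≤ δ * (‖b‖ + ‖c‖) := by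
    gcongr
    exact norm_sub_mul_mul_regInverse_le hh hδ
  calc ‖(twoSidedMultiples h).mkQL a‖ ^ 2 ≤ (2 * ‖a - a * (h * k)‖) ^ 2 := by gcongr
    _ = 4 * ‖a - a * (h * k)‖ ^ 2 := by ring
    _ ≤ _ := by linarith [norm_sub_mul_sq_le ha hg hg₁ hgh b c]

lemma norm_mkQL_twoSidedMultiples_sq_le (hh : IsSelfAdjoint h) (ha : IsSelfAdjoint a) (b c : B) :
    ‖(twoSidedMultiples h).mkQL a‖ ^ 2 ≤ 16 * ‖a * a - (h * b + c * h)‖ := by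
  have hcont : Continuous fun δ : ℝ ↦
      16 * ‖a * a - (h * b + c * h)‖ + 8 * δ * (‖b‖ + ‖c‖) := by fun_prop
  have tendsto_bound := (hcont.tendsto' 0 (16 * ‖a * a - (h * b + c * h)‖) (by ring)).mono_left
    (nhdsWithin_le_nhds (s := Set.Ioi 0))
  exact ge_of_tendsto tendsto_bound <| eventually_mem_nhdsWithin.mono fun _ hδ ↦
    norm_mkQL_twoSidedMultiples_sq_le_add hh ha b c hδ

theorem norm_mkQL_twoSidedMultiples_le_sqrt (hh : IsSelfAdjoint h) (ha : IsSelfAdjoint a) :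
    ‖(twoSidedMultiples h).mkQL a‖ ≤ 4 * √‖(oneSidedMultiples h).mkQL (a * a)‖ := by
  have sq_le : (‖(twoSidedMultiples h).mkQL a‖ / 4) ^ 2 ≤
      ‖(oneSidedMultiples h).mkQL (a * a)‖ := by
    rw [← infDist_eq_norm_mkQL (oneSidedMultiples h),
      Metric.le_infDist (oneSidedMultiples h).nonempty]
    intro y hy
    obtain ⟨b, c, rfl⟩ := mem_oneSidedMultiples.1 hy
    rw [dist_eq_norm]
    linarith [norm_mkQL_twoSidedMultiples_sq_le hh ha b c]
  linarith [Real.le_sqrt_of_sq_le sq_le]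

end Distance

section OrderZero

variable {A B : Type*} [CStarAlgebra A] [PartialOrder A] [StarOrderedRing A]
  [NonUnitalCStarAlgebra B] {ε : ℝ} {ψ : A →L[ℂ] B}

namespace IsEpsOrderZero

lemma norm_mkQL_mul_le_of_one_sub_mul (hψ : IsEpsOrderZero ε ψ) {y z : A} (hy : y ≤ 1)
    (hz : 0 ≤ z) (hyz : (1 - y) * z = 0) :
    ‖(oneSidedMultiples (ψ 1)).mkQL (ψ y * ψ z)‖ ≤ ε * ‖1 - y‖ * ‖z‖ := by
  have mem : ψ 1 * ψ z ∈ oneSidedMultiples (ψ 1) :=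
    mem_oneSidedMultiples.2 ⟨ψ z, 0, by simp⟩
  refine (norm_mkQL_le_norm_sub _ mem).trans ?_
  rw [norm_sub_rev, ← sub_mul, ← map_sub]
  exact hψ _ _ (sub_nonneg.2 hy) hz hyz

lemma norm_mkQL_mul_le_of_mul_one_sub (hψ : IsEpsOrderZero ε ψ) {y z : A} (hy : y ≤ 1)
    (hz : 0 ≤ z) (hzy : z * (1 - y) = 0) :
    ‖(oneSidedMultiples (ψ 1)).mkQL (ψ z * ψ y)‖ ≤ ε * ‖z‖ * ‖1 - y‖ := by
  have mem : ψ z * ψ 1 ∈ oneSidedMultiples (ψ 1) :=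
    mem_oneSidedMultiples.2 ⟨0, ψ z, by simp⟩
  refine (norm_mkQL_le_norm_sub _ mem).trans ?_
  rw [norm_sub_rev, ← mul_sub, ← map_sub]
  exact hψ _ _ hz (sub_nonneg.2 hy) hzy

lemma norm_mkQL_layer_mul_layer_le (hψ : IsEpsOrderZero ε ψ) (hε : 0 ≤ ε) {x : A}
    (hx : IsSelfAdjoint x) (j k : ℕ) :
    ‖(oneSidedMultiples (ψ 1)).mkQL (ψ (layer j x) * ψ (layer k x))‖ ≤
      ε + if j = k then ‖ψ‖ ^ 2 else 0 := by
  have le_eps {p q : A} (hp : ‖p‖ ≤ 1) (hq : ‖q‖ ≤ 1) : ε * ‖p‖ * ‖q‖ ≤ ε :=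
    (mul_le_of_le_one_right (by positivity) hq).trans (mul_le_of_le_one_right hε hp)
  rcases lt_trichotomy j k with hjk | rfl | hkj
  · rw [if_neg hjk.ne, add_zero]
    exact (hψ.norm_mkQL_mul_le_of_one_sub_mul (layer_le_one j x) (layer_nonneg k x)
      (one_sub_layer_mul_layer hx hjk)).trans
      (le_eps (norm_one_sub_layer_le_one j x) (norm_layer_le_one k x))
  · have norm_le : ‖ψ (layer j x)‖ ≤ ‖ψ‖ := ψ.unit_le_opNorm _ (norm_layer_le_one j x)
    rw [if_pos rfl, sq]
    exact (Submodule.Quotient.norm_mk_le _ _).trans <|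
      (norm_mul_le_of_le norm_le norm_le).trans (le_add_of_nonneg_left hε)
  · rw [if_neg hkj.ne', add_zero]
    exact (hψ.norm_mkQL_mul_le_of_mul_one_sub (layer_le_one k x) (layer_nonneg j x)
      (layer_mul_one_sub_layer hx hkj)).trans
      (le_eps (norm_layer_le_one j x) (norm_one_sub_layer_le_one k x))

lemma norm_mkQL_mul_self_le_of_norm_le (hψ : IsEpsOrderZero ε ψ) (hε : 0 ≤ ε) {x : A}
    (hx : 0 ≤ x) {n : ℕ} (hxn : ‖x‖ ≤ n) :
    ‖(oneSidedMultiples (ψ 1)).mkQL (ψ x * ψ x)‖ ≤ n ^ 2 * ε + n * ‖ψ‖ ^ 2 := by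
  conv_lhs => rw [← sum_range_layer hx hxn]
  rw [map_sum, Finset.sum_mul_sum, map_sum]
  simp only [map_sum]
  calc _ ≤ ∑ j ∈ Finset.range n, ∑ k ∈ Finset.range n, (ε + if j = k then ‖ψ‖ ^ 2 else 0) :=
        norm_sum_le_of_le _ fun j _ ↦ norm_sum_le_of_le _ fun k _ ↦
          hψ.norm_mkQL_layer_mul_layer_le hε (.of_nonneg hx) j k
    _ = ∑ j ∈ Finset.range n, (n * ε + ‖ψ‖ ^ 2) := by
        refine Finset.sum_congr rfl fun j hj ↦ ?_
        rw [Finset.sum_add_distrib, Finset.sum_ite_eq, if_pos hj, Finset.sum_const,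
          Finset.card_range, nsmul_eq_mul]
    _ = n ^ 2 * ε + n * ‖ψ‖ ^ 2 := by
        rw [Finset.sum_const, Finset.card_range, nsmul_eq_mul]
        ring

theorem norm_mkQL_mul_self_le (hψ : IsEpsOrderZero ε ψ) (hε : 0 ≤ ε) {x : A} (hx : 0 ≤ x)
    (hx₁ : ‖x‖ ≤ 1) : ‖(oneSidedMultiples (ψ 1)).mkQL (ψ x * ψ x)‖ ≤ ε := by
  have tendsto_rhs : Tendsto (fun n : ℕ ↦ ε + ‖ψ‖ ^ 2 / n) atTop (𝓝 ε) := by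
    simpa using (tendsto_const_div_atTop_nhds_zero_nat (‖ψ‖ ^ 2)).const_add ε
  refine ge_of_tendsto tendsto_rhs <| (eventually_gt_atTop 0).mono fun n hn ↦ ?_
  have hn' : (0 : ℝ) < n := by exact_mod_cast hn
  have norm_le : ‖n • x‖ ≤ n := by
    rw [← Nat.cast_smul_eq_nsmul ℂ, norm_smul, Complex.norm_natCast]
    exact mul_le_of_le_one_right hn'.le hx₁
  have scaled := hψ.norm_mkQL_mul_self_le_of_norm_le hε (nsmul_nonneg hx n) norm_le
  rw [map_nsmul, smul_mul_smul_comm, map_nsmul, ← Nat.cast_smul_eq_nsmul ℂ, norm_smul,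
    Complex.norm_natCast, Nat.cast_mul] at scaled
  refine le_of_mul_le_mul_left (scaled.trans_eq ?_) (mul_pos hn' hn')
  field_simp

theorem norm_mkQL_twoSidedMultiples_le_of_nonneg (hψ : IsEpsOrderZero ε ψ) (hε : 0 ≤ ε)
    (hstar : ∀ x, ψ (star x) = star (ψ x)) {x : A} (hx : 0 ≤ x) (hx₁ : ‖x‖ ≤ 1) :
    ‖(twoSidedMultiples (ψ 1)).mkQL (ψ x)‖ ≤ 4 * √ε := by
  have map_isSelfAdjoint {y : A} (hy : IsSelfAdjoint y) : IsSelfAdjoint (ψ y) :=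
    (hstar y).symm.trans (congrArg ψ hy)
  refine (norm_mkQL_twoSidedMultiples_le_sqrt (map_isSelfAdjoint (.one A))
    (map_isSelfAdjoint (.of_nonneg hx))).trans ?_
  gcongr
  exact hψ.norm_mkQL_mul_self_le hε hx hx₁

theorem norm_mkQL_twoSidedMultiples_le (hψ : IsEpsOrderZero ε ψ) (hε : 0 ≤ ε)
    (hstar : ∀ x, ψ (star x) = star (ψ x)) (x : A) :
    ‖(twoSidedMultiples (ψ 1)).mkQL (ψ x)‖ ≤ 16 * √ε * ‖x‖ := by
  refine ((twoSidedMultiples (ψ 1)).mkQL ∘L ψ).le_of_opNorm_le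
    (ContinuousLinearMap.opNorm_le_of_unit_norm (by positivity) fun y hy ↦ ?_) x
  obtain ⟨p, p_nonneg, p_le, y_eq⟩ := CStarAlgebra.exists_sum_four_nonneg y
  rw [y_eq, map_sum]
  calc _ ≤ ∑ _i : Fin 4, 4 * √ε := norm_sum_le_of_le _ fun i _ ↦ by
        rw [map_smul, norm_smul, norm_pow, Complex.norm_I, one_pow, one_mul]
        exact hψ.norm_mkQL_twoSidedMultiples_le_of_nonneg hε hstar (p_nonneg i)
          ((p_le i).trans_eq hy)
    _ = 16 * √ε := by
        rw [Fin.sum_const, nsmul_eq_mul]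
        ring

end IsEpsOrderZero

end OrderZero

lemma le_rpow_mul_rpow_of_le {m a b θ : ℝ} (hm : 0 ≤ m) (hma : m ≤ a) (hmb : m ≤ b)
    (hθ₀ : 0 ≤ θ) (hθ₁ : θ ≤ 1) : m ≤ a ^ (1 - θ) * b ^ θ := by
  have ha : 0 ≤ a := hm.trans hma
  have hθ₁' : 0 ≤ 1 - θ := sub_nonneg.2 hθ₁
  calc m = m ^ (1 - θ) * m ^ θ := by
        rw [← Real.rpow_add_of_nonneg hm hθ₁' hθ₀, sub_add_cancel, Real.rpow_one]
    _ ≤ a ^ (1 - θ) * b ^ θ := by gcongr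

theorem stmt_12_general {A B : Type*} [CStarAlgebra A] [PartialOrder A] [StarOrderedRing A]
    [NonUnitalCStarAlgebra B] {ε : ℝ} (hε : 0 ≤ ε) {ψ : A →L[ℂ] B} (hψ : IsEpsOrderZero ε ψ)
    (hstar : ∀ x, ψ (star x) = star (ψ x)) {θ : ℝ} (hθ₀ : 0 ≤ θ) (hθ₁ : θ ≤ 1) (x : A) :
    Metric.infDist (ψ x) (closure {y : B | ∃ b : B, y = ψ 1 * b * ψ 1}) ≤
      16 * ‖ψ‖ ^ (1 - θ) * ε ^ (θ / 2) * ‖x‖ := by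
  rw [Metric.infDist_closure, ← coe_twoSidedMultiples, infDist_eq_norm_mkQL]
  have le_norm : ‖(twoSidedMultiples (ψ 1)).mkQL (ψ x)‖ ≤ ‖ψ‖ * (16 * ‖x‖) :=
    (Submodule.Quotient.norm_mk_le _ _).trans <| (ψ.le_opNorm x).trans <| by
      gcongr
      linarith [norm_nonneg x]
  have le_sqrt : ‖(twoSidedMultiples (ψ 1)).mkQL (ψ x)‖ ≤ √ε * (16 * ‖x‖) :=
    (hψ.norm_mkQL_twoSidedMultiples_le hε hstar x).trans_eq (by ring)
  calc ‖(twoSidedMultiples (ψ 1)).mkQL (ψ x)‖ ≤ min ‖ψ‖ √ε * (16 * ‖x‖) := by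
        rw [min_mul_of_nonneg _ _ (by positivity)]
        exact le_min le_norm le_sqrt
    _ ≤ ‖ψ‖ ^ (1 - θ) * √ε ^ θ * (16 * ‖x‖) := by
        gcongr
        exact le_rpow_mul_rpow_of_le (le_min (norm_nonneg ψ) (Real.sqrt_nonneg ε))
          (min_le_left _ _) (min_le_right _ _) hθ₀ hθ₁
    _ = 16 * ‖ψ‖ ^ (1 - θ) * ε ^ (θ / 2) * ‖x‖ := by
        rw [Real.sqrt_eq_rpow, ← Real.rpow_mul hε]
        ring_nf

/-- There is an absolute constant `K` such that for every self-adjoint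
ε-order zero map `ψ` on a unital C*-algebra, with `h := ψ(1)`, the range of `ψ` lies close to
the hereditary subalgebra `closure(hBh)`:
`dist(ψ(x), closure{hbh : b ∈ B}) ≤ K‖ψ‖^{3/5}ε^{1/5}‖x‖` for every `x`. -/
theorem stmt_12 :
    ∃ K : ℝ, ∀ (A B : Type) (_ : CStarAlgebra A) (_ : PartialOrder A) (_ : StarOrderedRing A)
      (_ : NonUnitalCStarAlgebra B) (ε : ℝ), 0 ≤ ε →
      ∀ ψ : A →L[ℂ] B, IsEpsOrderZero ε ψ → (∀ x : A, ψ (star x) = star (ψ x)) →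
      ∀ h : B, h = ψ 1 →
      ∀ x : A,
        Metric.infDist (ψ x) (closure {y : B | ∃ b : B, y = h * b * h}) ≤
          K * ‖ψ‖ ^ ((3 : ℝ) / 5) * ε ^ ((1 : ℝ) / 5) * ‖x‖ := by
  refine ⟨16, fun A B _ _ _ _ ε hε ψ hψ hstar h hh x ↦ ?_⟩
  convert hh ▸ stmt_12_general hε hψ hstar (θ := 2 / 5) (by norm_num) (by norm_num) x using 4 <;>
    norm_num
end

section
/- There exists an absolute constant K < ∞ such that the following holds: for all C*-algebras A and B with A unital, every ε ≥ 0, every self-adjoint bounded linear ε-order zero map ψ : A → B with h := ψ(1_A), every real α with 0 < α < 1/10, and every x ∈ A, there exists u ∈ B such that ‖u‖ ≤ 2‖ψ‖^{1−2α}‖x‖ and ‖ψ(x) − u·(h²)^{α}‖ ≤ K‖ψ‖^{3/5}ε^{1/5}‖x‖. -/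
open scoped NNReal

/-!
The Jordan defect `ψ(x²)ψ(1) + ψ(1)ψ(x²) - 2ψ(x)²` corresponds to the kernel `(s - r)²` on the
spectrum of `x`. Computing the area of a half-disc shows that this kernel is a superposition of the
kernels `√(s - t)₊ √(t - r)₊` and their transposes, that is, of products of orthogonal positive
functions, so the defect of an `ε`-order zero map is `O(ε)`. If `ψ` is self-adjoint, a bound on the
defect is an estimate of `(ψ(x)q)⋆(ψ(x)q)`, and it yields `‖ψ(x)q‖ ≤ 2(‖ψ(1)q‖ + 4√ε‖q‖)‖x‖` for
every `q`. Taking for `q` functions of `ψ(1)`, one sees that `ψ(x)` times a cut-off of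
`|ψ(1)|^(-2α)` at the level `‖ψ‖^(1-2p) ε^p` is, after a slight rescaling, the required `u`.
-/

open Filter MeasureTheory
open scoped unitInterval Topology

/-! ### A half-disc kernel -/

section Kernel

/-- The half-disc with diameter `[r, s]` has area `π / 8 * (s - r) ^ 2`. -/
lemma integral_sqrt_sub_mul_sqrt_sub {r s : ℝ} (hrs : r ≤ s) :
    ∫ t in r..s, √(s - t) * √(t - r) = Real.pi / 8 * (s - r) ^ 2 := by
  set ρ := (s - r) / 2 with hρ
  have hρ0 : 0 ≤ ρ := by rw [hρ]; linarith
  have hsubst := intervalIntegral.smul_integral_comp_add_mul (a := -1) (b := 1)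
    (fun t => √(s - t) * √(t - r)) ρ ((r + s) / 2)
  have hdisc : ∀ v ∈ Set.uIcc (-1 : ℝ) 1,
      √(s - ((r + s) / 2 + ρ * v)) * √((r + s) / 2 + ρ * v - r) = ρ * √(1 - v ^ 2) := by
    intro v hv
    rw [Set.uIcc_of_le (by norm_num)] at hv
    rw [← Real.sqrt_mul (by nlinarith [hv.2]),
      show (s - ((r + s) / 2 + ρ * v)) * ((r + s) / 2 + ρ * v - r) = ρ ^ 2 * (1 - v ^ 2) by
        rw [hρ]; ring,
      Real.sqrt_mul (sq_nonneg ρ), Real.sqrt_sq hρ0]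
  rw [intervalIntegral.integral_congr hdisc, intervalIntegral.integral_const_mul,
    integral_sqrt_one_sub_sq] at hsubst
  convert hsubst.symm using 1
  · congr 1 <;> rw [hρ] <;> ring
  · rw [hρ, smul_eq_mul]; ring

lemma sqrt_sub_mul_sqrt_sub_eq_zero {r s t : ℝ} (h : t ∉ Set.Ioo r s) :
    √(s - t) * √(t - r) = 0 := by
  rcases le_or_gt t r with htr | hrt
  · rw [Real.sqrt_eq_zero_of_nonpos (sub_nonpos.2 htr), mul_zero]
  · rw [Real.sqrt_eq_zero_of_nonpos (sub_nonpos.2 (not_lt.1 fun hts => h ⟨hrt, hts⟩)), zero_mul]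

lemma setIntegral_sqrt_sub_mul_sqrt_sub_of_le {r s : ℝ} (hr : 0 ≤ r) (hs : s ≤ 1) (hrs : r ≤ s) :
    ∫ t in Set.Ioc 0 1, √(s - t) * √(t - r) = Real.pi / 8 * (s - r) ^ 2 := by
  rw [← integral_sqrt_sub_mul_sqrt_sub hrs, intervalIntegral.integral_of_le hrs]
  exact (setIntegral_eq_of_subset_of_forall_sdiff_eq_zero measurableSet_Ioc
    (Set.Ioc_subset_Ioc hr hs) fun t ht =>
      sqrt_sub_mul_sqrt_sub_eq_zero fun h => ht.2 (Set.Ioo_subset_Ioc_self h))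

lemma setIntegral_sqrt_sub_mul_sqrt_sub_add_swap (r s : I) :
    (∫ t in Set.Ioc 0 1, √(s - t) * √(t - r)) + ∫ t in Set.Ioc 0 1, √(t - s) * √(r - t) =
      Real.pi / 8 * (s - r : ℝ) ^ 2 := by
  wlog hrs : r ≤ s generalizing r s
  · have hswap := this s r (le_of_not_ge hrs)
    rw [add_comm, ← neg_sub (r : ℝ), neg_sq]
    simpa only [mul_comm] using hswap
  have hzero : ∀ t : ℝ, √(t - s) * √(r - t) = 0 := fun t => by
    rw [mul_comm, sqrt_sub_mul_sqrt_sub_eq_zero]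
    exact fun h => (h.1.trans h.2).not_ge hrs
  simp only [hzero, integral_zero, add_zero]
  exact setIntegral_sqrt_sub_mul_sqrt_sub_of_le r.2.1 s.2.2 hrs

/-- The function `s ↦ √(s - t)` on `[0, 1]`; it vanishes on `[0, t]`, since `Real.sqrt` is zero on
negative numbers. -/
noncomputable def sqrtSubRight (t : ℝ) : C(I, ℝ) := ⟨fun s => √(s - t), by fun_prop⟩

/-- The function `s ↦ √(t - s)` on `[0, 1]`; it vanishes on `[t, 1]`. -/
noncomputable def sqrtSubLeft (t : ℝ) : C(I, ℝ) := ⟨fun s => √(t - s), by fun_prop⟩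

lemma continuous_sqrtSubRight : Continuous sqrtSubRight :=
  ContinuousMap.continuous_of_continuous_uncurry _ (by
    simp only [Function.uncurry_def, sqrtSubRight, ContinuousMap.coe_mk]; fun_prop)

lemma continuous_sqrtSubLeft : Continuous sqrtSubLeft :=
  ContinuousMap.continuous_of_continuous_uncurry _ (by
    simp only [Function.uncurry_def, sqrtSubLeft, ContinuousMap.coe_mk]; fun_prop)

lemma sqrtSubRight_nonneg (t : ℝ) : 0 ≤ sqrtSubRight t := fun _ => Real.sqrt_nonneg _

lemma sqrtSubLeft_nonneg (t : ℝ) : 0 ≤ sqrtSubLeft t := fun _ => Real.sqrt_nonneg _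

lemma sqrtSubRight_mul_sqrtSubLeft (t : ℝ) : sqrtSubRight t * sqrtSubLeft t = 0 := by
  ext s
  exact sqrt_sub_mul_sqrt_sub_eq_zero (by simp)

lemma norm_sqrtSubRight_le_one {t : ℝ} (ht : 0 ≤ t) : ‖sqrtSubRight t‖ ≤ 1 := by
  refine (ContinuousMap.norm_le _ zero_le_one).2 fun s => ?_
  rw [sqrtSubRight, ContinuousMap.coe_mk, Real.norm_of_nonneg (Real.sqrt_nonneg _)]
  exact Real.sqrt_le_one.2 (by linarith [s.2.2])

lemma norm_sqrtSubLeft_le_one {t : ℝ} (ht : t ≤ 1) : ‖sqrtSubLeft t‖ ≤ 1 := by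
  refine (ContinuousMap.norm_le _ zero_le_one).2 fun s => ?_
  rw [sqrtSubLeft, ContinuousMap.coe_mk, Real.norm_of_nonneg (Real.sqrt_nonneg _)]
  exact Real.sqrt_le_one.2 (by linarith [s.2.1])

lemma integrableOn_norm_sqrtSubRight_mul :
    IntegrableOn (fun t => ‖sqrtSubRight t‖ * ‖sqrtSubLeft t‖) (Set.Ioc 0 1) :=
  (continuous_sqrtSubRight.norm.mul continuous_sqrtSubLeft.norm).integrableOn_Ioc

end Kernel

/-! ### The Jordan defect -/

section JordanDefect

/-- Twice the defect of the identity `ψ (x ^ 2) ∘ ψ 1 = ψ x ^ 2`, which order zero maps satisfy;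
here `a ∘ b = (a * b + b * a) / 2` is the Jordan product. -/
def jordanDefect {A B : Type*} [Mul A] [One A] [NonUnitalNonAssocRing B] [Module ℝ B]
    (ψ : A → B) (x : A) : B :=
  ψ (x * x) * ψ 1 + ψ 1 * ψ (x * x) - (2 : ℝ) • (ψ x * ψ x)

lemma jordanDefect_smul_sub_one {A B : Type*} [Ring A] [Algebra ℝ A] [NonUnitalRing B] [Module ℝ B]
    [IsScalarTower ℝ B B] [SMulCommClass ℝ B B] (ψ : A →ₗ[ℝ] B) (c : ℝ) (x : A) :
    jordanDefect ψ (c • x - 1) = c ^ 2 • jordanDefect ψ x := by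
  have hsq : (c • x - 1) * (c • x - 1) = c ^ 2 • (x * x) - (2 * c) • x + 1 := by
    simp only [mul_sub, sub_mul, smul_mul_assoc, mul_smul_comm, mul_one, one_mul]
    module
  simp only [jordanDefect, hsq, map_add, map_sub, map_smul, mul_sub, sub_mul, mul_add, add_mul,
    smul_mul_assoc, mul_smul_comm]
  module

end JordanDefect

/-! ### Products of values of a linear map on `C([0, 1])` -/

section BernsteinMul

variable {E : Type*} [NonUnitalNormedRing E] [NormedSpace ℝ E]

lemma norm_bernsteinApproximation_le (n : ℕ) (f : C(I, ℝ)) :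
    ‖bernsteinApproximation n f‖ ≤ ‖f‖ := by
  refine (ContinuousMap.norm_le _ (norm_nonneg f)).2 fun x => ?_
  rw [bernsteinApproximation.apply]
  calc ‖∑ k : Fin (n + 1), bernstein n k x • f (bernstein.z k)‖
      ≤ ∑ k : Fin (n + 1), bernstein n k x * ‖f‖ := by
        refine (norm_sum_le _ _).trans (Finset.sum_le_sum fun k _ => ?_)
        rw [norm_smul, Real.norm_of_nonneg bernstein_nonneg]
        exact mul_le_mul_of_nonneg_left (f.norm_coe_le_norm _) bernstein_nonneg
    _ = ‖f‖ := by rw [← Finset.sum_mul, bernstein.probability, one_mul]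

/-- The bilinear map `(f, g) ↦ φ f * φ g`, regarded as a linear map on kernels
`(s, r) ↦ f s * g r`, evaluated at the two-variable Bernstein approximation of a kernel `F`. -/
noncomputable def bernsteinMul (φ : C(I, ℝ) →L[ℝ] E) (n : ℕ) (F : I → I → ℝ) : E :=
  ∑ k : Fin (n + 1), ∑ l : Fin (n + 1),
    F (bernstein.z k) (bernstein.z l) • (φ (bernstein n k) * φ (bernstein n l))

variable (φ : C(I, ℝ) →L[ℝ] E)

lemma bernsteinMul_add (n : ℕ) (F G : I → I → ℝ) :
    bernsteinMul φ n (F + G) = bernsteinMul φ n F + bernsteinMul φ n G := by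
  simp only [bernsteinMul, Pi.add_apply, add_smul, Finset.sum_add_distrib]

lemma bernsteinMul_smul (n : ℕ) (c : ℝ) (F : I → I → ℝ) :
    bernsteinMul φ n (c • F) = c • bernsteinMul φ n F := by
  simp only [bernsteinMul, Pi.smul_apply, smul_assoc, Finset.smul_sum]

variable {T : Type*} [MeasurableSpace T] {μ : Measure T} {a b : T → C(I, ℝ)}

lemma integral_bernsteinMul_mul [CompleteSpace E] (ha : AEStronglyMeasurable a μ)
    (hb : AEStronglyMeasurable b μ) (hab : Integrable (fun t => ‖a t‖ * ‖b t‖) μ) (n : ℕ) :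
    ∫ t, bernsteinMul φ n (fun s r => a t s * b t r) ∂μ =
      bernsteinMul φ n fun s r => ∫ t, a t s * b t r ∂μ := by
  have hint (s r : I) : Integrable (fun t => a t s * b t r) μ :=
    hab.mono' (((continuous_eval_const s).comp_aestronglyMeasurable ha).mul
      ((continuous_eval_const r).comp_aestronglyMeasurable hb))
      (.of_forall fun t => (norm_mul_le _ _).trans
        (mul_le_mul ((a t).norm_coe_le_norm s) ((b t).norm_coe_le_norm r)
          (norm_nonneg _) (norm_nonneg _)))
  unfold bernsteinMul
  rw [integral_finsetSum _ fun k _ => integrable_finsetSum _ fun l _ => (hint _ _).smul_const _]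
  refine Finset.sum_congr rfl fun k _ => ?_
  rw [integral_finsetSum _ fun l _ => (hint _ _).smul_const _]
  exact Finset.sum_congr rfl fun l _ => integral_smul_const _ _

variable [IsScalarTower ℝ E E] [SMulCommClass ℝ E E]

lemma bernsteinMul_mul (n : ℕ) (f g : C(I, ℝ)) :
    bernsteinMul φ n (fun s r => f s * g r) =
      φ (bernsteinApproximation n f) * φ (bernsteinApproximation n g) := by
  have hsum (f : C(I, ℝ)) : bernsteinApproximation n f =
      ∑ k : Fin (n + 1), f (bernstein.z k) • bernstein n k := by
    ext x
    simp [bernsteinApproximation.apply, mul_comm]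
  simp only [hsum, bernsteinMul, map_sum, map_smul, Finset.sum_mul_sum, smul_mul_smul_comm]

lemma tendsto_bernsteinMul_mul (f g : C(I, ℝ)) :
    Tendsto (fun n => bernsteinMul φ n fun s r => f s * g r) atTop (𝓝 (φ f * φ g)) := by
  simp only [bernsteinMul_mul]
  exact ((φ.continuous.tendsto f).comp (bernsteinApproximation_uniform f)).mul
    ((φ.continuous.tendsto g).comp (bernsteinApproximation_uniform g))

variable [CompleteSpace E]

lemma tendsto_bernsteinMul_integral (ha : AEStronglyMeasurable a μ)
    (hb : AEStronglyMeasurable b μ) (hab : Integrable (fun t => ‖a t‖ * ‖b t‖) μ) :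
    Tendsto (fun n => bernsteinMul φ n fun s r => ∫ t, a t s * b t r ∂μ) atTop
      (𝓝 (∫ t, φ (a t) * φ (b t) ∂μ)) := by
  simp only [← integral_bernsteinMul_mul φ ha hb hab]
  refine tendsto_integral_of_dominated_convergence (fun t => (‖φ‖ * ‖φ‖) * (‖a t‖ * ‖b t‖))
    (fun n => ?_) (hab.const_mul _) (fun n => .of_forall fun t => ?_)
    (.of_forall fun t => tendsto_bernsteinMul_mul φ (a t) (b t))
  · unfold bernsteinMul
    exact Finset.aestronglyMeasurable_fun_sum _ fun k _ =>
      Finset.aestronglyMeasurable_fun_sum _ fun l _ =>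
        (((continuous_eval_const _).comp_aestronglyMeasurable ha).mul
          ((continuous_eval_const _).comp_aestronglyMeasurable hb)).smul_const _
  · rw [bernsteinMul_mul, mul_mul_mul_comm]
    exact norm_mul_le_of_le
      (φ.le_opNorm_of_le (norm_bernsteinApproximation_le n _))
      (φ.le_opNorm_of_le (norm_bernsteinApproximation_le n _))

/-- The inclusion `[0, 1] → ℝ` as a continuous function. -/
abbrev unitIntervalVal : C(I, ℝ) := ⟨Subtype.val, continuous_subtype_val⟩

/-- Both sides extend `(f, g) ↦ φ f * φ g` to the kernel `(s, r) ↦ π / 8 * (s - r) ^ 2`. -/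
lemma setIntegral_mul_sqrtSub :
    (∫ t in Set.Ioc 0 1, φ (sqrtSubRight t) * φ (sqrtSubLeft t)) +
        ∫ t in Set.Ioc 0 1, φ (sqrtSubLeft t) * φ (sqrtSubRight t) =
      (Real.pi / 8) • jordanDefect φ unitIntervalVal := by
  set X := unitIntervalVal
  have hr := continuous_sqrtSubRight.aestronglyMeasurable (μ := volume.restrict (Set.Ioc 0 1))
  have hl := continuous_sqrtSubLeft.aestronglyMeasurable (μ := volume.restrict (Set.Ioc 0 1))
  have hleft := (tendsto_bernsteinMul_integral φ hr hl integrableOn_norm_sqrtSubRight_mul).add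
    (tendsto_bernsteinMul_integral φ hl hr
      (by simpa only [mul_comm] using! integrableOn_norm_sqrtSubRight_mul))
  have hright := (((tendsto_bernsteinMul_mul φ (X * X) 1).add
    (tendsto_bernsteinMul_mul φ 1 (X * X))).sub
    ((tendsto_bernsteinMul_mul φ X X).const_smul (2 : ℝ))).const_smul (Real.pi / 8)
  refine tendsto_nhds_unique hleft (hright.congr fun n => ?_)
  rw [← bernsteinMul_add, ← bernsteinMul_add, ← bernsteinMul_smul, sub_eq_add_neg,
    ← neg_one_smul ℝ, ← bernsteinMul_smul, ← bernsteinMul_add, ← bernsteinMul_smul]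
  congr 1
  ext s r
  refine Eq.trans ?_ (setIntegral_sqrt_sub_mul_sqrt_sub_add_swap r s).symm
  simp only [X, ContinuousMap.mul_apply, ContinuousMap.coe_mk, ContinuousMap.one_apply,
    Pi.add_apply, Pi.smul_apply, smul_eq_mul]
  ring

lemma norm_jordanDefect_unitIntervalVal_le {ε : ℝ} (hε : 0 ≤ ε)
    (hφ : ∀ f g : C(I, ℝ), 0 ≤ f → 0 ≤ g → f * g = 0 → ‖φ f * φ g‖ ≤ ε * ‖f‖ * ‖g‖) :
    ‖jordanDefect φ unitIntervalVal‖ ≤ 16 * ε / Real.pi := by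
  have hunit {f g : C(I, ℝ)} (hf : 0 ≤ f) (hg : 0 ≤ g) (hfg : f * g = 0) (hf1 : ‖f‖ ≤ 1)
      (hg1 : ‖g‖ ≤ 1) : ‖φ f * φ g‖ ≤ ε := by
    refine (hφ f g hf hg hfg).trans ?_
    rw [mul_assoc]
    exact mul_le_of_le_one_right hε (mul_le_one₀ hf1 (norm_nonneg g) hg1)
  have hbound {F : ℝ → E} (hF : ∀ t ∈ Set.Ioc (0 : ℝ) 1, ‖F t‖ ≤ ε) :
      ‖∫ t in Set.Ioc 0 1, F t‖ ≤ ε := by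
    simpa using norm_setIntegral_le_of_norm_le_const (μ := volume) (by simp) hF
  have hsum := norm_add_le_of_le
    (hbound fun t ht => hunit (sqrtSubRight_nonneg t) (sqrtSubLeft_nonneg t)
      (sqrtSubRight_mul_sqrtSubLeft t) (norm_sqrtSubRight_le_one ht.1.le)
      (norm_sqrtSubLeft_le_one ht.2))
    (hbound fun t ht => hunit (sqrtSubLeft_nonneg t) (sqrtSubRight_nonneg t)
      (mul_comm (sqrtSubLeft t) _ ▸ sqrtSubRight_mul_sqrtSubLeft t)
      (norm_sqrtSubLeft_le_one ht.2) (norm_sqrtSubRight_le_one ht.1.le))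
  rw [setIntegral_mul_sqrtSub φ, norm_smul, Real.norm_of_nonneg (by positivity)] at hsum
  rw [le_div_iff₀ Real.pi_pos]
  linarith

end BernsteinMul

/-! ### Estimates for `ε`-order zero maps -/

lemma isSelfAdjoint_apply_one {A B : Type*} [MulOneClass A] [StarMul A] [Star B] {ψ : A → B}
    (hstar : ∀ x, ψ (star x) = star (ψ x)) : IsSelfAdjoint (ψ 1) := by
  rw [isSelfAdjoint_iff, ← hstar, star_one]

namespace IsEpsOrderZero

section Unital

variable {A B : Type*} [CStarAlgebra A] [PartialOrder A] [StarOrderedRing A]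
  [NonUnitalCStarAlgebra B] {ε : ℝ} {ψ : A →L[ℂ] B}

lemma norm_jordanDefect_le_of_spectrum_subset (hψ : IsEpsOrderZero ε ψ) (hε : 0 ≤ ε) {y : A}
    (hy : IsSelfAdjoint y) (hspec : spectrum ℝ y ⊆ I) :
    ‖jordanDefect ψ y‖ ≤ 16 * ε / Real.pi := by
  let i : C(spectrum ℝ y, I) := ⟨Set.inclusion hspec, continuous_inclusion hspec⟩
  let L : C(I, ℝ) →⋆ₐ[ℝ] A := (cfcHom hy).comp (ContinuousMap.compStarAlgHom' ℝ ℝ i)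
  have hLX : L unitIntervalVal = y := cfcHom_id (R := ℝ) hy
  have hLnorm (f : C(I, ℝ)) : ‖L f‖ ≤ ‖f‖ :=
    (norm_cfcHom y _ hy).trans_le
      ((ContinuousMap.norm_le _ (norm_nonneg f)).2 fun s => f.norm_coe_le_norm (i s))
  have hLpos {f : C(I, ℝ)} (hf : 0 ≤ f) : 0 ≤ L f :=
    (cfcHom_nonneg_iff hy).2 fun s => hf (i s)
  let φ : C(I, ℝ) →L[ℝ] B := (ψ.restrictScalars ℝ).comp
    (L.toAlgHom.toLinearMap.mkContinuous 1 fun f => by simpa using hLnorm f)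
  have hφ (f g : C(I, ℝ)) (hf : 0 ≤ f) (hg : 0 ≤ g) (hfg : f * g = 0) :
      ‖φ f * φ g‖ ≤ ε * ‖f‖ * ‖g‖ :=
    (hψ (L f) (L g) (hLpos hf) (hLpos hg) (by rw [← map_mul, hfg, map_zero])).trans (by
      gcongr <;> exact hLnorm _)
  have hdefect : jordanDefect φ unitIntervalVal = jordanDefect ψ y := by
    change jordanDefect (ψ ∘ L) unitIntervalVal = _
    simp only [jordanDefect, Function.comp_apply, map_mul, map_one, hLX]
  exact hdefect ▸ norm_jordanDefect_unitIntervalVal_le φ hε hφ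

lemma norm_jordanDefect_le (hψ : IsEpsOrderZero ε ψ) (hε : 0 ≤ ε) {x : A} (hx : IsSelfAdjoint x)
    (hx1 : ‖x‖ ≤ 1) : ‖jordanDefect ψ x‖ ≤ 64 * ε / Real.pi := by
  set y : A := cfc (fun t : ℝ => (1 + t) / 2) x with hy
  have hxy : (2 : ℝ) • y - 1 = x := by
    rw [hy, ← cfc_smul .., ← cfc_const_one ℝ x, ← cfc_sub ..]
    conv_rhs => rw [← cfc_id' ℝ x]
    congr 1
    ext t
    simp only [smul_eq_mul]
    ring
  have hspec : spectrum ℝ y ⊆ I := by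
    rw [hy, cfc_map_spectrum ..]
    rintro _ ⟨t, ht, rfl⟩
    have htx := abs_le.1 ((norm_apply_le_norm_cfc (fun t => t) x ht).trans
      ((cfc_id' ℝ x).symm ▸ hx1))
    constructor <;> linarith
  have hdefect : jordanDefect ψ x = (2 : ℝ) ^ 2 • jordanDefect ψ y := by
    rw [← hxy]
    exact jordanDefect_smul_sub_one (ψ.restrictScalars ℝ : A →ₗ[ℝ] B) 2 y
  rw [hdefect, norm_smul, Real.norm_of_nonneg (by positivity)]
  refine (mul_le_mul_of_nonneg_left
    (hψ.norm_jordanDefect_le_of_spectrum_subset hε (cfc_predicate _ _) hspec)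
    (by positivity)).trans_eq ?_
  ring

lemma sq_norm_apply_mul_le (hψ : IsEpsOrderZero ε ψ) (hε : 0 ≤ ε)
    (hstar : ∀ x, ψ (star x) = star (ψ x)) {x : A} (hx : IsSelfAdjoint x) (hx1 : ‖x‖ ≤ 1) (q : B) :
    ‖ψ x * q‖ ^ 2 ≤ ‖ψ (x * x) * q‖ * ‖ψ 1 * q‖ + 16 * ε * ‖q‖ ^ 2 := by
  have hsa {y : A} (hy : IsSelfAdjoint y) : star (ψ y) = ψ y := by rw [← hstar, hy.star_eq]
  have hxx : IsSelfAdjoint (x * x) := (hx.commute_iff hx).1 (.refl x)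
  have hsquare : (2 : ℝ) • (star (ψ x * q) * (ψ x * q)) =
      star (ψ (x * x) * q) * (ψ 1 * q) + star (ψ 1 * q) * (ψ (x * x) * q) -
        star q * jordanDefect ψ x * q := by
    simp only [jordanDefect, star_mul, hsa hx, hsa (IsSelfAdjoint.one A), hsa hxx,
      mul_sub, sub_mul, mul_add, add_mul, mul_assoc, mul_smul_comm, smul_mul_assoc]
    abel
  have hdefect : ‖star q * jordanDefect ψ x * q‖ ≤ ‖q‖ * (32 * ε) * ‖q‖ := by
    have hpi : 64 * ε / Real.pi ≤ 32 * ε := by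
      rw [div_le_iff₀ Real.pi_pos]
      nlinarith [Real.two_le_pi]
    exact norm_mul_le_of_le (norm_mul_le_of_le (norm_star q).le
      ((hψ.norm_jordanDefect_le hε hx hx1).trans hpi)) le_rfl
  have hnorm := (congrArg norm hsquare).trans_le (norm_sub_le_of_le
    (norm_add_le_of_le (norm_mul_le _ _) (norm_mul_le _ _)) hdefect)
  rw [norm_smul, CStarRing.norm_star_mul_self, Real.norm_two, norm_star, norm_star] at hnorm
  linarith

lemma norm_apply_mul_le_of_isSelfAdjoint (hψ : IsEpsOrderZero ε ψ) (hε : 0 ≤ ε)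
    (hstar : ∀ x, ψ (star x) = star (ψ x)) {x : A} (hx : IsSelfAdjoint x) (q : B) :
    ‖ψ x * q‖ ≤ (‖ψ 1 * q‖ + 4 * √ε * ‖q‖) * ‖x‖ := by
  let R : selfAdjoint.submodule ℝ A →L[ℝ] B :=
    ((ContinuousLinearMap.mul ℝ B).flip q ∘L ψ.restrictScalars ℝ) ∘L
      (selfAdjoint.submodule ℝ A).subtypeL
  have hsq : ‖R‖ ^ 2 ≤ ‖R‖ * ‖ψ 1 * q‖ + (4 * √ε * ‖q‖) ^ 2 := by
    refine (Real.le_sqrt (norm_nonneg _) (by positivity)).1 <|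
      R.opNorm_le_of_unit_norm (Real.sqrt_nonneg _) fun y hy => Real.le_sqrt_of_sq_le ?_
    have hy1 : ‖(y : A)‖ ≤ 1 := hy.le
    have hyy : ‖ψ (y * y) * q‖ ≤ ‖R‖ := by
      refine R.unit_le_opNorm ⟨(y : A) * y, (y.2.commute_iff y.2).1 (.refl _)⟩ ?_
      exact (norm_mul_le _ _).trans (mul_le_one₀ hy1 (norm_nonneg _) hy1)
    refine (hψ.sq_norm_apply_mul_le hε hstar y.2 hy1 q).trans ?_
    rw [mul_pow, mul_pow, Real.sq_sqrt hε, show (4 : ℝ) ^ 2 = 16 by norm_num]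
    gcongr
  have hR : ‖R‖ ≤ ‖ψ 1 * q‖ + 4 * √ε * ‖q‖ := by
    have hb : 0 ≤ ‖ψ 1 * q‖ := norm_nonneg _
    have hc : 0 ≤ 4 * √ε * ‖q‖ := by positivity
    nlinarith
  exact (R.le_opNorm ⟨x, hx⟩).trans (mul_le_mul_of_nonneg_right hR (norm_nonneg x))

lemma norm_apply_mul_le (hψ : IsEpsOrderZero ε ψ) (hε : 0 ≤ ε)
    (hstar : ∀ x, ψ (star x) = star (ψ x)) (x : A) (q : B) :
    ‖ψ x * q‖ ≤ 2 * (‖ψ 1 * q‖ + 4 * √ε * ‖q‖) * ‖x‖ := by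
  have hsplit : ψ x * q = ψ (realPart x) * q + Complex.I • (ψ (imaginaryPart x) * q) := by
    conv_lhs => rw [← realPart_add_I_smul_imaginaryPart x]
    rw [map_add, map_smul, add_mul, smul_mul_assoc]
  have hre := hψ.norm_apply_mul_le_of_isSelfAdjoint hε hstar (realPart x).2 q
  have him := hψ.norm_apply_mul_le_of_isSelfAdjoint hε hstar (imaginaryPart x).2 q
  rw [hsplit]
  refine (norm_add_le_of_le (hre.trans ?_) ((norm_smul_le _ _).trans ?_)).trans_eq
    (b := (‖ψ 1 * q‖ + 4 * √ε * ‖q‖) * ‖x‖ + (‖ψ 1 * q‖ + 4 * √ε * ‖q‖) * ‖x‖) (by ring)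
  · gcongr
    exact realPart.norm_le x
  · rw [Complex.norm_I, one_mul]
    refine him.trans ?_
    gcongr
    exact imaginaryPart.norm_le x

end Unital

section FunctionalCalculus

variable {A B : Type*} [CStarAlgebra A] [PartialOrder A] [StarOrderedRing A]
  [NonUnitalCStarAlgebra B] {ε : ℝ} {ψ : A →L[ℂ] B} {f : ℝ → ℝ} {M₁ M₂ : ℝ}

lemma norm_apply_mul_cfcₙ_le (hψ : IsEpsOrderZero ε ψ) (hε : 0 ≤ ε)
    (hstar : ∀ x, ψ (star x) = star (ψ x)) (x : A) (hf : Continuous f) (hf0 : f 0 = 0)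
    (hf₁ : ∀ t ∈ quasispectrum ℝ (ψ 1), |t * f t| ≤ M₁)
    (hf₂ : ∀ t ∈ quasispectrum ℝ (ψ 1), |f t| ≤ M₂) :
    ‖ψ x * cfcₙ f (ψ 1)‖ ≤ 2 * (M₁ + 4 * √ε * M₂) * ‖x‖ := by
  have hsa := isSelfAdjoint_apply_one hstar
  have hmul : ψ 1 * cfcₙ f (ψ 1) = cfcₙ (fun t => t * f t) (ψ 1) := by
    rw [cfcₙ_mul (fun t => t) f (ψ 1), cfcₙ_id' ℝ (ψ 1)]
  refine (hψ.norm_apply_mul_le hε hstar x (cfcₙ f (ψ 1))).trans ?_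
  rw [hmul]
  gcongr
  · exact norm_cfcₙ_le hf₁
  · exact norm_cfcₙ_le hf₂

lemma norm_apply_sub_apply_mul_cfcₙ_le (hψ : IsEpsOrderZero ε ψ) (hε : 0 ≤ ε)
    (hstar : ∀ x, ψ (star x) = star (ψ x)) (x : A) (hf : Continuous f) (hf0 : f 0 = 0)
    (hf₁ : ∀ t ∈ quasispectrum ℝ (ψ 1), |t - t * f t| ≤ M₁)
    (hf₂ : ∀ t ∈ quasispectrum ℝ (ψ 1), |f t| ≤ 1) :
    ‖ψ x - ψ x * cfcₙ f (ψ 1)‖ ≤ 2 * (M₁ + 8 * √ε) * ‖x‖ := by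
  have hsa := isSelfAdjoint_apply_one hstar
  set e := cfcₙ f (ψ 1)
  have he : ‖e‖ ≤ 1 := norm_cfcₙ_le hf₂
  have hsub : ψ 1 - ψ 1 * e = cfcₙ (fun t => t - t * f t) (ψ 1) := by
    rw [cfcₙ_sub .., cfcₙ_mul .., cfcₙ_id' ℝ (ψ 1)]
  have hM : ‖ψ 1 - ψ 1 * e‖ ≤ M₁ := hsub ▸ norm_cfcₙ_le hf₁
  have hM₁ : 0 ≤ M₁ := (norm_nonneg _).trans hM
  rw [← ContinuousLinearMap.opNorm_mul_apply ℂ B]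
  refine ContinuousLinearMap.opNorm_le_bound _ (by positivity) fun d => ?_
  rw [ContinuousLinearMap.mul_apply']
  have hd₁ : ‖ψ 1 * (d - e * d)‖ ≤ M₁ * ‖d‖ := by
    rw [mul_sub, ← mul_assoc, ← sub_mul]
    exact norm_mul_le_of_le hM le_rfl
  have hd₂ : ‖d - e * d‖ ≤ 2 * ‖d‖ := by
    linarith [norm_sub_le_of_le le_rfl (norm_mul_le_of_le he le_rfl) (a₁ := d) (a₂ := e * d)]
  calc ‖(ψ x - ψ x * e) * d‖ = ‖ψ x * (d - e * d)‖ := by rw [mul_sub, sub_mul, mul_assoc]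
    _ ≤ 2 * (‖ψ 1 * (d - e * d)‖ + 4 * √ε * ‖d - e * d‖) * ‖x‖ :=
        hψ.norm_apply_mul_le hε hstar x _
    _ ≤ 2 * (M₁ * ‖d‖ + 4 * √ε * (2 * ‖d‖)) * ‖x‖ := by gcongr
    _ = 2 * (M₁ + 8 * √ε) * ‖x‖ * ‖d‖ := by ring

end FunctionalCalculus

end IsEpsOrderZero

/-! ### Regularized negative powers -/

section RpowNegCutoff

/-- A continuous substitute for `t ↦ |t| ^ (-β)`, with which it agrees for `|t| ≥ δ`. For `β < 1` it
vanishes at zero, as the functional calculus of a nonunital algebra requires. -/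
noncomputable def rpowNegCutoff (β δ t : ℝ) : ℝ := |t| ^ (1 - β) / max |t| δ

variable {β δ : ℝ}

lemma abs_div_max_le_one (t δ : ℝ) : |t| / max |t| δ ≤ 1 :=
  div_le_one_of_le₀ (le_max_left _ _) (le_max_of_le_left (abs_nonneg t))

lemma rpowNegCutoff_zero (hβ : β < 1) (δ : ℝ) : rpowNegCutoff β δ 0 = 0 := by
  rw [rpowNegCutoff, abs_zero, Real.zero_rpow (by linarith), zero_div]

lemma rpowNegCutoff_nonneg (β δ t : ℝ) : 0 ≤ rpowNegCutoff β δ t :=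
  div_nonneg (by positivity) (le_max_of_le_left (abs_nonneg t))

lemma continuous_rpowNegCutoff (hβ : β ≤ 1) (hδ : 0 < δ) : Continuous (rpowNegCutoff β δ) :=
  (continuous_abs.rpow_const fun _ => .inr (by linarith)).div (by fun_prop)
    fun t => (lt_max_of_lt_right hδ).ne'

lemma rpowNegCutoff_le (hβ : 0 ≤ β) (hβ1 : β ≤ 1) (hδ : 0 < δ) (t : ℝ) :
    rpowNegCutoff β δ t ≤ δ ^ (-β) := by
  have hmax : 0 < max |t| δ := lt_max_of_lt_right hδ
  have := sub_nonneg.2 hβ1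
  calc |t| ^ (1 - β) / max |t| δ ≤ max |t| δ ^ (1 - β) / max |t| δ := by
        gcongr
        exact le_max_left _ _
    _ = max |t| δ ^ (-β) := by rw [← Real.rpow_sub_one hmax.ne']; ring_nf
    _ ≤ δ ^ (-β) := Real.rpow_le_rpow_of_nonpos hδ (le_max_right _ _) (by linarith)

lemma abs_mul_rpowNegCutoff_le (β δ t : ℝ) : |t| * rpowNegCutoff β δ t ≤ |t| ^ (1 - β) := by
  rw [rpowNegCutoff, ← mul_div_assoc, mul_div_right_comm]
  exact mul_le_of_le_one_left (by positivity) (abs_div_max_le_one t δ)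

lemma rpowNegCutoff_mul_rpow (hβ : β ≠ 0) (δ t : ℝ) :
    rpowNegCutoff β δ t * |t| ^ β = |t| / max |t| δ := by
  rcases eq_or_ne t 0 with rfl | ht
  · simp [Real.zero_rpow hβ]
  · rw [rpowNegCutoff, div_mul_eq_mul_div, ← Real.rpow_add (abs_pos.2 ht), sub_add_cancel,
      Real.rpow_one]

lemma rpowNegCutoff_anti {δ' : ℝ} (hδ' : 0 < δ') (h : δ' ≤ δ) (β t : ℝ) :
    rpowNegCutoff β δ t ≤ rpowNegCutoff β δ' t := by
  unfold rpowNegCutoff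
  gcongr

lemma abs_mul_rpowNegCutoff_sub_le {δ' : ℝ} (hβ1 : β ≤ 1) (hδ' : 0 < δ') (h : δ' ≤ δ) (t : ℝ) :
    |t| * (rpowNegCutoff β δ' t - rpowNegCutoff β δ t) ≤ δ ^ (1 - β) := by
  rcases le_or_gt δ |t| with ht | ht
  · have heq : rpowNegCutoff β δ' t = rpowNegCutoff β δ t := by
      rw [rpowNegCutoff, rpowNegCutoff, max_eq_left ht, max_eq_left (h.trans ht)]
    rw [heq, sub_self, mul_zero]
    exact Real.rpow_nonneg (hδ'.le.trans h) _
  · calc |t| * (rpowNegCutoff β δ' t - rpowNegCutoff β δ t) ≤ |t| * rpowNegCutoff β δ' t := by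
          gcongr
          exact sub_le_self _ (rpowNegCutoff_nonneg β δ t)
      _ ≤ |t| ^ (1 - β) := abs_mul_rpowNegCutoff_le β δ' t
      _ ≤ δ ^ (1 - β) := Real.rpow_le_rpow (abs_nonneg t) ht.le (by linarith)

lemma abs_sub_mul_abs_div_max_le (hδ : 0 < δ) (t : ℝ) : |t - t * (|t| / max |t| δ)| ≤ δ := by
  have : 0 < max |t| δ := lt_max_of_lt_right hδ
  have hle := abs_div_max_le_one t δ
  calc |t - t * (|t| / max |t| δ)| = |t| * (1 - |t| / max |t| δ) := by
        rw [← mul_one_sub, abs_mul, abs_of_nonneg (sub_nonneg.2 hle)]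
    _ = (max |t| δ - |t|) * (|t| / max |t| δ) := by field_simp
    _ ≤ max |t| δ - |t| := mul_le_of_le_one_right (sub_nonneg.2 (le_max_left _ _)) hle
    _ ≤ δ := by rw [sub_le_iff_le_add, max_le_iff]; constructor <;> linarith [abs_nonneg t]

end RpowNegCutoff

/-! ### Approximate division by powers -/

/-- A bounded approximation of the quotient of `ψ x` by `|ψ 1| ^ β`, obtained by cutting off
`t ↦ |t| ^ (-β)` at the level `δ`. -/
noncomputable def approxQuotient {A B : Type*} [CStarAlgebra A] [NonUnitalCStarAlgebra B]
    (ψ : A →L[ℂ] B) (x : A) (β δ : ℝ) : B :=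
  ψ x * cfcₙ (rpowNegCutoff β δ) (ψ 1)

namespace IsEpsOrderZero

section ApproxQuotient

variable {A B : Type*} [CStarAlgebra A] [PartialOrder A] [StarOrderedRing A]
  [NonUnitalCStarAlgebra B] {ε β δ : ℝ} {ψ : A →L[ℂ] B}

lemma norm_approxQuotient_le (hψ : IsEpsOrderZero ε ψ) (hε : 0 ≤ ε)
    (hstar : ∀ x, ψ (star x) = star (ψ x)) (x : A) (hβ : 0 ≤ β) (hβ1 : β < 1) (hδ : 0 < δ) :
    ‖approxQuotient ψ x β δ‖ ≤ 2 * (‖ψ‖ ^ (1 - β) + 4 * √ε * δ ^ (-β)) * ‖x‖ := by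
  have hsa := isSelfAdjoint_apply_one hstar
  refine hψ.norm_apply_mul_cfcₙ_le hε hstar x (continuous_rpowNegCutoff hβ1.le hδ)
    (rpowNegCutoff_zero hβ1 δ) (fun t ht => ?_) fun t _ => ?_
  · have htψ : |t| ≤ ‖ψ‖ :=
      ((norm_apply_le_norm_cfcₙ (fun t => t) (ψ 1) ht).trans_eq (by rw [cfcₙ_id' ℝ (ψ 1)])).trans
        (ψ.unit_le_opNorm 1 (IsStarProjection.norm_le 1 (.one A)))
    rw [abs_mul, abs_of_nonneg (rpowNegCutoff_nonneg β δ t)]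
    exact (abs_mul_rpowNegCutoff_le β δ t).trans
      (Real.rpow_le_rpow (abs_nonneg t) htψ (by linarith))
  · rw [abs_of_nonneg (rpowNegCutoff_nonneg β δ t)]
    exact rpowNegCutoff_le hβ hβ1.le hδ t

lemma norm_approxQuotient_sub_le (hψ : IsEpsOrderZero ε ψ) (hε : 0 ≤ ε)
    (hstar : ∀ x, ψ (star x) = star (ψ x)) (x : A) (hβ : 0 ≤ β) (hβ1 : β < 1) {δ' : ℝ}
    (hδ' : 0 < δ') (h : δ' ≤ δ) :
    ‖approxQuotient ψ x β δ' - approxQuotient ψ x β δ‖ ≤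
      2 * (δ ^ (1 - β) + 4 * √ε * δ' ^ (-β)) * ‖x‖ := by
  have hcont := continuous_rpowNegCutoff hβ1.le hδ'
  have hcont' := continuous_rpowNegCutoff hβ1.le (hδ'.trans_le h)
  have hzero := rpowNegCutoff_zero hβ1
  have hnonneg (t : ℝ) : 0 ≤ rpowNegCutoff β δ' t - rpowNegCutoff β δ t :=
    sub_nonneg.2 (rpowNegCutoff_anti hδ' h β t)
  rw [approxQuotient, approxQuotient, ← mul_sub,
    ← cfcₙ_sub _ _ _ hcont.continuousOn (hzero δ') hcont'.continuousOn (hzero δ)]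
  refine hψ.norm_apply_mul_cfcₙ_le hε hstar x (hcont.sub hcont')
    (sub_eq_zero.2 ((hzero δ').trans (hzero δ).symm))
    (fun t _ => ?_) fun t _ => ?_
  · rw [abs_mul, abs_of_nonneg (hnonneg t)]
    exact abs_mul_rpowNegCutoff_sub_le hβ1.le hδ' h t
  · rw [abs_of_nonneg (hnonneg t)]
    exact (sub_le_self (rpowNegCutoff β δ' t) (rpowNegCutoff_nonneg β δ t)).trans
      (rpowNegCutoff_le hβ hβ1.le hδ' t)

lemma norm_sub_approxQuotient_mul_le (hψ : IsEpsOrderZero ε ψ) (hε : 0 ≤ ε)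
    (hstar : ∀ x, ψ (star x) = star (ψ x)) (x : A) (hβ : 0 < β) (hβ1 : β < 1) (hδ : 0 < δ) :
    ‖ψ x - approxQuotient ψ x β δ * cfcₙ (fun t : ℝ => |t| ^ β) (ψ 1)‖ ≤
      2 * (δ + 8 * √ε) * ‖x‖ := by
  have hpow : Continuous fun t : ℝ => |t| ^ β := continuous_abs.rpow_const fun _ => .inr hβ.le
  have hcut := continuous_rpowNegCutoff hβ1.le hδ
  rw [approxQuotient, mul_assoc, ← cfcₙ_mul _ _ _ hcut.continuousOn (rpowNegCutoff_zero hβ1 δ)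
    hpow.continuousOn (by simp [Real.zero_rpow hβ.ne'])]
  refine hψ.norm_apply_sub_apply_mul_cfcₙ_le hε hstar x (hcut.mul hpow)
    (by simp [Real.zero_rpow hβ.ne']) (fun t _ => ?_) fun t _ => ?_
  · rw [rpowNegCutoff_mul_rpow hβ.ne']
    exact abs_sub_mul_abs_div_max_le hδ t
  · rw [rpowNegCutoff_mul_rpow hβ.ne', abs_of_nonneg (by positivity : 0 ≤ |t| / max |t| δ)]
    exact abs_div_max_le_one t δ

/-- For `ε = 0` the approximate quotients converge as the cut-off level tends to zero. -/
lemma exists_eq_mul_of_zero (hψ : IsEpsOrderZero 0 ψ) (hstar : ∀ x, ψ (star x) = star (ψ x))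
    (x : A) (hβ : 0 < β) (hβ1 : β < 1) :
    ∃ u : B, ‖u‖ ≤ 2 * ‖ψ‖ ^ (1 - β) * ‖x‖ ∧ ψ x = u * cfcₙ (fun t : ℝ => |t| ^ β) (ψ 1) := by
  let d (n : ℕ) : ℝ := 1 / (n + 1)
  have hd (n : ℕ) : 0 < d n := Nat.one_div_pos_of_nat
  have hd0 : Tendsto d atTop (𝓝 0) := tendsto_one_div_add_atTop_nhds_zero_nat
  have hcauchy : CauchySeq fun n => approxQuotient ψ x β (d n) := by
    refine cauchySeq_of_le_tendsto_0' (fun n => 2 * d n ^ (1 - β) * ‖x‖) (fun n m hnm => ?_) ?_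
    · rw [dist_comm, dist_eq_norm]
      simpa using hψ.norm_approxQuotient_sub_le le_rfl hstar x hβ.le hβ1 (hd m)
        (show d m ≤ d n from Nat.one_div_le_one_div hnm)
    · simpa [Real.zero_rpow (sub_pos.2 hβ1).ne'] using
        ((hd0.rpow_const (.inr (sub_pos.2 hβ1).le)).const_mul 2).mul_const ‖x‖
  obtain ⟨u, hu⟩ := cauchySeq_tendsto_of_complete hcauchy
  refine ⟨u, le_of_tendsto hu.norm (.of_forall fun n => ?_), ?_⟩
  · simpa using hψ.norm_approxQuotient_le le_rfl hstar x hβ.le hβ1 (hd n)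
  · refine tendsto_nhds_unique (tendsto_iff_norm_sub_tendsto_zero.2 ?_) (hu.mul_const _)
    refine squeeze_zero (fun _ => norm_nonneg _) (fun n => ?_)
      (by simpa using (hd0.const_mul 2).mul_const ‖x‖)
    rw [norm_sub_rev]
    simpa using hψ.norm_sub_approxQuotient_mul_le le_rfl hstar x hβ hβ1 (hd n)

end ApproxQuotient

end IsEpsOrderZero

lemma nnrpow_mul_self_eq_cfcₙ {B : Type*} [NonUnitalCStarAlgebra B] [PartialOrder B]
    [StarOrderedRing B] {h : B} (hh : IsSelfAdjoint h) {α : ℝ≥0} (hα : 0 < α) :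
    CFC.nnrpow (h * h) α = cfcₙ (fun t : ℝ => |t| ^ (2 * (α : ℝ))) h := by
  have hα' : 0 < ((2 * α : ℝ≥0) : ℝ) := by positivity
  calc CFC.nnrpow (h * h) α = CFC.abs h ^ (2 * α) := by
        rw [CFC.abs_nnrpow_two_mul, hh.star_eq, CFC.nnrpow_eq_pow]
    _ = cfcₙ (fun t : ℝ => |t| ^ (2 * (α : ℝ))) h := by
        rw [CFC.nnrpow_eq_cfcₙ_real _ _, CFC.abs_eq_cfcₙ_norm h hh,
          ← cfcₙ_comp' (fun t : ℝ => t ^ ((2 * α : ℝ≥0) : ℝ)) (fun t => ‖t‖) h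
            (Real.continuous_rpow_const hα'.le).continuousOn (Real.zero_rpow hα'.ne')]
        rfl

lemma le_rpow_mul_rpow_of_sq_le {N ε p : ℝ} (hN : 0 ≤ N) (hp : 0 ≤ p) (h : N ^ 2 ≤ ε) :
    N ≤ N ^ (1 - 2 * p) * ε ^ p := by
  calc N = N ^ (1 - 2 * p) * (N ^ 2) ^ p := by
        rw [← Real.rpow_natCast_mul hN, ← Real.rpow_add' hN (by norm_num)]
        norm_num
    _ ≤ N ^ (1 - 2 * p) * ε ^ p := by gcongr

lemma sqrt_mul_div_rpow_le {N ε p β : ℝ} (hε : 0 < ε) (hN : √ε ≤ N) (h : 2 * p * (1 + β) ≤ 1) :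
    √ε * (N / (N ^ (1 - 2 * p) * ε ^ p)) ^ β ≤ N ^ (1 - 2 * p) * ε ^ p := by
  set s := √ε with hs
  have hs0 : 0 < s := Real.sqrt_pos.2 hε
  obtain ⟨t, rfl⟩ : ∃ t, N = s * t := ⟨N / s, by field_simp⟩
  have ht1 : 1 ≤ t := le_of_mul_le_mul_left (by simpa using hN) hs0
  have ht : 0 < t := by linarith
  have hδ : (s * t) ^ (1 - 2 * p) * ε ^ p = s * t ^ (1 - 2 * p) := by
    rw [← Real.sq_sqrt hε.le, ← hs, ← Real.rpow_natCast_mul hs0.le, Real.mul_rpow hs0.le ht.le,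
      mul_right_comm, ← Real.rpow_add hs0]
    norm_num
  have hquot : s * t / (s * t ^ (1 - 2 * p)) = t ^ (2 * p) := by
    rw [mul_div_mul_left _ _ hs0.ne', div_eq_iff (by positivity), ← Real.rpow_add ht]
    norm_num
  rw [hδ, hquot, ← Real.rpow_mul ht.le]
  gcongr
  linarith

lemma norm_sub_inv_smul_mul_le {B : Type*} [NonUnitalSeminormedRing B] [NormedSpace ℝ B]
    [IsScalarTower ℝ B B] (y v k : B) {η : ℝ} (hη : 0 ≤ η) :
    ‖y - ((1 + η)⁻¹ • v) * k‖ ≤ ‖y - v * k‖ + η * ‖y‖ := by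
  have hne : 1 + η ≠ 0 := by positivity
  have hle : (1 + η)⁻¹ ≤ 1 := inv_le_one_of_one_le₀ (by linarith)
  have hcomb : y - ((1 + η)⁻¹ • v) * k = (1 + η)⁻¹ • ((y - v * k) + η • y) := by
    rw [smul_mul_assoc, eq_inv_smul_iff₀ hne, smul_sub, smul_inv_smul₀ hne, add_smul, one_smul]
    abel
  rw [hcomb, norm_smul, Real.norm_of_nonneg (by positivity)]
  refine (mul_le_of_le_one_left (norm_nonneg _) hle).trans ((norm_add_le _ _).trans_eq ?_)
  rw [norm_smul, Real.norm_of_nonneg hη]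

namespace IsEpsOrderZero

section Assembly

variable {A B : Type*} [CStarAlgebra A] [PartialOrder A] [StarOrderedRing A]
  [NonUnitalCStarAlgebra B] {ε β : ℝ} {ψ : A →L[ℂ] B}

lemma exists_norm_sub_mul_le_of_cutoff (hψ : IsEpsOrderZero ε ψ) (hε : 0 ≤ ε)
    (hstar : ∀ x, ψ (star x) = star (ψ x)) (x : A) (hβ : 0 < β) (hβ1 : β < 1) (hψ0 : 0 < ‖ψ‖)
    {δ : ℝ} (hδ : 0 < δ) :
    ∃ u : B, ‖u‖ ≤ 2 * ‖ψ‖ ^ (1 - β) * ‖x‖ ∧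
      ‖ψ x - u * cfcₙ (fun t : ℝ => |t| ^ β) (ψ 1)‖ ≤
        (2 * δ + 16 * √ε + 4 * (√ε * (‖ψ‖ / δ) ^ β)) * ‖x‖ := by
  let η := 4 * √ε * δ ^ (-β) / ‖ψ‖ ^ (1 - β)
  have hη : 0 ≤ η := by positivity
  have hηψ : η * ‖ψ‖ = 4 * (√ε * (‖ψ‖ / δ) ^ β) := by
    rw [Real.div_rpow hψ0.le hδ.le, div_eq_mul_inv, ← Real.rpow_neg hδ.le]
    simp only [η, Real.rpow_sub hψ0, Real.rpow_one]
    field_simp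
  refine ⟨(1 + η)⁻¹ • approxQuotient ψ x β δ, ?_, ?_⟩
  · rw [norm_smul, Real.norm_of_nonneg (by positivity), inv_mul_le_iff₀ (by positivity)]
    refine (hψ.norm_approxQuotient_le hε hstar x hβ.le hβ1 hδ).trans_eq ?_
    have : η * ‖ψ‖ ^ (1 - β) = 4 * √ε * δ ^ (-β) := div_mul_cancel₀ _ (by positivity)
    linear_combination -2 * ‖x‖ * this
  · calc _ ≤ 2 * (δ + 8 * √ε) * ‖x‖ + η * (‖ψ‖ * ‖x‖) :=
          (norm_sub_inv_smul_mul_le _ _ _ hη).trans <| by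
            gcongr
            exacts [hψ.norm_sub_approxQuotient_mul_le hε hstar x hβ hβ1 hδ, ψ.le_opNorm x]
      _ = (2 * δ + 16 * √ε + 4 * (√ε * (‖ψ‖ / δ) ^ β)) * ‖x‖ := by
          rw [← hηψ]
          ring

lemma exists_norm_sub_mul_le (hψ : IsEpsOrderZero ε ψ) (hε : 0 ≤ ε)
    (hstar : ∀ x, ψ (star x) = star (ψ x)) (x : A) (hβ : 0 < β) (hβ1 : β < 1)
    {p : ℝ} (hp : 0 ≤ p) (hpβ : 2 * p * (1 + β) ≤ 1) :
    ∃ u : B, ‖u‖ ≤ 2 * ‖ψ‖ ^ (1 - β) * ‖x‖ ∧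
      ‖ψ x - u * cfcₙ (fun t : ℝ => |t| ^ β) (ψ 1)‖ ≤
        22 * ‖ψ‖ ^ (1 - 2 * p) * ε ^ p * ‖x‖ := by
  rcases hε.eq_or_lt with rfl | hε0
  · obtain ⟨u, hu, heq⟩ := hψ.exists_eq_mul_of_zero hstar x hβ hβ1
    refine ⟨u, hu, ?_⟩
    rw [heq, sub_self, norm_zero]
    positivity
  rcases le_total (‖ψ‖ ^ 2) ε with hψε | hψε
  · refine ⟨0, by simpa using by positivity, ?_⟩
    rw [zero_mul, sub_zero, mul_assoc 22]
    have := le_rpow_mul_rpow_of_sq_le (norm_nonneg ψ) hp hψε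
    refine (ψ.le_opNorm x).trans (mul_le_mul_of_nonneg_right ?_ (norm_nonneg x))
    linarith [norm_nonneg ψ]
  have hsqrt : √ε ≤ ‖ψ‖ := Real.sqrt_le_iff.2 ⟨norm_nonneg ψ, hψε⟩
  have hψ0 : 0 < ‖ψ‖ := (Real.sqrt_pos.2 hε0).trans_le hsqrt
  set δ := ‖ψ‖ ^ (1 - 2 * p) * ε ^ p with hδ
  obtain ⟨u, hu, herr⟩ := hψ.exists_norm_sub_mul_le_of_cutoff hε hstar x hβ hβ1 hψ0
    (show 0 < δ by positivity)
  have hsmall : √ε ≤ δ := by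
    simpa using sqrt_mul_div_rpow_le (β := 0) hε0 hsqrt (by nlinarith)
  have hrescale : √ε * (‖ψ‖ / δ) ^ β ≤ δ := sqrt_mul_div_rpow_le hε0 hsqrt hpβ
  refine ⟨u, hu, herr.trans (mul_le_mul_of_nonneg_right ?_ (norm_nonneg x))⟩
  rw [mul_assoc 22, ← hδ]
  linarith

end Assembly

end IsEpsOrderZero

theorem stmt_13_general {A B : Type*} [CStarAlgebra A] [PartialOrder A] [StarOrderedRing A]
    [NonUnitalCStarAlgebra B] [PartialOrder B] [StarOrderedRing B] {ε : ℝ} (hε : 0 ≤ ε)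
    {ψ : A →L[ℂ] B} (hψ : IsEpsOrderZero ε ψ) (hstar : ∀ x, ψ (star x) = star (ψ x))
    {α : ℝ≥0} (hα : 0 < α) (hα' : (α : ℝ) < 1 / 2) {p : ℝ} (hp : 0 ≤ p)
    (hpα : 2 * p * (1 + 2 * α) ≤ 1) (x : A) :
    ∃ u : B, ‖u‖ ≤ 2 * ‖ψ‖ ^ (1 - 2 * α : ℝ) * ‖x‖ ∧
      ‖ψ x - u * CFC.nnrpow (ψ 1 * ψ 1) α‖ ≤ 22 * ‖ψ‖ ^ (1 - 2 * p) * ε ^ p * ‖x‖ := by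
  rw [nnrpow_mul_self_eq_cfcₙ (isSelfAdjoint_apply_one hstar) hα]
  exact hψ.exists_norm_sub_mul_le hε hstar x (by positivity) (by linarith) hp hpα

/-- There is an absolute constant `K` such that for every self-adjoint
ε-order zero map `ψ` on a unital C*-algebra, with `h := ψ(1)`, every `0 < α < 1/10` and every
`x`, there exists `u` with `‖u‖ ≤ 2‖ψ‖^{1−2α}‖x‖` and
`‖ψ(x) − u·(h²)^α‖ ≤ K‖ψ‖^{3/5}ε^{1/5}‖x‖`; here `(h²)^α` is the real power given by the
continuous functional calculus. -/
theorem stmt_13 :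
    ∃ K : ℝ, ∀ (A B : Type) (_ : CStarAlgebra A) (_ : PartialOrder A) (_ : StarOrderedRing A)
      (_ : NonUnitalCStarAlgebra B) (_ : PartialOrder B) (_ : StarOrderedRing B)
      (ε : ℝ), 0 ≤ ε →
      ∀ ψ : A →L[ℂ] B, IsEpsOrderZero ε ψ → (∀ x : A, ψ (star x) = star (ψ x)) →
      ∀ h : B, h = ψ 1 →
      ∀ α : ℝ, ∀ hα : 0 < α, α < 1 / 10 →
      ∀ x : A, ∃ u : B,
        ‖u‖ ≤ 2 * ‖ψ‖ ^ (1 - 2 * α) * ‖x‖ ∧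
        ‖ψ x - u * CFC.nnrpow (h * h) ⟨α, hα.le⟩‖ ≤
          K * ‖ψ‖ ^ ((3 : ℝ) / 5) * ε ^ ((1 : ℝ) / 5) * ‖x‖ := by
  refine ⟨22, fun A B _ _ _ _ _ _ ε hε ψ hψ hstar h hh α hα hα' x => hh ▸ ?_⟩
  lift α to ℝ≥0 using hα.le
  rw [show (3 / 5 : ℝ) = 1 - 2 * (1 / 5) by norm_num]
  exact stmt_13_general hε hψ hstar hα (by linarith) (by norm_num) (by linarith) x
end

section
/- There exists an absolute constant K < ∞ (the same constant as in the approximation of the range by the hereditary subalgebra) such that for all C*-algebras A and B with A unital, every ε ≥ 0, and every self-adjoint bounded linear ε-order zero map ψ : A → B with h := ψ(1_A), at least one of the following two inequalities holds: (a) ‖ψ‖ ≤ √((K+2)^5 ε), or (b) ‖ψ‖ ≤ (K+2)^5‖h‖. -/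
/-!
Let `N` be the norm of `ψ` restricted to the self-adjoint part of `A`. If `p` is positive, then
`p` lies within `‖p‖ / 2` of the scalar `‖p‖ / 2`, so `‖ψ p‖ ≤ (N + ‖ψ 1‖) / 2 * ‖p‖`: a factor of
about `2` is gained over the trivial bound. For self-adjoint `a`, expanding
`(ψ a) ^ 2 = (ψ a⁺ - ψ a⁻) ^ 2` costs only the cross terms, which the order zero condition controls,
whence `N ^ 2 ≤ (N + ‖ψ 1‖) ^ 2 / 2 + 2 * ε`. As `1 / 2 < 1`, the term in `N ^ 2` can be absorbed
unless `N` is at most a multiple of `‖ψ 1‖`.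
-/

section PositiveElements

variable {A : Type*} [CStarAlgebra A] [PartialOrder A] [StarOrderedRing A]

theorem norm_sub_half_norm_smul_one_le {p : A} (hp : 0 ≤ p) :
    ‖p - (‖p‖ / 2) • (1 : A)‖ ≤ ‖p‖ / 2 := by
  have hsa : IsSelfAdjoint p := .of_nonneg hp
  have hcfc : p - (‖p‖ / 2) • (1 : A) = cfc (fun t : ℝ ↦ t - ‖p‖ / 2) p := by
    rw [cfc_sub (R := ℝ) (fun t ↦ t) (fun _ ↦ ‖p‖ / 2) p, cfc_id' ℝ p, cfc_const (‖p‖ / 2) p,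
      Algebra.algebraMap_eq_smul_one]
  rw [hcfc]
  refine norm_cfc_le (by positivity) fun t ht ↦ ?_
  have ht_nonneg : 0 ≤ t := spectrum_nonneg_of_nonneg hp ht
  have ht_le : t ≤ ‖p‖ :=
    (le_algebraMap_iff_spectrum_le (R := ℝ)).1 hsa.le_algebraMap_norm_self t ht
  rw [Real.norm_eq_abs, abs_le]
  constructor <;> linarith

theorem norm_apply_le_of_nonneg {E : Type*} [SeminormedAddCommGroup E] [NormedSpace ℝ E]
    (φ : A →L[ℝ] E) {p : A} (hp : 0 ≤ p) :
    ‖φ p‖ ≤ (‖φ.domRestrict (selfAdjoint.submodule ℝ A)‖ + ‖φ 1‖) / 2 * ‖p‖ := by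
  have hsa : IsSelfAdjoint (p - (‖p‖ / 2) • (1 : A)) :=
    (IsSelfAdjoint.of_nonneg hp).sub (.smul (.all _) (.one A))
  have hsplit : φ p = φ (p - (‖p‖ / 2) • (1 : A)) + (‖p‖ / 2) • φ 1 := by
    rw [map_sub, map_smul, sub_add_cancel]
  have hcentered : ‖φ (p - (‖p‖ / 2) • (1 : A))‖ ≤
      ‖φ.domRestrict (selfAdjoint.submodule ℝ A)‖ * (‖p‖ / 2) :=
    (φ.domRestrict (selfAdjoint.submodule ℝ A)).le_opNorm_of_le (x := ⟨_, hsa⟩)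
      (norm_sub_half_norm_smul_one_le hp)
  calc ‖φ p‖ ≤ ‖φ (p - (‖p‖ / 2) • (1 : A))‖ + ‖(‖p‖ / 2) • φ 1‖ := hsplit ▸ norm_add_le _ _
    _ ≤ ‖φ.domRestrict (selfAdjoint.submodule ℝ A)‖ * (‖p‖ / 2) + ‖p‖ / 2 * ‖φ 1‖ := by
      rw [norm_smul, Real.norm_of_nonneg (by positivity)]
      gcongr
    _ = (‖φ.domRestrict (selfAdjoint.submodule ℝ A)‖ + ‖φ 1‖) / 2 * ‖p‖ := by ring

end PositiveElements

theorem norm_sub_sq_le_of_isSelfAdjoint {B : Type*} [NonUnitalNormedRing B] [StarRing B]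
    [CStarRing B] {x y : B} (hx : IsSelfAdjoint x) (hy : IsSelfAdjoint y) :
    ‖x - y‖ ^ 2 ≤ ‖x‖ ^ 2 + ‖y‖ ^ 2 + 2 * ‖x * y‖ := by
  have hyx : ‖y * x‖ = ‖x * y‖ := by
    rw [← norm_star, star_mul, hx.star_eq, hy.star_eq]
  calc ‖x - y‖ ^ 2 = ‖x * x + y * y - (x * y + y * x)‖ := by
        rw [← (hx.sub hy).norm_mul_self]
        congr 1
        noncomm_ring
    _ ≤ ‖x * x‖ + ‖y * y‖ + (‖x * y‖ + ‖y * x‖) :=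
      (norm_sub_le _ _).trans (add_le_add (norm_add_le _ _) (norm_add_le _ _))
    _ = ‖x‖ ^ 2 + ‖y‖ ^ 2 + 2 * ‖x * y‖ := by
      rw [hx.norm_mul_self, hy.norm_mul_self, hyx]
      ring

theorem sq_norm_apply_le_of_isSelfAdjoint {A B : Type*} [NonUnitalCStarAlgebra A] [PartialOrder A]
    [StarOrderedRing A] [NonUnitalNormedRing B] [StarRing B] [CStarRing B] [NormedSpace ℝ B]
    {φ : A →L[ℝ] B} {ε C : ℝ} (hε : 0 ≤ ε)
    (hφ : ∀ x y : A, 0 ≤ x → 0 ≤ y → x * y = 0 → ‖φ x * φ y‖ ≤ ε * ‖x‖ * ‖y‖)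
    (hsa : ∀ x : A, IsSelfAdjoint x → IsSelfAdjoint (φ x)) (hC : ∀ p : A, 0 ≤ p → ‖φ p‖ ≤ C * ‖p‖)
    {a : A} (ha : IsSelfAdjoint a) :
    ‖φ a‖ ^ 2 ≤ (2 * C ^ 2 + 2 * ε) * ‖a‖ ^ 2 := by
  have hpos : 0 ≤ a⁺ := CFC.posPart_nonneg a
  have hneg : 0 ≤ a⁻ := CFC.negPart_nonneg a
  have hpos_le : ‖a⁺‖ ≤ ‖a‖ := CStarAlgebra.norm_posPart_le a
  have hneg_le : ‖a⁻‖ ≤ ‖a‖ := CStarAlgebra.norm_negPart_le a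
  calc ‖φ a‖ ^ 2 = ‖φ a⁺ - φ a⁻‖ ^ 2 := by rw [← map_sub, CFC.posPart_sub_negPart a]
    _ ≤ ‖φ a⁺‖ ^ 2 + ‖φ a⁻‖ ^ 2 + 2 * ‖φ a⁺ * φ a⁻‖ :=
      norm_sub_sq_le_of_isSelfAdjoint (hsa _ (.of_nonneg hpos)) (hsa _ (.of_nonneg hneg))
    _ ≤ (C * ‖a⁺‖) ^ 2 + (C * ‖a⁻‖) ^ 2 + 2 * (ε * ‖a⁺‖ * ‖a⁻‖) := by
      gcongr
      exacts [hC _ hpos, hC _ hneg, hφ _ _ hpos hneg (CFC.posPart_mul_negPart a)]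
    _ = C ^ 2 * ‖a⁺‖ ^ 2 + C ^ 2 * ‖a⁻‖ ^ 2 + 2 * (ε * ‖a⁺‖ * ‖a⁻‖) := by ring
    _ ≤ C ^ 2 * ‖a‖ ^ 2 + C ^ 2 * ‖a‖ ^ 2 + 2 * (ε * ‖a‖ * ‖a‖) := by gcongr
    _ = (2 * C ^ 2 + 2 * ε) * ‖a‖ ^ 2 := by ring

theorem sq_norm_domRestrict_selfAdjoint_le {A B : Type*} [CStarAlgebra A] [PartialOrder A]
    [StarOrderedRing A] [NonUnitalNormedRing B] [StarRing B] [CStarRing B] [NormedSpace ℝ B]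
    {φ : A →L[ℝ] B} {ε : ℝ} (hε : 0 ≤ ε)
    (hφ : ∀ x y : A, 0 ≤ x → 0 ≤ y → x * y = 0 → ‖φ x * φ y‖ ≤ ε * ‖x‖ * ‖y‖)
    (hsa : ∀ x : A, IsSelfAdjoint x → IsSelfAdjoint (φ x)) :
    ‖φ.domRestrict (selfAdjoint.submodule ℝ A)‖ ^ 2 ≤
      (‖φ.domRestrict (selfAdjoint.submodule ℝ A)‖ + ‖φ 1‖) ^ 2 / 2 + 2 * ε := by
  set N := ‖φ.domRestrict (selfAdjoint.submodule ℝ A)‖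
  have hbound : N ≤ √((N + ‖φ 1‖) ^ 2 / 2 + 2 * ε) := by
    refine ContinuousLinearMap.opNorm_le_bound _ (Real.sqrt_nonneg _) fun a ↦ ?_
    refine le_of_sq_le_sq ?_ (by positivity)
    rw [mul_pow, Real.sq_sqrt (by positivity)]
    calc ‖φ a‖ ^ 2 ≤ (2 * ((N + ‖φ 1‖) / 2) ^ 2 + 2 * ε) * ‖(a : A)‖ ^ 2 :=
          sq_norm_apply_le_of_isSelfAdjoint hε hφ hsa (fun _ ↦ norm_apply_le_of_nonneg φ) a.2
      _ = ((N + ‖φ 1‖) ^ 2 / 2 + 2 * ε) * ‖a‖ ^ 2 := by rw [Submodule.coe_norm]; ring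
  calc N ^ 2 ≤ √((N + ‖φ 1‖) ^ 2 / 2 + 2 * ε) ^ 2 := by gcongr
    _ = (N + ‖φ 1‖) ^ 2 / 2 + 2 * ε := Real.sq_sqrt (by positivity)

theorem norm_le_two_mul_norm_domRestrict_selfAdjoint {A E : Type*} [SeminormedAddCommGroup A]
    [NormedSpace ℂ A] [StarAddMonoid A] [NormedStarGroup A] [StarModule ℂ A]
    [SeminormedAddCommGroup E] [NormedSpace ℂ E] (ψ : A →L[ℂ] E) :
    ‖ψ‖ ≤ 2 * ‖(ψ.restrictScalars ℝ).domRestrict (selfAdjoint.submodule ℝ A)‖ := by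
  set φ := (ψ.restrictScalars ℝ).domRestrict (selfAdjoint.submodule ℝ A)
  refine ψ.opNorm_le_bound (by positivity) fun x ↦ ?_
  have hre : ‖ψ (realPart x : A)‖ ≤ ‖φ‖ * ‖x‖ := φ.le_opNorm_of_le (realPart.norm_le x)
  have him : ‖ψ (imaginaryPart x : A)‖ ≤ ‖φ‖ * ‖x‖ := φ.le_opNorm_of_le (imaginaryPart.norm_le x)
  calc ‖ψ x‖ = ‖ψ (realPart x : A) + Complex.I • ψ (imaginaryPart x : A)‖ := by
        rw [← map_smul, ← map_add, realPart_add_I_smul_imaginaryPart]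
    _ ≤ ‖ψ (realPart x : A)‖ + ‖ψ (imaginaryPart x : A)‖ := by
      simpa only [norm_smul, Complex.norm_I, one_mul] using
        norm_add_le (ψ (realPart x : A)) (Complex.I • ψ (imaginaryPart x : A))
    _ ≤ 2 * ‖φ‖ * ‖x‖ := by linarith

theorem stmt_15_general {A B : Type*} [CStarAlgebra A] [PartialOrder A] [StarOrderedRing A]
    [NonUnitalNormedRing B] [StarRing B] [CStarRing B] [NormedSpace ℂ B] {ε : ℝ} (hε : 0 ≤ ε)
    {ψ : A →L[ℂ] B}
    (hψ : ∀ x y : A, 0 ≤ x → 0 ≤ y → x * y = 0 → ‖ψ x * ψ y‖ ≤ ε * ‖x‖ * ‖y‖)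
    (hstar : ∀ x : A, ψ (star x) = star (ψ x)) :
    ‖ψ‖ ≤ √(32 * ε) ∨ ‖ψ‖ ≤ 10 * ‖ψ 1‖ := by
  set φ := ψ.restrictScalars ℝ
  set N := ‖φ.domRestrict (selfAdjoint.submodule ℝ A)‖
  have hψN : ‖ψ‖ ≤ 2 * N := norm_le_two_mul_norm_domRestrict_selfAdjoint ψ
  have hN : N ^ 2 ≤ (N + ‖ψ 1‖) ^ 2 / 2 + 2 * ε :=
    sq_norm_domRestrict_selfAdjoint_le (φ := φ) hε hψ fun x hx ↦
      (hstar x).symm.trans (congrArg ψ hx.star_eq)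
  rcases le_total N (5 * ‖ψ 1‖) with hsmall | hlarge
  · exact .inr (by linarith)
  · refine .inl (Real.le_sqrt_of_sq_le ?_)
    have habsorb : (N + ‖ψ 1‖) ^ 2 ≤ (6 / 5 * N) ^ 2 := by
      gcongr
      linarith
    calc ‖ψ‖ ^ 2 ≤ (2 * N) ^ 2 := by gcongr
      _ ≤ 32 * ε := by linarith

/-- There is an absolute constant `K` such that for every self-adjoint
ε-order zero map `ψ` on a unital C*-algebra with `h := ψ(1)`, either
`‖ψ‖ ≤ √((K+2)⁵ε)` or `‖ψ‖ ≤ (K+2)⁵‖h‖`. -/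
theorem stmt_15 :
    ∃ K : ℝ, ∀ (A B : Type) (_ : CStarAlgebra A) (_ : PartialOrder A) (_ : StarOrderedRing A)
      (_ : NonUnitalCStarAlgebra B) (ε : ℝ), 0 ≤ ε →
      ∀ ψ : A →L[ℂ] B, IsEpsOrderZero ε ψ → (∀ x : A, ψ (star x) = star (ψ x)) →
      ∀ h : B, h = ψ 1 →
        ‖ψ‖ ≤ Real.sqrt ((K + 2) ^ 5 * ε) ∨ ‖ψ‖ ≤ (K + 2) ^ 5 * ‖h‖ := by
  refine ⟨0, fun A B _ _ _ _ ε hε ψ hψ hstar h hh ↦ hh ▸ ?_⟩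
  exact (stmt_15_general hε hψ hstar).imp (by norm_num) fun H ↦ by linarith [norm_nonneg (ψ 1)]
end

section
/- There exist an absolute constant K < ∞ and, for each N ∈ ℕ, a constant C_N < ∞, with the following property. Let A and B be C*-algebras with A unital, let H be a complex Hilbert space and π : B → B(H) a nondegenerate representation, let ε ∈ (0,1], and let ψ : A → B be a self-adjoint bounded linear ε-order zero map such that h := ψ(1_A) is an algebraic element of B of degree at most N (i.e., Q(h) = 0 for some monic complex polynomial Q of degree at most N, evaluated in the unitization of B). Then there exist bounded linear maps ψ_s, ψ_r : A → B(H), both taking values in the double commutant π(B)'' of π(B), such that: (i) π∘ψ = ψ_s + ψ_r; (ii) ‖ψ_s‖ ≤ (6K+7)‖ψ‖^{4/5}ε^{1/16}; (iii) there exists a projection q ∈ π(B)'' such that ψ_r takes values in the corner subalgebra C := q·D·q, where D is the norm-closure of {π(h)·b·π(h) : b ∈ π(B)''}; (iv) either ψ_r = 0, or there exists c ∈ C with c·ψ_r(1_A) = ψ_r(1_A)·c = q (so ψ_r(1_A) is invertible in C) such that the map x ↦ c·ψ_r(x) sends 1_A to q and is a δ-Jordan *-homomorphism with δ = 24(C_N²(K+2)^5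 + 10C_N + 17)‖ψ‖ε^{1/16}. -/
/-- The double commutant of a subset of a ring. -/
def doubleCommutant {R : Type*} [Monoid R] (S : Set R) : Set R :=
  Set.centralizer (Set.centralizer S)

/-- The corner `q·D·q` of a set `D` determined by `q`. -/
def cornerSet {R : Type*} [Mul R] (q : R) (D : Set R) : Set R :=
  {y : R | ∃ d ∈ D, y = q * d * q}

/-!
For self-adjoint `x`, a partition of unity of tent functions of mesh `s` on the spectrum of `x`
turns the ε-order zero hypothesis into `‖ψ x * ψ x - ψ 1 * ψ (x * x)‖ ≤ 128 ε ‖x‖²` and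
`‖ψ x * ψ 1 - ψ 1 * ψ x‖ ≤ 128 ε ‖x‖`: products of tents which do not overlap are controlled by
averaging over random subsets of the tents, uniformly in their number, and the overlapping ones
contribute `O(s)`.

Since `h = ψ 1` has at most `N` spectral values, one can cut its spectrum at a level `t` comparable
to `‖ψ‖^{3/5} ε^{1/8}` with a spectral gap above `t`. On the image of the spectral projection `p`
for `|s| > t`, `h` has an inverse `c` bounded by `1 / t`, and the two estimates make `c ψ(·) p` an
approximate Jordan *-homomorphism. The gap bounds `p ψ(x) (1 - p)`, because `ψ x` almost commutes
with `h`; and `‖ψ x * (1 - p)‖² ≲ t ‖ψ‖ ‖x‖²` makes `ψ - p ψ p` small.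
-/

section Averaging

open Finset

variable {ι W : Type*}

theorem card_powerset_filter_mem_disjoint [DecidableEq ι] {U P : Finset ι} {i : ι} (hi : i ∈ U)
    (hP : P ⊆ U) (hiP : i ∉ P) :
    #{S ∈ U.powerset | i ∈ S ∧ Disjoint S P} * 2 ^ (#P + 1) = 2 ^ #U := by
  have hIcc : {S ∈ U.powerset | i ∈ S ∧ Disjoint S P} = Icc {i} (U \ P) := by
    ext S
    simp only [mem_filter, mem_powerset, mem_Icc, singleton_subset_iff, subset_sdiff]
    tauto
  have hle : {i} ⊆ U \ P := singleton_subset_iff.2 (mem_sdiff.2 ⟨hi, hiP⟩)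
  have hcard : 1 ≤ #(U \ P) := card_pos.2 ⟨i, hle (mem_singleton_self i)⟩
  rw [hIcc, card_Icc_finset hle, card_singleton, ← pow_add]
  congr 1
  have := card_sdiff_add_card_eq_card hP
  omega

theorem smul_sum_powerset_sum_mem_disjoint [DecidableEq ι] [AddCommGroup W] [Module ℝ W]
    {U I : Finset ι} {N : ι → Finset ι} {d : ℕ} (hI : I ⊆ U) (hN : ∀ j ∈ I, N j ⊆ U)
    (hd : ∀ j ∈ I, #(N j) = d) (w : ι → ι → W) :
    (2 : ℝ) ^ (d + 1) • ∑ S ∈ U.powerset, ∑ i ∈ I with i ∈ S, ∑ j ∈ I with Disjoint S (N j), w i j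
      = (2 : ℝ) ^ #U • ∑ i ∈ I, ∑ j ∈ I with i ∉ N j, w i j := by
  have hweight : ∀ i ∈ I, ∀ j ∈ I,
      (2 : ℝ) ^ (d + 1) • ∑ S ∈ U.powerset, (if i ∈ S ∧ Disjoint S (N j) then w i j else 0)
        = (2 : ℝ) ^ #U • if i ∉ N j then w i j else 0 := by
    intro i hi j hj
    rw [← sum_filter, sum_const, ← Nat.cast_smul_eq_nsmul ℝ, smul_smul]
    by_cases hij : i ∈ N j
    · rw [filter_false_of_mem fun S _ h => disjoint_left.1 h.2 h.1 hij]
      simp [hij]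
    · rw [if_pos hij, mul_comm, ← hd j hj]
      exact_mod_cast congrArg (fun k : ℕ => (k : ℝ) • w i j)
        (card_powerset_filter_mem_disjoint (hI hi) (hN j hj) hij)
  have hif : ∀ S, ∑ i ∈ I with i ∈ S, ∑ j ∈ I with Disjoint S (N j), w i j
      = ∑ i ∈ I, ∑ j ∈ I, if i ∈ S ∧ Disjoint S (N j) then w i j else 0 := by
    intro S
    simp only [sum_filter, ite_and, sum_ite_irrel, sum_const_zero]
  simp only [hif]
  rw [sum_comm, smul_sum, smul_sum]
  refine sum_congr rfl fun i hi => ?_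
  rw [sum_comm, sum_filter, smul_sum, smul_sum]
  exact sum_congr rfl fun j hj => hweight i hi j hj

variable [NormedAddCommGroup W] [NormedSpace ℝ W]

-- For a random `S ⊆ U`, each pair with `i ∉ N j` satisfies `i ∈ S` and `Disjoint S (N j)` with
-- the same probability `2 ^ (-(d + 1))`, and all other pairs are never selected.
theorem norm_sum_off_relation_le [DecidableEq ι] {I : Finset ι} {N : ι → Finset ι} {d : ℕ}
    (hd : ∀ j ∈ I, #(N j) = d) {w : ι → ι → W} {c : ℝ}
    (hw : ∀ S ⊆ I, ∀ T ⊆ I, (∀ i ∈ S, ∀ j ∈ T, i ∉ N j) → ‖∑ i ∈ S, ∑ j ∈ T, w i j‖ ≤ c) :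
    ‖∑ i ∈ I, ∑ j ∈ I with i ∉ N j, w i j‖ ≤ 2 ^ (d + 1) * c := by
  set U := I ∪ I.biUnion N
  have havg := smul_sum_powerset_sum_mem_disjoint (U := U) subset_union_left
    (fun j hj => (subset_biUnion_of_mem N hj).trans subset_union_right) hd w
  have hbound : ‖∑ S ∈ U.powerset, ∑ i ∈ I with i ∈ S, ∑ j ∈ I with Disjoint S (N j), w i j‖
      ≤ 2 ^ #U * c := by
    refine (norm_sum_le_of_le _ fun S _ => hw _ (filter_subset _ _) _ (filter_subset _ _)
      fun i hi j hj => ?_).trans_eq (by simp)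
    exact disjoint_left.1 (mem_filter.1 hj).2 (mem_filter.1 hi).2
  have hnorm := congrArg norm havg
  simp only [norm_smul, norm_pow, Real.norm_ofNat] at hnorm
  refine le_of_mul_le_mul_left (hnorm.symm.le.trans ?_) (by positivity : (0 : ℝ) < 2 ^ #U)
  calc _ ≤ (2 : ℝ) ^ (d + 1) * (2 ^ #U * c) := by gcongr
    _ = 2 ^ #U * (2 ^ (d + 1) * c) := by ring

theorem norm_sum_diagonal_le {I : Finset ι} {w : ι → ι → W} {c : ℝ}
    (hw : ∀ S ⊆ I, ∀ T ⊆ I, ‖∑ i ∈ S, ∑ j ∈ T, w i j‖ ≤ c) :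
    ‖∑ i ∈ I, w i i‖ ≤ 5 * c := by
  classical
  have hoff : ‖∑ i ∈ I, ∑ j ∈ I with i ≠ j, w i j‖ ≤ 2 ^ (1 + 1) * c := by
    simpa only [mem_singleton] using norm_sum_off_relation_le (N := fun j => {j})
      (fun _ _ => card_singleton _) fun S hS T hT _ => hw S hS T hT
  have hsplit : ∑ i ∈ I, w i i = ∑ i ∈ I, ∑ j ∈ I, w i j - ∑ i ∈ I, ∑ j ∈ I with i ≠ j, w i j := by
    rw [← sum_sub_distrib]
    refine sum_congr rfl fun i hi => ?_
    rw [← sum_filter_add_sum_filter_not I (i = ·) (w i), add_sub_cancel_right, filter_eq,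
      if_pos hi, sum_singleton]
  calc ‖∑ i ∈ I, w i i‖ ≤ c + 2 ^ (1 + 1) * c :=
        hsplit ▸ norm_sub_le_of_le (hw I Subset.rfl I Subset.rfl) hoff
    _ = 5 * c := by ring

end Averaging

section BandedPartition

open Finset

/-- A finite partition of unity `E` by positive elements of a C⋆-algebra, indexed by the elements
of `I` in an additive group, in which `E i` and `E j` are orthogonal unless `i - j` lies in the
band `D`. The family is extended by zero outside `I`. -/
structure IsBandedPartition {G A : Type*} [AddCommGroup G] [CStarAlgebra A] [PartialOrder A]
    (D I : Finset G) (E : G → A) : Prop where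
  nonneg : ∀ i, 0 ≤ E i
  sum_eq_one : ∑ i ∈ I, E i = 1
  eq_zero_of_notMem : ∀ i, i ∉ I → E i = 0
  mul_eq_zero : ∀ i j, i - j ∉ D → E i * E j = 0

/-- A bilinear map which is small on pairs of orthogonal positive elements; the case
`φ x y = ψ x * ψ y` is that of an ε-order zero map `ψ`. -/
def IsEpsZeroProductPreserving {A W : Type*} [CStarAlgebra A] [PartialOrder A]
    [NormedAddCommGroup W] [NormedSpace ℝ W] (ε : ℝ) (φ : A →L[ℝ] A →L[ℝ] W) : Prop :=
  ∀ u v : A, 0 ≤ u → 0 ≤ v → u * v = 0 → ‖φ u v‖ ≤ ε * ‖u‖ * ‖v‖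

theorem posPart_le_abs (s : ℝ) : s⁺ ≤ |s| :=
  (le_add_of_nonneg_right (negPart_nonneg s)).trans_eq (posPart_add_negPart s)

theorem negPart_le_abs (s : ℝ) : s⁻ ≤ |s| :=
  (le_add_of_nonneg_left (posPart_nonneg s)).trans_eq (posPart_add_negPart s)

theorem sum_smul_eq_posPart_sub_negPart {ι V : Type*} [AddCommGroup V] [Module ℝ V]
    (S : Finset ι) (a : ι → ℝ) (E : ι → V) :
    ∑ i ∈ S, a i • E i = ∑ i ∈ S, (a i)⁺ • E i - ∑ i ∈ S, (a i)⁻ • E i := by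
  simp only [← sum_sub_distrib, ← sub_smul, posPart_sub_negPart]

theorem sum_sum_sub_mul_smul_apply {ι V W : Type*} [SeminormedAddCommGroup V] [NormedSpace ℝ V]
    [SeminormedAddCommGroup W] [NormedSpace ℝ W] (φ : V →L[ℝ] V →L[ℝ] W) (S T : Finset ι)
    (E : ι → V) (a b : ι → ℝ) :
    ∑ i ∈ S, ∑ j ∈ T, ((a i - a j) * b j) • φ (E i) (E j)
      = φ (∑ i ∈ S, a i • E i) (∑ j ∈ T, b j • E j)
        - φ (∑ i ∈ S, E i) (∑ j ∈ T, (a j * b j) • E j) := by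
  simp only [map_sum, map_smul, _root_.sum_apply, smul_apply,
    smul_sum, sub_mul, sub_smul, sum_sub_distrib, mul_smul]
  rw [sum_comm (s := S), sum_comm (s := S), sub_left_inj]
  simp only [smul_comm (a _) (b _)]

variable {G A W : Type*} [AddCommGroup G] [CStarAlgebra A] [PartialOrder A] [NormedAddCommGroup W]
  [NormedSpace ℝ W]

namespace IsBandedPartition

variable {D I S T : Finset G} {E : G → A} {a b : G → ℝ} {α β ε η : ℝ} {φ : A →L[ℝ] A →L[ℝ] W}

theorem sum_near_eq_sum_shift [DecidableEq G] (hE : IsBandedPartition D I E) (φ : A →L[ℝ] A →L[ℝ] W)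
    (r : G → G → ℝ) :
    ∑ i ∈ I, ∑ j ∈ I with i - j ∈ D, r i j • φ (E i) (E j)
      = ∑ δ ∈ D, ∑ j ∈ I, r (j + δ) j • φ (E (j + δ)) (E j) := by
  simp only [sum_filter]
  rw [sum_comm, sum_comm (s := D)]
  refine sum_congr rfl fun j _ => ?_
  rw [← sum_filter]
  refine sum_of_injOn (· - j) (sub_left_injective.injOn) (fun i hi => (mem_filter.1 hi).2)
    (fun δ hδ hδI => ?_) fun i _ => by simp
  have : j + δ ∉ I := fun h => hδI ⟨j + δ, by simp [h, hδ]⟩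
  simp [hE.eq_zero_of_notMem _ this]

variable [StarOrderedRing A]

theorem sum_le_one (hE : IsBandedPartition D I E) (S : Finset G) : ∑ i ∈ S, E i ≤ 1 := by
  classical
  calc ∑ i ∈ S, E i ≤ ∑ i ∈ I ∪ S, E i :=
        sum_le_sum_of_subset_of_nonneg subset_union_right fun i _ _ => hE.nonneg i
    _ = ∑ i ∈ I, E i :=
        (sum_subset subset_union_left fun i _ hi => hE.eq_zero_of_notMem i hi).symm
    _ = 1 := hE.sum_eq_one

theorem sum_smul_nonneg (hE : IsBandedPartition D I E) (ha : ∀ i ∈ S, 0 ≤ a i) :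
    0 ≤ ∑ i ∈ S, a i • E i :=
  sum_nonneg fun i hi => smul_nonneg (ha i hi) (hE.nonneg i)

theorem norm_sum_smul_le_of_nonneg (hE : IsBandedPartition D I E) (hα : 0 ≤ α)
    (ha : ∀ i ∈ S, 0 ≤ a i) (haα : ∀ i ∈ S, a i ≤ α) : ‖∑ i ∈ S, a i • E i‖ ≤ α := by
  rw [CStarAlgebra.norm_le_iff_le_algebraMap _ hα (hE.sum_smul_nonneg ha)]
  calc ∑ i ∈ S, a i • E i ≤ ∑ i ∈ S, α • E i :=
        sum_le_sum fun i hi => smul_le_smul_of_nonneg_right (haα i hi) (hE.nonneg i)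
    _ = α • ∑ i ∈ S, E i := (smul_sum ..).symm
    _ ≤ α • 1 := smul_le_smul_of_nonneg_left (hE.sum_le_one S) hα
    _ = algebraMap ℝ A α := (Algebra.algebraMap_eq_smul_one α).symm

theorem norm_sum_le_one (hE : IsBandedPartition D I E) (S : Finset G) : ‖∑ i ∈ S, E i‖ ≤ 1 := by
  simpa using hE.norm_sum_smul_le_of_nonneg (S := S) (a := 1) zero_le_one
    (fun _ _ => zero_le_one) fun _ _ => le_rfl

theorem norm_sum_smul_le (hE : IsBandedPartition D I E) (hα : 0 ≤ α)
    (ha : ∀ i ∈ S, |a i| ≤ α) : ‖∑ i ∈ S, a i • E i‖ ≤ 2 * α := by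
  rw [sum_smul_eq_posPart_sub_negPart, two_mul]
  exact norm_sub_le_of_le
    (hE.norm_sum_smul_le_of_nonneg hα (fun i _ => posPart_nonneg _)
      fun i hi => (posPart_le_abs _).trans (ha i hi))
    (hE.norm_sum_smul_le_of_nonneg hα (fun i _ => negPart_nonneg _)
      fun i hi => (negPart_le_abs _).trans (ha i hi))

theorem norm_apply_sum_smul_le_of_nonneg (hE : IsBandedPartition D I E) (hε : 0 ≤ ε)
    (hφ : IsEpsZeroProductPreserving ε φ) (hST : ∀ i ∈ S, ∀ j ∈ T, i - j ∉ D) (hα : 0 ≤ α)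
    (hβ : 0 ≤ β) (ha : ∀ i ∈ S, 0 ≤ a i) (haα : ∀ i ∈ S, a i ≤ α) (hb : ∀ j ∈ T, 0 ≤ b j)
    (hbβ : ∀ j ∈ T, b j ≤ β) :
    ‖φ (∑ i ∈ S, a i • E i) (∑ j ∈ T, b j • E j)‖ ≤ ε * α * β := by
  have horth : (∑ i ∈ S, a i • E i) * ∑ j ∈ T, b j • E j = 0 := by
    rw [sum_mul_sum]
    refine sum_eq_zero fun i hi => sum_eq_zero fun j hj => ?_
    rw [smul_mul_smul_comm, hE.mul_eq_zero i j (hST i hi j hj), smul_zero]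
  refine (hφ _ _ (hE.sum_smul_nonneg ha) (hE.sum_smul_nonneg hb) horth).trans ?_
  gcongr
  · exact hE.norm_sum_smul_le_of_nonneg hα ha haα
  · exact hE.norm_sum_smul_le_of_nonneg hβ hb hbβ

theorem norm_apply_sum_smul_le (hE : IsBandedPartition D I E) (hε : 0 ≤ ε)
    (hφ : IsEpsZeroProductPreserving ε φ) (hST : ∀ i ∈ S, ∀ j ∈ T, i - j ∉ D) (hα : 0 ≤ α)
    (hβ : 0 ≤ β) (ha : ∀ i ∈ S, |a i| ≤ α) (hb : ∀ j ∈ T, |b j| ≤ β) :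
    ‖φ (∑ i ∈ S, a i • E i) (∑ j ∈ T, b j • E j)‖ ≤ 4 * (ε * α * β) := by
  have hpart : ∀ f g : ℝ → ℝ, (∀ s, 0 ≤ f s ∧ f s ≤ |s|) → (∀ s, 0 ≤ g s ∧ g s ≤ |s|) →
      ‖φ (∑ i ∈ S, f (a i) • E i) (∑ j ∈ T, g (b j) • E j)‖ ≤ ε * α * β := fun f g hf hg =>
    hE.norm_apply_sum_smul_le_of_nonneg hε hφ hST hα hβ
      (fun i _ => (hf _).1) (fun i hi => (hf _).2.trans (ha i hi))
      (fun j _ => (hg _).1) (fun j hj => (hg _).2.trans (hb j hj))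
  have hpos : ∀ s : ℝ, 0 ≤ s⁺ ∧ s⁺ ≤ |s| := fun s => ⟨posPart_nonneg s, posPart_le_abs s⟩
  have hneg : ∀ s : ℝ, 0 ≤ s⁻ ∧ s⁻ ≤ |s| := fun s => ⟨negPart_nonneg s, negPart_le_abs s⟩
  rw [sum_smul_eq_posPart_sub_negPart S a, sum_smul_eq_posPart_sub_negPart T b]
  simp only [map_sub, sub_apply]
  refine (norm_sub_le_of_le (norm_sub_le_of_le (hpart _ _ hpos hpos) (hpart _ _ hneg hpos))
    (norm_sub_le_of_le (hpart _ _ hpos hneg) (hpart _ _ hneg hneg))).trans_eq ?_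
  ring

theorem norm_sum_far_le [DecidableEq G] (hE : IsBandedPartition D I E) (hε : 0 ≤ ε)
    (hφ : IsEpsZeroProductPreserving ε φ) (hα : 0 ≤ α) (hβ : 0 ≤ β) (ha : ∀ i ∈ I, |a i| ≤ α)
    (hb : ∀ j ∈ I, |b j| ≤ β) :
    ‖∑ i ∈ I, ∑ j ∈ I with i - j ∉ D, ((a i - a j) * b j) • φ (E i) (E j)‖
      ≤ 2 ^ (#D + 1) * (8 * (ε * α * β)) := by
  have hmem : ∀ i j, i ∉ D.map (addRightEmbedding j) ↔ i - j ∉ D := fun i j => by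
    simp only [mem_map, addRightEmbedding_apply, ← eq_sub_iff_add_eq, exists_eq_right]
  simp only [← hmem]
  refine norm_sum_off_relation_le (fun j _ => card_map _) fun S hS T hT hST => ?_
  simp only [hmem] at hST
  rw [sum_sum_sub_mul_smul_apply]
  have hprod := hE.norm_apply_sum_smul_le hε hφ hST hα hβ
    (fun i hi => ha i (hS hi)) fun j hj => hb j (hT hj)
  have hone := hE.norm_apply_sum_smul_le (a := fun _ => 1) (b := fun j => a j * b j) (β := α * β)
    hε hφ hST zero_le_one (by positivity) (fun _ _ => abs_one.le) fun j hj => by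
      rw [abs_mul]
      exact mul_le_mul (ha j (hT hj)) (hb j (hT hj)) (abs_nonneg _) hα
  simp only [one_smul] at hone
  exact (norm_sub_le_of_le hprod hone).trans_eq (by ring)

theorem norm_sum_shift_le (hE : IsBandedPartition D I E) (hη : 0 ≤ η) (hβ : 0 ≤ β) {δ : G}
    (ha : ∀ j ∈ I, |a (j + δ) - a j| ≤ η) (hb : ∀ j ∈ I, |b j| ≤ β) :
    ‖∑ j ∈ I, ((a (j + δ) - a j) * b j) • φ (E (j + δ)) (E j)‖
      ≤ 5 * (‖φ‖ * (2 * (η * β))) := by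
  refine norm_sum_diagonal_le
    (w := fun i j => ((a (j + δ) - a j) * b j) • φ (E (i + δ)) (E j)) fun S _ T hT => ?_
  have hrect : ∑ i ∈ S, ∑ j ∈ T, ((a (j + δ) - a j) * b j) • φ (E (i + δ)) (E j)
      = φ (∑ i ∈ S.map (addRightEmbedding δ), E i)
        (∑ j ∈ T, ((a (j + δ) - a j) * b j) • E j) := by
    simp only [sum_map, addRightEmbedding_apply, map_sum, map_smul,
      _root_.sum_apply, smul_sum]
    rw [sum_comm]
  rw [hrect]
  refine (φ.le_opNorm₂ _ _).trans ?_
  calc _ ≤ ‖φ‖ * 1 * (2 * (η * β)) := by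
        gcongr
        · exact hE.norm_sum_le_one _
        · refine hE.norm_sum_smul_le (by positivity) fun j hj => ?_
          rw [abs_mul]
          exact mul_le_mul (ha j (hT hj)) (hb j (hT hj)) (abs_nonneg _) hη
    _ = ‖φ‖ * (2 * (η * β)) := by ring

theorem norm_apply_sub_apply_one_le (hE : IsBandedPartition D I E) (hε : 0 ≤ ε)
    (hφ : IsEpsZeroProductPreserving ε φ) (hα : 0 ≤ α) (hβ : 0 ≤ β) (hη : 0 ≤ η)
    (ha : ∀ i ∈ I, |a i| ≤ α) (hb : ∀ j ∈ I, |b j| ≤ β)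
    (hshift : ∀ δ ∈ D, ∀ j ∈ I, |a (j + δ) - a j| ≤ η) :
    ‖φ (∑ i ∈ I, a i • E i) (∑ j ∈ I, b j • E j) - φ 1 (∑ j ∈ I, (a j * b j) • E j)‖
      ≤ 2 ^ (#D + 1) * (8 * (ε * α * β)) + #D * (5 * (‖φ‖ * (2 * (η * β)))) := by
  classical
  rw [← hE.sum_eq_one, ← sum_sum_sub_mul_smul_apply]
  have hsplit : ∑ i ∈ I, ∑ j ∈ I, ((a i - a j) * b j) • φ (E i) (E j)
      = ∑ i ∈ I, ∑ j ∈ I with i - j ∉ D, ((a i - a j) * b j) • φ (E i) (E j)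
        + ∑ i ∈ I, ∑ j ∈ I with i - j ∈ D, ((a i - a j) * b j) • φ (E i) (E j) := by
    rw [← sum_add_distrib]
    exact sum_congr rfl fun i _ =>
      (sum_filter_not_add_sum_filter I (fun j => i - j ∈ D) _).symm
  rw [hsplit, hE.sum_near_eq_sum_shift φ fun i j => (a i - a j) * b j]
  refine norm_add_le_of_le (hE.norm_sum_far_le hε hφ hα hβ ha hb)
    ((norm_sum_le_of_le D fun δ hδ => hE.norm_sum_shift_le hη hβ (hshift δ hδ) hb).trans_eq ?_)
  simp

end IsBandedPartition

end BandedPartition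

section HatPartition

open Finset

/-- The piecewise linear hat function supported on `[-1, 1]`; its integer translates form a
partition of unity on the real line. -/
noncomputable def hat (u : ℝ) : ℝ := max 0 (1 - |u|)

theorem hat_nonneg (u : ℝ) : 0 ≤ hat u := le_max_left _ _

theorem continuous_hat : Continuous hat := by unfold hat; fun_prop

theorem hat_eq_zero {u : ℝ} (hu : 1 ≤ |u|) : hat u = 0 := max_eq_left (by linarith)

theorem hat_eq_one_sub_abs {u : ℝ} (hu : |u| ≤ 1) : hat u = 1 - |u| := max_eq_right (by linarith)

theorem one_le_abs_sub_intCast_of_notMem_Icc {n : ℕ} {u : ℝ} (hu : |u| ≤ n) {k : ℤ}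
    (hk : k ∉ Icc (-n : ℤ) n) : 1 ≤ |u - k| := by
  have hnk : (n : ℤ) + 1 ≤ |k| := by
    rw [mem_Icc, ← abs_le] at hk
    omega
  have hnk' : (n : ℝ) + 1 ≤ |(k : ℝ)| := by exact_mod_cast hnk
  have := abs_sub_abs_le_abs_sub (k : ℝ) u
  rw [abs_sub_comm] at this
  linarith

theorem hat_mul_hat_eq_zero {i j : ℤ} (hij : i - j ∉ Icc (-1 : ℤ) 1) (u : ℝ) :
    hat (u - i) * hat (u - j) = 0 := by
  have hij' : (2 : ℝ) ≤ |(i : ℝ) - j| := by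
    have : 2 ≤ |i - j| := by
      rw [mem_Icc, ← abs_le] at hij
      omega
    exact_mod_cast this
  rcases le_or_gt 1 |u - i| with hi | hi
  · rw [hat_eq_zero hi, zero_mul]
  · rw [hat_eq_zero (u := u - j), mul_zero]
    have := abs_sub_le (i : ℝ) u j
    rw [abs_sub_comm (i : ℝ) u] at this
    linarith

theorem sum_hat_sub_intCast {n : ℕ} {u : ℝ} (hu : |u| ≤ n) :
    ∑ k ∈ Icc (-n : ℤ) n, hat (u - k) = 1 := by
  have hfloor : 0 ≤ u - ⌊u⌋ := sub_nonneg.2 (Int.floor_le u)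
  have hceil : u - ⌊u⌋ < 1 := by linarith [Int.lt_floor_add_one u]
  have hpair : ∀ k ∉ ({⌊u⌋, ⌊u⌋ + 1} : Finset ℤ), hat (u - k) = 0 := fun k hk => by
    simp only [mem_insert, mem_singleton, not_or] at hk
    refine hat_eq_zero (le_abs.2 ?_)
    rcases lt_or_gt_of_ne hk.1 with h | h
    · have : (k : ℝ) + 1 ≤ ⌊u⌋ := by exact_mod_cast h
      exact .inl (by linarith)
    · have : (⌊u⌋ : ℝ) + 2 ≤ k := by exact_mod_cast (by omega : ⌊u⌋ + 2 ≤ k)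
      exact .inr (by linarith)
  calc ∑ k ∈ Icc (-n : ℤ) n, hat (u - k)
      = ∑ k ∈ Icc (-n : ℤ) n ∪ {⌊u⌋, ⌊u⌋ + 1}, hat (u - k) :=
        sum_subset subset_union_left fun k _ hk =>
          hat_eq_zero (one_le_abs_sub_intCast_of_notMem_Icc hu hk)
    _ = ∑ k ∈ {⌊u⌋, ⌊u⌋ + 1}, hat (u - k) :=
        (sum_subset subset_union_right fun k _ hk => hpair k hk).symm
    _ = hat (u - ⌊u⌋) + hat (u - ⌊u⌋ - 1) := by
        rw [sum_pair (by omega)]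
        push_cast
        ring_nf
    _ = 1 := by
        rw [hat_eq_one_sub_abs (abs_le.2 ⟨by linarith, hceil.le⟩),
          hat_eq_one_sub_abs (abs_le.2 ⟨by linarith, by linarith⟩), abs_of_nonneg hfloor,
          abs_of_nonpos (by linarith)]
        ring

variable {A : Type*} [CStarAlgebra A]

/-- The partition of unity in the functional calculus of `x` by the hat functions of width `s`
centered at the nodes `k * s`, `k ∈ ℤ`. -/
noncomputable def hatPartition (x : A) (s : ℝ) (k : ℤ) : A := cfc (fun t => hat (t / s - k)) x

theorem continuous_hat_div_sub (s : ℝ) (k : ℤ) : Continuous fun t : ℝ => hat (t / s - k) :=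
  continuous_hat.comp (by fun_prop)

theorem sum_smul_hatPartition (x : A) (s : ℝ) (I : Finset ℤ) (a : ℤ → ℝ) :
    ∑ k ∈ I, a k • hatPartition x s k = cfc (fun t => ∑ k ∈ I, a k * hat (t / s - k)) x := by
  have hcont : ∀ k, Continuous fun t => a k * hat (t / s - k) := fun k =>
    (continuous_hat_div_sub s k).const_mul (a k)
  rw [← sum_fn, cfc_sum _ _ _ fun k _ => (hcont k).continuousOn]
  exact sum_congr rfl fun k _ =>
    (cfc_const_mul _ _ _ (continuous_hat_div_sub s k).continuousOn).symm

theorem abs_le_norm_of_mem_spectrum {x : A} {t : ℝ} (ht : t ∈ spectrum ℝ x) : |t| ≤ ‖x‖ := by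
  have : Nontrivial A := by
    by_contra h
    rw [not_nontrivial_iff_subsingleton] at h
    simp at ht
  simpa using spectrum.norm_le_norm_mul_of_mem ht

theorem abs_div_le_of_mem_spectrum {x : A} {s t : ℝ} {n : ℕ} (hs : 0 < s) (hn : ‖x‖ ≤ n * s)
    (ht : t ∈ spectrum ℝ x) : |t / s| ≤ n := by
  rw [abs_div, abs_of_pos hs, div_le_iff₀ hs]
  exact (abs_le_norm_of_mem_spectrum ht).trans hn

theorem isBandedPartition_hatPartition [PartialOrder A] [StarOrderedRing A] {x : A}
    (hx : IsSelfAdjoint x) {s : ℝ} {n : ℕ} (hs : 0 < s) (hn : ‖x‖ ≤ n * s) :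
    IsBandedPartition (Icc (-1) 1) (Icc (-n : ℤ) n) (hatPartition x s) where
  nonneg k := cfc_nonneg fun t _ => hat_nonneg _
  sum_eq_one := by
    have hsum := sum_smul_hatPartition x s (Icc (-n : ℤ) n) 1
    simp only [Pi.one_apply, one_smul, one_mul] at hsum
    rw [hsum, cfc_congr (g := fun _ => 1)
      fun t ht => sum_hat_sub_intCast (abs_div_le_of_mem_spectrum hs hn ht), cfc_const_one ℝ x]
  eq_zero_of_notMem k hk := by
    rw [hatPartition, cfc_congr (g := fun _ => 0) fun t ht => hat_eq_zero
      (one_le_abs_sub_intCast_of_notMem_Icc (abs_div_le_of_mem_spectrum hs hn ht) hk),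
      cfc_const_zero]
  mul_eq_zero i j hij := by
    rw [hatPartition, hatPartition, ← cfc_mul _ _ _ (continuous_hat_div_sub s i).continuousOn
      (continuous_hat_div_sub s j).continuousOn]
    simp only [hat_mul_hat_eq_zero hij, cfc_const_zero]

theorem abs_sum_mul_hat_sub_le {f : ℝ → ℝ} {s t κ : ℝ} {n : ℕ} (hs : 0 < s) (ht : |t / s| ≤ n)
    (hf : ∀ k ∈ Icc (-n : ℤ) n, |k * s - t| ≤ s → |f (k * s) - f t| ≤ κ) :
    |∑ k ∈ Icc (-n : ℤ) n, f (k * s) * hat (t / s - k) - f t| ≤ κ := by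
  have hterm : ∀ k ∈ Icc (-n : ℤ) n,
      |(f (k * s) - f t) * hat (t / s - k)| ≤ κ * hat (t / s - k) := fun k hk => by
    rw [abs_mul, abs_of_nonneg (hat_nonneg _)]
    rcases le_or_gt 1 |t / s - k| with hfar | hnear
    · simp [hat_eq_zero hfar]
    · refine mul_le_mul_of_nonneg_right (hf k hk ?_) (hat_nonneg _)
      have : k * s - t = -((t / s - k) * s) := by field_simp; ring
      rw [this, abs_neg, abs_mul, abs_of_pos hs]
      exact mul_le_of_le_one_left hs.le hnear.le
  calc |∑ k ∈ Icc (-n : ℤ) n, f (k * s) * hat (t / s - k) - f t|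
      = |∑ k ∈ Icc (-n : ℤ) n, (f (k * s) - f t) * hat (t / s - k)| := by
        simp only [sub_mul, sum_sub_distrib, ← mul_sum, sum_hat_sub_intCast ht, mul_one]
    _ ≤ ∑ k ∈ Icc (-n : ℤ) n, κ * hat (t / s - k) :=
        (abs_sum_le_sum_abs _ _).trans (sum_le_sum hterm)
    _ = κ := by rw [← mul_sum, sum_hat_sub_intCast ht, mul_one]

theorem norm_sum_smul_hatPartition_sub_cfc_le {x : A} {f : ℝ → ℝ}
    (hf : Continuous f) {s κ : ℝ} {n : ℕ} (hs : 0 < s) (hn : ‖x‖ ≤ n * s) (hκ : 0 ≤ κ)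
    (hfκ : ∀ t, |t| ≤ ‖x‖ → ∀ k ∈ Icc (-n : ℤ) n, |k * s - t| ≤ s → |f (k * s) - f t| ≤ κ) :
    ‖∑ k ∈ Icc (-n : ℤ) n, f (k * s) • hatPartition x s k - cfc f x‖ ≤ κ := by
  have hcont : Continuous fun t => ∑ k ∈ Icc (-n : ℤ) n, f (k * s) * hat (t / s - k) :=
    continuous_finsetSum _ fun k _ => (continuous_hat_div_sub s k).const_mul _
  rw [sum_smul_hatPartition, ← cfc_sub _ _ _ hcont.continuousOn hf.continuousOn]
  exact norm_cfc_le hκ fun t ht => abs_sum_mul_hat_sub_le hs (abs_div_le_of_mem_spectrum hs hn ht)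
    (hfκ t (abs_le_norm_of_mem_spectrum ht))

theorem abs_intCast_mul_le_of_mem_Icc {s : ℝ} {n : ℕ} (hs : 0 ≤ s) {k : ℤ}
    (hk : k ∈ Icc (-n : ℤ) n) : |k * s| ≤ n * s := by
  rw [abs_mul, abs_of_nonneg hs]
  refine mul_le_mul_of_nonneg_right ?_ hs
  exact_mod_cast abs_le.2 (mem_Icc.1 hk)

open Filter Topology in
theorem tendsto_sum_smul_hatPartition {x : A} (hx0 : x ≠ 0) {f : ℝ → ℝ}
    (hf : Continuous f) :
    Tendsto (fun n : ℕ => ∑ k ∈ Icc (-n : ℤ) n, f (k * (‖x‖ / n)) • hatPartition x (‖x‖ / n) k)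
      atTop (𝓝 (cfc f x)) := by
  have hunif := (isCompact_Icc (a := -‖x‖) (b := ‖x‖)).uniformContinuousOn_of_continuous
    hf.continuousOn
  rw [Metric.tendsto_atTop']
  intro κ hκ
  obtain ⟨δ, hδ, hfδ⟩ := Metric.uniformContinuousOn_iff_le.1 hunif (κ / 2) (half_pos hκ)
  obtain ⟨m, hm⟩ := exists_nat_gt (‖x‖ / δ)
  refine ⟨m, fun n hn => ?_⟩
  have hn0 : (0 : ℝ) < n := by exact_mod_cast (Nat.zero_le m).trans_lt hn
  have hs : ‖x‖ / n ≤ δ := by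
    rw [div_le_comm₀ hn0 hδ]
    exact hm.le.trans (by exact_mod_cast hn.le)
  have hns : n * (‖x‖ / n) = ‖x‖ := mul_div_cancel₀ _ hn0.ne'
  rw [dist_eq_norm]
  refine (norm_sum_smul_hatPartition_sub_cfc_le hf (by positivity) hns.ge (half_pos hκ).le
    fun t ht k hk hkt => hfδ _ ?_ t (abs_le.1 ht) (hkt.trans hs)).trans_lt (half_lt_self hκ)
  exact abs_le.1 ((abs_intCast_mul_le_of_mem_Icc (by positivity) hk).trans_eq hns)

end HatPartition

section ZeroProductPreserving

open Finset Filter Topology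

variable {A W : Type*} [CStarAlgebra A] [PartialOrder A] [StarOrderedRing A]
  [NormedAddCommGroup W] [NormedSpace ℝ W]

namespace IsEpsZeroProductPreserving

variable {ε β : ℝ} {φ : A →L[ℝ] A →L[ℝ] W} {x : A} {g : ℝ → ℝ}

theorem norm_apply_sum_hatPartition_sub_le (hφ : IsEpsZeroProductPreserving ε φ) (hε : 0 ≤ ε)
    (hx : IsSelfAdjoint x) (hβ : 0 ≤ β) (hg : ∀ t, |t| ≤ ‖x‖ → |g t| ≤ β) {s : ℝ} {n : ℕ}
    (hs : 0 < s) (hn : n * s = ‖x‖) :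
    ‖φ (∑ k ∈ Icc (-n : ℤ) n, (k * s) • hatPartition x s k)
          (∑ k ∈ Icc (-n : ℤ) n, g (k * s) • hatPartition x s k)
        - φ 1 (∑ k ∈ Icc (-n : ℤ) n, (k * s * g (k * s)) • hatPartition x s k)‖
      ≤ 128 * ε * ‖x‖ * β + 30 * (‖φ‖ * (s * β)) := by
  have hnode : ∀ k ∈ Icc (-n : ℤ) n, |k * s| ≤ ‖x‖ := fun k hk =>
    (abs_intCast_mul_le_of_mem_Icc hs.le hk).trans_eq hn
  have hshift : ∀ δ ∈ Icc (-1 : ℤ) 1, ∀ j ∈ Icc (-n : ℤ) n,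
      |((j + δ : ℤ) : ℝ) * s - j * s| ≤ s := by
    intro δ hδ j _
    have hδ' : |(δ : ℝ)| ≤ 1 := by exact_mod_cast abs_le.2 (mem_Icc.1 hδ)
    simpa [add_mul, abs_mul, abs_of_pos hs] using mul_le_of_le_one_left hs.le hδ'
  refine ((isBandedPartition_hatPartition hx hs hn.ge).norm_apply_sub_apply_one_le hε hφ
    (norm_nonneg x) hβ hs.le hnode (fun k hk => hg _ (hnode k hk)) hshift).trans_eq ?_
  rw [show #(Icc (-1 : ℤ) 1) = 3 from rfl]
  push_cast
  ring

theorem norm_apply_cfc_sub_apply_one_le (hφ : IsEpsZeroProductPreserving ε φ) (hε : 0 ≤ ε)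
    (hx : IsSelfAdjoint x) (hgc : Continuous g) (hβ : 0 ≤ β) (hg : ∀ t, |t| ≤ ‖x‖ → |g t| ≤ β) :
    ‖φ x (cfc g x) - φ 1 (x * cfc g x)‖ ≤ 128 * ε * ‖x‖ * β := by
  rcases eq_or_ne x 0 with rfl | hx0
  · simp
  have hid := tendsto_sum_smul_hatPartition hx0 (f := fun t => t) continuous_id
  have hgx := tendsto_sum_smul_hatPartition hx0 hgc
  have hmul := tendsto_sum_smul_hatPartition hx0 (f := fun t => t * g t) (continuous_id.mul hgc)
  rw [cfc_id' ℝ x] at hid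
  rw [cfc_mul (fun t => t) g x continuousOn_id hgc.continuousOn, cfc_id' ℝ x] at hmul
  have hstep : Tendsto (fun n : ℕ => ‖x‖ / n) atTop (𝓝 0) := tendsto_const_div_atTop_nhds_zero_nat _
  have hlhs := (((φ.continuous₂.tendsto (x, cfc g x)).comp (hid.prodMk_nhds hgx)).sub
    (((φ 1).continuous.tendsto _).comp hmul)).norm
  have hrhs := (((hstep.mul_const β).const_mul ‖φ‖).const_mul 30).const_add (128 * ε * ‖x‖ * β)
  simp only [zero_mul, mul_zero, add_zero] at hrhs
  refine le_of_tendsto_of_tendsto hlhs hrhs ((eventually_ge_atTop 1).mono fun n hn => ?_)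
  have hn0 : (0 : ℝ) < n := by exact_mod_cast hn
  exact hφ.norm_apply_sum_hatPartition_sub_le hε hx hβ hg
    (div_pos (norm_pos_iff.2 hx0) hn0) (mul_div_cancel₀ _ hn0.ne')

end IsEpsZeroProductPreserving

end ZeroProductPreserving

section SelfAdjointBounds

open ComplexStarModule

variable {A V : Type*} [SeminormedAddCommGroup A] [StarAddMonoid A] [NormedStarGroup A]
  [NormedSpace ℂ A] [StarModule ℂ A] [SeminormedAddCommGroup V] [NormedSpace ℂ V] {c : ℝ}

theorem norm_apply_le_of_isSelfAdjoint (L : A →ₗ[ℂ] V) (hc : 0 ≤ c)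
    (hL : ∀ a, IsSelfAdjoint a → ‖L a‖ ≤ c * ‖a‖) (x : A) : ‖L x‖ ≤ 2 * c * ‖x‖ := by
  calc ‖L x‖ = ‖L (ℜ x) + Complex.I • L (ℑ x)‖ := by
        rw [← map_smul, ← map_add, realPart_add_I_smul_imaginaryPart]
    _ ≤ c * ‖x‖ + c * ‖x‖ := norm_add_le_of_le
        ((hL _ (ℜ x).2).trans (by gcongr; exact realPart.norm_le x))
        (by
          rw [norm_smul, Complex.norm_I, one_mul]
          exact (hL _ (ℑ x).2).trans (by gcongr; exact imaginaryPart.norm_le x))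
    _ = 2 * c * ‖x‖ := by ring

theorem norm_apply_self_le_of_isSelfAdjoint (β : A →ₗ[ℂ] A →ₗ[ℂ] V) (hc : 0 ≤ c)
    (hβ : ∀ a, IsSelfAdjoint a → ‖β a a‖ ≤ c * ‖a‖ ^ 2) (x : A) :
    ‖β x x‖ ≤ 8 * c * ‖x‖ ^ 2 := by
  let a : A := (ℜ x : A)
  let b : A := (ℑ x : A)
  have ha : IsSelfAdjoint a := (ℜ x).2
  have hb : IsSelfAdjoint b := (ℑ x).2
  have hnorm_a : ‖a‖ ≤ ‖x‖ := realPart.norm_le x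
  have hnorm_b : ‖b‖ ≤ ‖x‖ := imaginaryPart.norm_le x
  have hnorm_add : ‖a + b‖ ≤ 2 * ‖x‖ :=
    (norm_add_le_of_le hnorm_a hnorm_b).trans_eq (two_mul _).symm
  have hbound : ∀ (y : A) (r : ℝ), IsSelfAdjoint y → ‖y‖ ≤ r → ‖β y y‖ ≤ c * r ^ 2 :=
    fun y r hy hr => (hβ y hy).trans (by gcongr)
  have hpolar : β x x = β a a - β b b + Complex.I • (β (a + b) (a + b) - β a a - β b b) := by
    rw [← realPart_add_I_smul_imaginaryPart x]
    simp only [map_add, map_smul, LinearMap.add_apply, LinearMap.smul_apply, smul_add, smul_smul,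
      Complex.I_mul_I, neg_one_smul, a, b]
    module
  calc ‖β x x‖ ≤ c * ‖x‖ ^ 2 + c * ‖x‖ ^ 2
        + (c * (2 * ‖x‖) ^ 2 + c * ‖x‖ ^ 2 + c * ‖x‖ ^ 2) := by
        rw [hpolar]
        refine norm_add_le_of_le (norm_sub_le_of_le (hbound _ _ ha hnorm_a) (hbound _ _ hb hnorm_b))
          ?_
        rw [norm_smul, Complex.norm_I, one_mul]
        exact norm_sub_le_of_le (norm_sub_le_of_le (hbound _ _ (ha.add hb) hnorm_add)
          (hbound _ _ ha hnorm_a)) (hbound _ _ hb hnorm_b)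
    _ = 8 * c * ‖x‖ ^ 2 := by ring

end SelfAdjointBounds

namespace IsEpsOrderZero

variable {A B : Type*} [CStarAlgebra A] [PartialOrder A] [StarOrderedRing A]
  [NonUnitalCStarAlgebra B] {ε : ℝ} {ψ : A →L[ℂ] B}

theorem isEpsZeroProductPreserving (hψ : IsEpsOrderZero ε ψ) :
    IsEpsZeroProductPreserving ε ((ContinuousLinearMap.mul ℝ B).bilinearComp
      (ψ.restrictScalars ℝ) (ψ.restrictScalars ℝ)) :=
  hψ

theorem norm_map_mul_self_sub_le_of_isSelfAdjoint (hψ : IsEpsOrderZero ε ψ) (hε : 0 ≤ ε) {x : A}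
    (hx : IsSelfAdjoint x) : ‖ψ x * ψ x - ψ 1 * ψ (x * x)‖ ≤ 128 * ε * ‖x‖ ^ 2 := by
  have h := hψ.isEpsZeroProductPreserving.norm_apply_cfc_sub_apply_one_le hε hx continuous_id
    (norm_nonneg x) fun t ht => ht
  rw [cfc_id ℝ x, mul_assoc, ← sq ‖x‖] at h
  exact h

theorem norm_map_mul_map_one_sub_le_of_isSelfAdjoint (hψ : IsEpsOrderZero ε ψ) (hε : 0 ≤ ε)
    {x : A} (hx : IsSelfAdjoint x) : ‖ψ x * ψ 1 - ψ 1 * ψ x‖ ≤ 128 * ε * ‖x‖ := by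
  have h := hψ.isEpsZeroProductPreserving.norm_apply_cfc_sub_apply_one_le hε hx
    (continuous_const (y := 1)) zero_le_one fun t _ => abs_one.le
  rw [cfc_const_one ℝ x, mul_one, mul_one] at h
  exact h

theorem norm_map_mul_self_sub_le (hψ : IsEpsOrderZero ε ψ) (hε : 0 ≤ ε) (x : A) :
    ‖ψ x * ψ x - ψ 1 * ψ (x * x)‖ ≤ 1024 * ε * ‖x‖ ^ 2 := by
  let β : A →ₗ[ℂ] A →ₗ[ℂ] B :=
    (LinearMap.mul ℂ B).compl₁₂ (ψ : A →ₗ[ℂ] B) ψ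
      - (LinearMap.mul ℂ A).compr₂ (LinearMap.mulLeft ℂ (ψ 1) ∘ₗ (ψ : A →ₗ[ℂ] B))
  refine (norm_apply_self_le_of_isSelfAdjoint β (by positivity : 0 ≤ 128 * ε)
    (fun a ha => hψ.norm_map_mul_self_sub_le_of_isSelfAdjoint hε ha) x).trans_eq ?_
  ring

theorem norm_map_mul_map_one_sub_le (hψ : IsEpsOrderZero ε ψ) (hε : 0 ≤ ε) (x : A) :
    ‖ψ x * ψ 1 - ψ 1 * ψ x‖ ≤ 256 * ε * ‖x‖ := by
  let L : A →ₗ[ℂ] B :=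
    (LinearMap.mulRight ℂ (ψ 1) - LinearMap.mulLeft ℂ (ψ 1)) ∘ₗ (ψ : A →ₗ[ℂ] B)
  refine (norm_apply_le_of_isSelfAdjoint L (by positivity : 0 ≤ 128 * ε)
    (fun a ha => hψ.norm_map_mul_map_one_sub_le_of_isSelfAdjoint hε ha) x).trans_eq ?_
  ring

theorem comp_nonUnitalStarAlgHom {R : Type*} [NonUnitalCStarAlgebra R] (hψ : IsEpsOrderZero ε ψ)
    (π : B →⋆ₙₐ[ℂ] R) {Φ : A →L[ℂ] R} (hΦ : ∀ x, Φ x = π (ψ x)) : IsEpsOrderZero ε Φ := by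
  intro x y hx hy hxy
  rw [hΦ, hΦ, ← map_mul]
  exact (NonUnitalStarAlgHom.norm_apply_le π _).trans (hψ x y hx hy hxy)

end IsEpsOrderZero

section Corner

/-- `c` is a self-adjoint inverse of `a` in the corner of the projection `p = c * a = a * c`. -/
structure IsCornerInverse {R : Type*} [Mul R] [Star R] (a p c : R) : Prop where
  isSelfAdjoint : IsSelfAdjoint c
  inv_mul : c * a = p
  mul_inv : a * c = p
  proj_mul_inv : p * c = c

section StarProjection

variable {R : Type*} [CStarAlgebra R] {p y : R}

theorem norm_mul_one_sub_starProjection_sq_le (hp : IsStarProjection p) (hy : IsSelfAdjoint y)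
    (a z : R) : ‖y * (1 - p)‖ ^ 2 ≤ ‖y * y - a * z‖ + ‖(1 - p) * a‖ * ‖z‖ := by
  have hq := hp.one_sub
  have hstar : star (y * (1 - p)) * (y * (1 - p))
      = (1 - p) * (y * y - a * z) * (1 - p) + (1 - p) * a * z * (1 - p) := by
    rw [star_mul, hq.isSelfAdjoint.star_eq, hy.star_eq]
    noncomm_ring
  calc ‖y * (1 - p)‖ ^ 2
      = ‖(1 - p) * (y * y - a * z) * (1 - p) + (1 - p) * a * z * (1 - p)‖ := by
        rw [sq, ← CStarRing.norm_star_mul_self, hstar]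
    _ ≤ 1 * ‖y * y - a * z‖ * 1 + ‖(1 - p) * a‖ * ‖z‖ * 1 := norm_add_le_of_le
        (norm_mul_le_of_le (norm_mul_le_of_le hq.norm_le le_rfl) hq.norm_le)
        (norm_mul_le_of_le (norm_mul_le _ _) hq.norm_le)
    _ = ‖y * y - a * z‖ + ‖(1 - p) * a‖ * ‖z‖ := by ring

theorem norm_sub_starProjection_conj_le (hp : IsStarProjection p) (hy : IsSelfAdjoint y) :
    ‖y - p * y * p‖ ≤ 2 * ‖y * (1 - p)‖ := by
  have hsplit : y - p * y * p = y * (1 - p) + star (y * (1 - p)) * p := by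
    rw [star_mul, hp.one_sub.isSelfAdjoint.star_eq, hy.star_eq]
    noncomm_ring
  rw [hsplit, two_mul]
  exact norm_add_le_of_le le_rfl ((norm_mul_le_of_le (norm_star _).le hp.norm_le).trans_eq
    (mul_one _))

end StarProjection

namespace IsCornerInverse

section Semigroup

variable {R : Type*} [Semigroup R] {a p c : R}

theorem inv_mul_proj [Star R] (h : IsCornerInverse a p c) : c * p = c := by
  rw [← h.mul_inv, ← mul_assoc, h.inv_mul, h.proj_mul_inv]

theorem proj_mul_comm [Star R] (h : IsCornerInverse a p c) : p * a = a * p := by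
  rw [← h.mul_inv, mul_assoc, h.inv_mul, h.mul_inv]

theorem isIdempotentElem [Star R] (h : IsCornerInverse a p c) : IsIdempotentElem p := by
  rw [IsIdempotentElem]
  nth_rw 2 [← h.inv_mul]
  rw [← mul_assoc, h.proj_mul_inv, h.inv_mul]

theorem isStarProjection [StarMul R] (h : IsCornerInverse a p c) (ha : IsSelfAdjoint a) :
    IsStarProjection p where
  isIdempotentElem := h.isIdempotentElem
  isSelfAdjoint := by
    rw [IsSelfAdjoint, ← h.inv_mul, star_mul, ha.star_eq, h.isSelfAdjoint.star_eq, h.mul_inv,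
      h.inv_mul]

theorem proj_mul_mul_proj_eq [Star R] (h : IsCornerInverse a p c) (y : R) :
    p * y * p = a * (c * y * c) * a := by
  nth_rw 1 [← h.mul_inv]
  rw [← h.inv_mul]
  simp only [mul_assoc]

end Semigroup

variable {R : Type*} [CStarAlgebra R] {a p c : R}

theorem norm_inv_mul_mul_proj_sub_star_le (h : IsCornerInverse a p c) (ha : IsSelfAdjoint a)
    (y : R) :
    ‖c * star y * p - star (c * y * p)‖ ≤ ‖c‖ ^ 2 * ‖star y * a - a * star y‖ := by
  have hcomm : c * star y * p - star (c * y * p) = c * (star y * a - a * star y) * c := by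
    simp only [star_mul, (h.isStarProjection ha).isSelfAdjoint.star_eq, h.isSelfAdjoint.star_eq,
      mul_sub, sub_mul]
    rw [← mul_assoc c a, h.inv_mul, ← mul_assoc c, mul_assoc _ a c, h.mul_inv, mul_assoc p]
  rw [hcomm]
  refine (norm_mul₃_le ..).trans_eq ?_
  ring

theorem mul_norm_proj_mul_mul_compl_le (h : IsCornerInverse a p c) (ha : IsSelfAdjoint a)
    {t g : ℝ} (hat : ‖a * (1 - p)‖ ≤ t) (hctg : ‖c‖ * (t + g) ≤ 1) (y : R) :
    g * ‖p * y * (1 - p)‖ ≤ ‖a * y - y * a‖ := by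
  have hp := h.isStarProjection ha
  rcases eq_or_ne c 0 with rfl | hc0
  · simp [← h.inv_mul]
  have hcomm : p * y * (1 - p)
      = c * (a * y - y * a) * (1 - p) + c * (p * y * (1 - p)) * (a * (1 - p)) := by
    have hca : ∀ w, c * (a * w) = p * w := fun w => by rw [← mul_assoc, h.inv_mul]
    have hcp : ∀ w, c * (p * w) = c * w := fun w => by rw [← mul_assoc, h.inv_mul_proj]
    have hpa : ∀ w, p * (a * w) = a * (p * w) := fun w => by
      rw [← mul_assoc, h.proj_mul_comm, mul_assoc]
    simp only [mul_sub, sub_mul, mul_one, mul_assoc, hca, hcp, hpa, h.proj_mul_comm,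
      hp.isIdempotentElem.eq]
    abel
  have hle : ‖p * y * (1 - p)‖
      ≤ ‖c‖ * ‖a * y - y * a‖ + ‖c‖ * ‖p * y * (1 - p)‖ * t := by
    nth_rw 1 [hcomm]
    refine norm_add_le_of_le ((norm_mul₃_le ..).trans ?_) ((norm_mul₃_le ..).trans (by gcongr))
    exact mul_le_of_le_one_right (by positivity) hp.one_sub.norm_le
  have hc : 0 < ‖c‖ := norm_pos_iff.2 hc0
  refine le_of_mul_le_mul_left ?_ hc
  nlinarith [norm_nonneg (p * y * (1 - p))]

theorem norm_mul_self_sub_le (h : IsCornerInverse a p c) (ha : IsSelfAdjoint a) (y z : R) :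
    ‖c * y * p * (c * y * p) - c * z * p‖
      ≤ ‖c‖ ^ 3 * ‖a * y - y * a‖ * ‖y‖ + ‖c‖ ^ 2 * ‖p * y * (1 - p)‖ * ‖y‖
        + ‖c‖ ^ 2 * ‖y * y - a * z‖ := by
  have hca : ∀ w, c * (a * w) = p * w := fun w => by rw [← mul_assoc, h.inv_mul]
  have hac : ∀ w, a * (c * w) = p * w := fun w => by rw [← mul_assoc, h.mul_inv]
  have hpc : ∀ w, p * (c * w) = c * w := fun w => by rw [← mul_assoc, h.proj_mul_inv]
  have hcp : ∀ w, c * (p * w) = c * w := fun w => by rw [← mul_assoc, h.inv_mul_proj]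
  have hexpand : c * y * p * (c * y * p) - c * z * p
      = c * c * (a * y - y * a) * c * y * p - c * c * (p * y * (1 - p)) * y * p
        + c * c * (y * y - a * z) * p := by
    simp only [mul_sub, sub_mul, mul_one, mul_assoc, hca, hac, hpc, hcp]
    abel
  have hp : ‖p‖ ≤ 1 := (h.isStarProjection ha).norm_le
  have hcomm : ‖c * c * (a * y - y * a) * c * y * p‖ ≤ ‖c‖ ^ 3 * ‖a * y - y * a‖ * ‖y‖ := by
    calc _ ≤ ‖c‖ * ‖c‖ * ‖a * y - y * a‖ * ‖c‖ * ‖y‖ * 1 :=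
          norm_mul_le_of_le (norm_mul_le_of_le (norm_mul_le_of_le (norm_mul₃_le ..) le_rfl)
            le_rfl) hp
      _ = _ := by ring
  have hoff : ‖c * c * (p * y * (1 - p)) * y * p‖ ≤ ‖c‖ ^ 2 * ‖p * y * (1 - p)‖ * ‖y‖ := by
    calc _ ≤ ‖c‖ * ‖c‖ * ‖p * y * (1 - p)‖ * ‖y‖ * 1 :=
          norm_mul_le_of_le (norm_mul_le_of_le (norm_mul₃_le ..) le_rfl) hp
      _ = _ := by ring
  have hsq : ‖c * c * (y * y - a * z) * p‖ ≤ ‖c‖ ^ 2 * ‖y * y - a * z‖ := by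
    calc _ ≤ ‖c‖ * ‖c‖ * ‖y * y - a * z‖ * 1 := norm_mul_le_of_le (norm_mul₃_le ..) hp
      _ = _ := by ring
  rw [hexpand]
  exact norm_add_le_of_le (norm_sub_le_of_le hcomm hoff) hsq

end IsCornerInverse

end Corner

section SpectralCut

open Finset

theorem exists_gap_finset (F : Finset ℝ) (a : ℝ) {L : ℝ} (hL : 0 < L) :
    ∃ t ∈ Set.Icc a (a + L), ∀ s ∈ F, t < s → t + L / (#F + 1) ≤ s := by
  set g := L / (#F + 1) with hg
  have hg0 : 0 < g := by positivity
  obtain ⟨k, hk, hkF⟩ : ∃ k ∈ range (#F + 1), k ∉ F.image fun s => ⌊(s - a) / g⌋₊ :=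
    exists_mem_notMem_of_card_lt_card (card_image_le.trans_lt (by simp))
  refine ⟨a + k * g, ⟨by linarith [show 0 ≤ k * g by positivity], ?_⟩, fun s hs hts => ?_⟩
  · have hkn : (k : ℝ) ≤ #F + 1 := by exact_mod_cast (mem_range.1 hk).le
    calc a + k * g ≤ a + (#F + 1) * g := by gcongr
      _ = a + L := by rw [hg, mul_div_cancel₀ _ (by positivity)]
  · by_contra! hsg
    refine hkF (mem_image.2 ⟨s, hs, ?_⟩)
    rw [Nat.floor_eq_iff (div_nonneg (by nlinarith [show 0 ≤ k * g by positivity]) hg0.le),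
      le_div_iff₀ hg0, div_lt_iff₀ hg0]
    exact ⟨by linarith, by linarith⟩

theorem doubleCommutant_mono {M : Type*} [Monoid M] {S T : Set M} (h : S ⊆ T) :
    doubleCommutant S ⊆ doubleCommutant T :=
  Set.centralizer_subset (Set.centralizer_subset h)

variable {R : Type*} [CStarAlgebra R] {a : R}

theorem cfc_mem_doubleCommutant (f : ℝ → ℝ) (a : R) : cfc f a ∈ doubleCommutant {a} := by
  intro b hb
  have hab : Commute a b := hb a rfl
  exact (hab.cfc_real f).symm.eq

theorem exists_isCornerInverse (ha : IsSelfAdjoint a) (hfin : (spectrum ℝ a).Finite) {t g : ℝ}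
    (ht : 0 ≤ t) (hg : 0 < g) (hgap : ∀ s ∈ spectrum ℝ a, t < |s| → t + g ≤ |s|) :
    ∃ p c, IsCornerInverse a p c ∧ ‖c‖ * (t + g) ≤ 1 ∧ ‖a * (1 - p)‖ ≤ t ∧
      c ∈ doubleCommutant {a} := by
  have hcont : ∀ f : ℝ → ℝ, ContinuousOn f (spectrum ℝ a) := hfin.continuousOn
  have hmul : ∀ f : ℝ → ℝ, a * cfc f a = cfc (fun s => s * f s) a := fun f => by
    rw [cfc_mul (fun s => s) f a (hcont _) (hcont _), cfc_id' ℝ a]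
  let inv : ℝ → ℝ := fun s => if t < |s| then s⁻¹ else 0
  let ind : ℝ → ℝ := fun s => if t < |s| then 1 else 0
  have hne : ∀ s, t < |s| → s ≠ 0 := fun s hs => abs_pos.1 (ht.trans_lt hs)
  have hmul_inv : a * cfc inv a = cfc ind a := by
    rw [hmul]
    congr 1 with s
    by_cases hs : t < |s|
    · simp [inv, ind, hs, hne s hs]
    · simp [inv, ind, hs]
  have hcomm : Commute a (cfc inv a) := ((Commute.refl a).cfc_real inv).symm
  refine ⟨cfc ind a, cfc inv a, ⟨cfc_predicate _ _, hcomm.symm.eq.trans hmul_inv, hmul_inv, ?_⟩,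
    ?_, ?_, cfc_mem_doubleCommutant _ a⟩
  · rw [← cfc_mul _ _ _ (hcont _) (hcont _)]
    congr 1 with s
    by_cases hs : t < |s| <;> simp [inv, ind, hs]
  · rw [← le_div_iff₀ (by positivity)]
    refine norm_cfc_le (by positivity) fun s hs => ?_
    by_cases hts : t < |s|
    · simpa [inv, hts] using inv_anti₀ (by positivity) (hgap s hs hts)
    · simp only [inv, hts, if_false, norm_zero]
      positivity
  · have hcompl : a * (1 - cfc ind a) = cfc (fun s => s * (1 - ind s)) a := by
      rw [← hmul, cfc_sub (fun _ => 1) ind a (hcont _) (hcont _), cfc_const_one ℝ a]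
    rw [hcompl]
    refine norm_cfc_le ht fun s _ => ?_
    by_cases hts : t < |s|
    · simpa [ind, hts] using ht
    · simpa [ind, hts] using not_lt.1 hts

theorem exists_isCornerInverse_of_card_le (ha : IsSelfAdjoint a) {F : Finset ℝ} {N : ℕ}
    (hF : #F ≤ N) (hspec : spectrum ℝ a ⊆ F) {τ : ℝ} (hτ : 0 < τ) :
    ∃ t ∈ Set.Icc τ (2 * τ), ∃ p c, IsCornerInverse a p c ∧ ‖c‖ * (t + τ / (N + 1)) ≤ 1 ∧
      ‖a * (1 - p)‖ ≤ t ∧ c ∈ doubleCommutant {a} := by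
  classical
  obtain ⟨t, ht, hgap⟩ := exists_gap_finset (F.image fun s => |s|) τ hτ
  refine ⟨t, two_mul τ ▸ ht, exists_isCornerInverse ha (F.finite_toSet.subset hspec)
    (hτ.le.trans ht.1) (by positivity) fun s hs hts => le_trans ?_
      (hgap _ (mem_image_of_mem _ (hspec hs)) hts)⟩
  have hcard : #(F.image fun s => |s|) ≤ N := card_image_le.trans hF
  gcongr

theorem exists_card_le_spectrum_subset_of_aeval_eq_zero {Q : Polynomial ℂ} (hQ : Q ≠ 0)
    (h : Polynomial.aeval a Q = 0) :
    ∃ F : Finset ℝ, #F ≤ Q.natDegree ∧ spectrum ℝ a ⊆ F := by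
  classical
  refine ⟨Q.roots.toFinset.image Complex.re, ?_, fun s hs => ?_⟩
  · exact card_image_le.trans ((Multiset.toFinset_card_le _).trans Q.card_roots')
  have : Nontrivial R := by
    by_contra hR
    rw [not_nontrivial_iff_subsingleton] at hR
    simp at hs
  have hroot : Q.eval (s : ℂ) = 0 := by
    have := spectrum.subset_polynomial_aeval a Q ⟨_, spectrum.algebraMap_mem ℂ hs, rfl⟩
    simpa [h, spectrum.zero_eq] using this
  simp only [coe_image, Set.mem_image, mem_coe, Multiset.mem_toFinset]
  exact ⟨s, (Polynomial.mem_roots hQ).2 hroot, Complex.ofReal_re s⟩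

end SpectralCut

section StructureTheorem

open Finset

/-- A map which preserves adjoints and squares up to a relative error `δ`. -/
def IsApproxJordanStarHom {A R : Type*} [Norm A] [Mul A] [Star A] [Norm R] [Sub R] [Mul R]
    [Star R] (δ : ℝ) (Θ : A → R) : Prop :=
  (∀ x, ‖Θ (star x) - star (Θ x)‖ ≤ δ * ‖x‖) ∧ ∀ x, ‖Θ x * Θ x - Θ (x * x)‖ ≤ δ * ‖x‖ ^ 2

theorem IsApproxJordanStarHom.mono {A R : Type*} [SeminormedAddGroup A] [Mul A] [Star A] [Norm R]
    [Sub R] [Mul R] [Star R] {δ δ' : ℝ} {Θ : A → R} (hΘ : IsApproxJordanStarHom δ Θ)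
    (hδ : δ ≤ δ') : IsApproxJordanStarHom δ' Θ :=
  ⟨fun x => (hΘ.1 x).trans (by gcongr), fun x => (hΘ.2 x).trans (by gcongr)⟩

theorem cut_defect_le {e m t : ℝ} (he : 0 ≤ e) (he1 : e ≤ 1) (hem : e ≤ m)
    (ht : t ≤ 2 * (m ^ 3 * e ^ 2)) : t * m ^ 5 + 128 * e ^ 16 ≤ (12 * (m ^ 4 * e)) ^ 2 := by
  have hm : 0 ≤ m := he.trans hem
  have htm : t * m ^ 5 ≤ 2 * (m ^ 3 * e ^ 2) * m ^ 5 := by gcongr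
  have hpow : e ^ 16 ≤ m ^ 8 * e ^ 2 := by
    calc e ^ 16 = e ^ 8 * e ^ 8 := by ring
      _ ≤ m ^ 8 * e ^ 2 :=
          mul_le_mul (by gcongr) (pow_le_pow_of_le_one he he1 (by norm_num)) (by positivity)
            (by positivity)
  nlinarith [show 0 ≤ m ^ 8 * e ^ 2 by positivity]

theorem jordan_defect_le {e m s : ℝ} (n : ℕ) (he : 0 < e) (hem : e ≤ m) (hs : 0 ≤ s)
    (hsm : s ≤ (m ^ 3 * e ^ 2)⁻¹) :
    s ^ 2 * e ^ 16 * (256 * m ^ 5 * (s + (n + 1) * (m ^ 3 * e ^ 2)⁻¹) + 1024)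
      ≤ 256 * (n + 6) * (m ^ 5 * e) := by
  have hm : 0 < m := he.trans_le hem
  set u := (m ^ 3 * e ^ 2)⁻¹
  have hu0 : 0 < u := by positivity
  have huτ : u * (m ^ 3 * e ^ 2) = 1 := inv_mul_cancel₀ (by positivity)
  have hsq : u ^ 2 * e ^ 16 ≤ m ^ 5 * e := by
    calc u ^ 2 * e ^ 16 = u ^ 2 * e ^ 5 * e ^ 11 := by ring
      _ ≤ u ^ 2 * e ^ 5 * m ^ 11 := by gcongr
      _ = (u * (m ^ 3 * e ^ 2)) ^ 2 * (m ^ 5 * e) := by ring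
      _ = m ^ 5 * e := by rw [huτ]; ring
  have hcube : u ^ 3 * e ^ 16 * m ^ 5 ≤ m ^ 5 * e := by
    calc u ^ 3 * e ^ 16 * m ^ 5 = u ^ 3 * e ^ 7 * m ^ 5 * e ^ 9 := by ring
      _ ≤ u ^ 3 * e ^ 7 * m ^ 5 * m ^ 9 := by gcongr
      _ = (u * (m ^ 3 * e ^ 2)) ^ 3 * (m ^ 5 * e) := by ring
      _ = m ^ 5 * e := by rw [huτ]; ring
  calc s ^ 2 * e ^ 16 * (256 * m ^ 5 * (s + (n + 1) * u) + 1024)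
      ≤ u ^ 2 * e ^ 16 * (256 * m ^ 5 * (u + (n + 1) * u) + 1024) := by gcongr
    _ = 256 * (n + 2) * (u ^ 3 * e ^ 16 * m ^ 5) + 1024 * (u ^ 2 * e ^ 16) := by ring
    _ ≤ 256 * (n + 2) * (m ^ 5 * e) + 1024 * (m ^ 5 * e) := by gcongr
    _ = 256 * (n + 6) * (m ^ 5 * e) := by ring

namespace IsEpsOrderZero

variable {A R : Type*} [CStarAlgebra A] [PartialOrder A] [StarOrderedRing A] [CStarAlgebra R]
  {ε t g : ℝ} {Φ : A →L[ℂ] R} {p c : R}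

theorem norm_map_sub_starProjection_conj_le (hΦ : IsEpsOrderZero ε Φ) (hε : 0 ≤ ε)
    (hstar : ∀ x, Φ (star x) = star (Φ x)) (hp : IsStarProjection p)
    (hcut : ‖Φ 1 * (1 - p)‖ ≤ t) {r : ℝ} (hr : 0 ≤ r) (htr : t * ‖Φ‖ + 128 * ε ≤ r ^ 2) (x : A) :
    ‖Φ x - p * Φ x * p‖ ≤ 4 * r * ‖x‖ := by
  have ht : 0 ≤ t := (norm_nonneg _).trans hcut
  have hsa : ∀ y, IsSelfAdjoint y → IsSelfAdjoint (Φ y) := fun y hy => by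
    rw [IsSelfAdjoint, ← hstar, hy.star_eq]
  have hcut' : ‖(1 - p) * Φ 1‖ ≤ t := by
    rwa [← norm_star, star_mul, (hsa 1 (.one A)).star_eq, hp.one_sub.isSelfAdjoint.star_eq]
  have hoff : ∀ y, IsSelfAdjoint y → ‖Φ y * (1 - p)‖ ≤ r * ‖y‖ := fun y hy => by
    refine le_of_sq_le_sq ?_ (by positivity)
    have hnorm : ‖Φ (y * y)‖ ≤ ‖Φ‖ * ‖y‖ ^ 2 :=
      (Φ.le_opNorm _).trans (by rw [sq]; gcongr; exact norm_mul_le _ _)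
    calc ‖Φ y * (1 - p)‖ ^ 2
        ≤ ‖Φ y * Φ y - Φ 1 * Φ (y * y)‖ + ‖(1 - p) * Φ 1‖ * ‖Φ (y * y)‖ :=
          norm_mul_one_sub_starProjection_sq_le hp (hsa y hy) _ _
      _ ≤ 128 * ε * ‖y‖ ^ 2 + t * (‖Φ‖ * ‖y‖ ^ 2) := by
          gcongr
          exact hΦ.norm_map_mul_self_sub_le_of_isSelfAdjoint hε hy
      _ = (t * ‖Φ‖ + 128 * ε) * ‖y‖ ^ 2 := by ring
      _ ≤ (r * ‖y‖) ^ 2 := by rw [mul_pow]; gcongr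
  let L : A →ₗ[ℂ] R := Φ - LinearMap.mulLeftRight ℂ (p, p) ∘ₗ (Φ : A →ₗ[ℂ] R)
  refine (norm_apply_le_of_isSelfAdjoint L (by positivity : 0 ≤ 2 * r) (fun y hy => ?_)
    x).trans_eq (by ring)
  calc ‖Φ y - p * Φ y * p‖ ≤ 2 * ‖Φ y * (1 - p)‖ :=
        norm_sub_starProjection_conj_le hp (hsa y hy)
    _ ≤ 2 * (r * ‖y‖) := by gcongr; exact hoff y hy
    _ = 2 * r * ‖y‖ := by ring

theorem isApproxJordanStarHom (hΦ : IsEpsOrderZero ε Φ) (hε : 0 ≤ ε)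
    (hstar : ∀ x, Φ (star x) = star (Φ x)) (h : IsCornerInverse (Φ 1) p c)
    (hcut : ‖Φ 1 * (1 - p)‖ ≤ t) (hg : 0 < g) (hctg : ‖c‖ * (t + g) ≤ 1) :
    IsApproxJordanStarHom (‖c‖ ^ 2 * ε * (256 * ‖Φ‖ * (‖c‖ + g⁻¹) + 1024))
      fun x => c * Φ x * p := by
  have ha : IsSelfAdjoint (Φ 1) := by rw [IsSelfAdjoint, ← hstar, star_one]
  have hcomm := hΦ.norm_map_mul_map_one_sub_le hε
  refine ⟨fun x => ?_, fun x => ?_⟩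
  · calc ‖c * Φ (star x) * p - star (c * Φ x * p)‖
        ≤ ‖c‖ ^ 2 * ‖Φ (star x) * Φ 1 - Φ 1 * Φ (star x)‖ := by
          rw [hstar]
          exact h.norm_inv_mul_mul_proj_sub_star_le ha (Φ x)
      _ ≤ ‖c‖ ^ 2 * (256 * ε * ‖star x‖) := by gcongr; exact hcomm _
      _ = ‖c‖ ^ 2 * ε * 256 * ‖x‖ := by rw [norm_star]; ring
      _ ≤ ‖c‖ ^ 2 * ε * (256 * ‖Φ‖ * (‖c‖ + g⁻¹) + 1024) * ‖x‖ := by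
          gcongr
          linarith [show 0 ≤ 256 * ‖Φ‖ * (‖c‖ + g⁻¹) by positivity]
  · have hcomm' : ‖Φ 1 * Φ x - Φ x * Φ 1‖ ≤ 256 * ε * ‖x‖ := norm_sub_rev (Φ 1 * Φ x) _ ▸ hcomm x
    have hoff : ‖p * Φ x * (1 - p)‖ ≤ g⁻¹ * (256 * ε * ‖x‖) := by
      rw [le_inv_mul_iff₀ hg]
      exact (h.mul_norm_proj_mul_mul_compl_le ha hcut hctg (Φ x)).trans hcomm'
    calc ‖c * Φ x * p * (c * Φ x * p) - c * Φ (x * x) * p‖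
        ≤ ‖c‖ ^ 3 * (256 * ε * ‖x‖) * (‖Φ‖ * ‖x‖)
          + ‖c‖ ^ 2 * (g⁻¹ * (256 * ε * ‖x‖)) * (‖Φ‖ * ‖x‖)
          + ‖c‖ ^ 2 * (1024 * ε * ‖x‖ ^ 2) := by
          refine (h.norm_mul_self_sub_le ha _ _).trans ?_
          gcongr
          · exact Φ.le_opNorm x
          · exact Φ.le_opNorm x
          · exact hΦ.norm_map_mul_self_sub_le hε x
      _ = ‖c‖ ^ 2 * ε * (256 * ‖Φ‖ * (‖c‖ + g⁻¹) + 1024) * ‖x‖ ^ 2 := by ring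

theorem exists_isCornerInverse {e m : ℝ} (hΦ : IsEpsOrderZero (e ^ 16) Φ)
    (hstar : ∀ x, Φ (star x) = star (Φ x)) (he : 0 < e) (he1 : e ≤ 1) (hem : e ≤ m)
    (hm : ‖Φ‖ ≤ m ^ 5) {F : Finset ℝ} {N : ℕ} (hF : #F ≤ N) (hspec : spectrum ℝ (Φ 1) ⊆ F) :
    ∃ p c, IsCornerInverse (Φ 1) p c ∧ c ∈ doubleCommutant {Φ 1} ∧
      (∀ x, ‖Φ x - p * Φ x * p‖ ≤ 48 * (m ^ 4 * e) * ‖x‖) ∧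
      IsApproxJordanStarHom (256 * (N + 6) * (m ^ 5 * e)) fun x => c * Φ x * p := by
  have ha : IsSelfAdjoint (Φ 1) := by rw [IsSelfAdjoint, ← hstar, star_one]
  have hm0 : 0 < m := he.trans_le hem
  have hτ : 0 < m ^ 3 * e ^ 2 := by positivity
  have hg : 0 < m ^ 3 * e ^ 2 / (N + 1) := by positivity
  obtain ⟨t, ht, p, c, h, hctg, hcut, hc⟩ := exists_isCornerInverse_of_card_le ha hF hspec hτ
  have ht0 : 0 ≤ t := hτ.le.trans ht.1
  have hcτ : ‖c‖ ≤ (m ^ 3 * e ^ 2)⁻¹ := by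
    rw [← one_div, le_div_iff₀ hτ]
    exact le_trans (by gcongr; linarith [ht.1]) hctg
  refine ⟨p, c, h, hc, fun x => ?_, ?_⟩
  · refine (hΦ.norm_map_sub_starProjection_conj_le (by positivity) hstar (h.isStarProjection ha)
      hcut (by positivity) (le_trans (by gcongr) (cut_defect_le he.le he1 hem ht.2)) x).trans_eq ?_
    ring
  · refine (hΦ.isApproxJordanStarHom (by positivity) hstar h hcut hg hctg).mono
      (le_trans ?_ (jordan_defect_le N he hem (norm_nonneg c) hcτ))
    rw [inv_div, div_eq_mul_inv]
    gcongr

end IsEpsOrderZero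

end StructureTheorem

section CornerDecomposition

open Finset

/-- `Φ` splits, inside `M`, into a part `ψs` of norm at most `η` and a part `ψr` in a corner of the
hereditary subalgebra generated by `a`, where `ψr` is either zero or, after division by its value
at `1`, a `δ`-Jordan *-homomorphism. -/
def HasCornerDecomposition {A R : Type*} [CStarAlgebra A] [CStarAlgebra R] (M : Set R) (a : R)
    (Φ : A → R) (η δ : ℝ) : Prop :=
  ∃ ψs ψr : A →L[ℂ] R, (∀ x, ψs x ∈ M) ∧ (∀ x, ψr x ∈ M) ∧ (∀ x, Φ x = ψs x + ψr x) ∧ ‖ψs‖ ≤ η ∧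
    ∃ q ∈ M, IsSelfAdjoint q ∧ q * q = q ∧
      (∀ x, ψr x ∈ cornerSet q (closure {y | ∃ b ∈ M, y = a * b * a})) ∧
      (ψr = 0 ∨ ∃ c ∈ cornerSet q (closure {y | ∃ b ∈ M, y = a * b * a}),
        c * ψr 1 = q ∧ ψr 1 * c = q ∧ IsApproxJordanStarHom δ fun x => c * ψr x)

theorem IsCornerInverse.proj_mul_mul_proj_mem_cornerSet {R : Type*} [Semigroup R] [Star R]
    [TopologicalSpace R] {M : Set R} {a p c y : R} (h : IsCornerInverse a p c)
    (hy : c * y * c ∈ M) : p * y * p ∈ cornerSet p (closure {w | ∃ b ∈ M, w = a * b * a}) := by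
  refine ⟨p * y * p, subset_closure ⟨c * y * c, hy, h.proj_mul_mul_proj_eq y⟩, ?_⟩
  calc p * y * p = p * p * y * (p * p) := by rw [h.isIdempotentElem.eq]
    _ = p * (p * y * p) * p := by simp only [mul_assoc]

variable {A R : Type*} [CStarAlgebra A] [CStarAlgebra R] {S : Set R} {Φ : A →L[ℂ] R} {η δ : ℝ}

theorem hasCornerDecomposition_of_norm_le (hΦS : ∀ x, Φ x ∈ doubleCommutant S) (hΦ : ‖Φ‖ ≤ η)
    (a : R) : HasCornerDecomposition (doubleCommutant S) a Φ η δ := by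
  have hzero : (0 : R) ∈ doubleCommutant S := Set.zero_mem_centralizer
  exact ⟨Φ, 0, hΦS, fun _ => hzero, fun x => (add_zero _).symm, hΦ, 0, hzero, .zero R, zero_mul 0,
    fun _ => ⟨0, subset_closure ⟨0, hzero, by simp⟩, by simp⟩, .inl rfl⟩

theorem IsCornerInverse.hasCornerDecomposition {p c : R} (h : IsCornerInverse (Φ 1) p c)
    (ha : IsSelfAdjoint (Φ 1)) (hΦS : ∀ x, Φ x ∈ doubleCommutant S) (hc : c ∈ doubleCommutant S)
    (hη : 0 ≤ η) (hs : ∀ x, ‖Φ x - p * Φ x * p‖ ≤ η * ‖x‖)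
    (hJ : IsApproxJordanStarHom δ fun x => c * Φ x * p) :
    HasCornerDecomposition (doubleCommutant S) (Φ 1) Φ η δ := by
  let ψr : A →L[ℂ] R := (ContinuousLinearMap.mulLeftRight ℂ R p p).comp Φ
  have hp : p ∈ doubleCommutant S := h.inv_mul ▸ Set.mul_mem_centralizer hc (hΦS 1)
  have hψr : ∀ x, p * Φ x * p ∈ doubleCommutant S := fun x =>
    Set.mul_mem_centralizer (Set.mul_mem_centralizer hp (hΦS x)) hp
  have hconj : ∀ y ∈ doubleCommutant S, c * y * c ∈ doubleCommutant S := fun y hy =>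
    Set.mul_mem_centralizer (Set.mul_mem_centralizer hc hy) hc
  have hcψr : ∀ x, c * (p * Φ x * p) = c * Φ x * p := fun x => by
    rw [← mul_assoc, ← mul_assoc, h.inv_mul_proj]
  refine ⟨Φ - ψr, ψr, fun x => ?_, hψr, fun x => (sub_add_cancel _ _).symm,
    ContinuousLinearMap.opNorm_le_bound _ hη hs, p, hp, (h.isStarProjection ha).isSelfAdjoint,
    h.isIdempotentElem, fun x => h.proj_mul_mul_proj_mem_cornerSet (hconj _ (hΦS x)),
    .inr ⟨c, ?_, ?_, ?_, ?_⟩⟩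
  · rw [sub_apply, sub_eq_add_neg]
    exact Set.add_mem_centralizer (hΦS x) (Set.neg_mem_centralizer (hψr x))
  · have := h.proj_mul_mul_proj_mem_cornerSet (hconj c hc)
    rwa [h.proj_mul_inv, h.inv_mul_proj] at this
  · exact (hcψr 1).trans (by rw [h.inv_mul, h.isIdempotentElem.eq])
  · change p * Φ 1 * p * c = p
    rw [mul_assoc, h.proj_mul_inv, mul_assoc, h.mul_inv, h.isIdempotentElem.eq]
  · exact (funext hcψr : (fun x => c * ψr x) = _) ▸ hJ

theorem HasCornerDecomposition.mono {M : Set R} {a : R} {Φ : A → R} {η' δ' : ℝ}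
    (h : HasCornerDecomposition M a Φ η δ) (hη : η ≤ η') (hδ : δ ≤ δ') :
    HasCornerDecomposition M a Φ η' δ' := by
  obtain ⟨ψs, ψr, hs, hr, hadd, hnorm, q, hq, hqsa, hqq, hcorner, hinv⟩ := h
  refine ⟨ψs, ψr, hs, hr, hadd, hnorm.trans hη, q, hq, hqsa, hqq, hcorner, hinv.imp_right ?_⟩
  rintro ⟨c, hc, hcr, hrc, hJ⟩
  exact ⟨c, hc, hcr, hrc, hJ.mono hδ⟩

theorem IsEpsOrderZero.hasCornerDecomposition [PartialOrder A] [StarOrderedRing A] {ε L : ℝ}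
    (hΦ : IsEpsOrderZero ε Φ) (hstar : ∀ x, Φ (star x) = star (Φ x)) (hε : 0 < ε) (hε1 : ε ≤ 1)
    (hL : ‖Φ‖ ≤ L) (hΦS : ∀ x, Φ x ∈ S) {F : Finset ℝ} {N : ℕ} (hF : #F ≤ N)
    (hspec : spectrum ℝ (Φ 1) ⊆ F) :
    HasCornerDecomposition (doubleCommutant S) (Φ 1) Φ
      (48 * (L ^ ((4 : ℝ) / 5) * ε ^ ((1 : ℝ) / 16)))
      (256 * (N + 6) * (L * ε ^ ((1 : ℝ) / 16))) := by
  have hL0 : 0 ≤ L := (norm_nonneg _).trans hL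
  set e := ε ^ ((1 : ℝ) / 16) with he_def
  have he : 0 < e := by positivity
  have he1 : e ≤ 1 := Real.rpow_le_one hε.le hε1 (by norm_num)
  have he16 : e ^ 16 = ε := by rw [he_def, ← Real.rpow_mul_natCast hε.le]; norm_num
  set m := L ^ ((1 : ℝ) / 5) with hm_def
  have hm : 0 ≤ m := by positivity
  have hm5 : m ^ 5 = L := by rw [hm_def, ← Real.rpow_mul_natCast hL0]; norm_num
  have hm4 : m ^ 4 = L ^ ((4 : ℝ) / 5) := by rw [hm_def, ← Real.rpow_mul_natCast hL0]; norm_num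
  rw [← hm4, ← hm5]
  have hΦS' : ∀ x, Φ x ∈ doubleCommutant S := fun x => Set.subset_centralizer_centralizer (hΦS x)
  rcases le_total m e with hme | hem
  · refine hasCornerDecomposition_of_norm_le hΦS' ?_ _
    calc ‖Φ‖ ≤ m ^ 4 * m := by rwa [← pow_succ, hm5]
      _ ≤ m ^ 4 * e := by gcongr
      _ ≤ 48 * (m ^ 4 * e) := le_mul_of_one_le_left (by positivity) (by norm_num)
  · rw [← he16] at hΦ
    obtain ⟨p, c, h, hc, hs, hJ⟩ :=
      hΦ.exists_isCornerInverse hstar he he1 hem (hm5 ▸ hL) hF hspec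
    exact h.hasCornerDecomposition (by rw [IsSelfAdjoint, ← hstar, star_one]) hΦS'
      (doubleCommutant_mono (Set.singleton_subset_iff.2 (hΦS 1)) hc) (by positivity) hs hJ

end CornerDecomposition

theorem aeval_map_eq_lift_aeval {k B R : Type*} [CommRing k] [NonUnitalRing B] [Module k B]
    [IsScalarTower k B B] [SMulCommClass k B B] [Ring R] [Algebra k R] (φ : B →ₙₐ[k] R) (b : B)
    (Q : Polynomial k) : Polynomial.aeval (φ b) Q
      = Unitization.lift φ (Polynomial.aeval (b : Unitization k B) Q) := by
  have hlift : Unitization.lift φ (b : Unitization k B) = φ b :=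
    DFunLike.congr_fun (Unitization.lift.symm_apply_apply φ) b
  rw [← Polynomial.aeval_algHom_apply, hlift]

theorem stmt_18_general :
    ∃ K : ℝ, ∃ C : ℕ → ℝ, ∀ (N : ℕ) {A B R : Type*} [CStarAlgebra A] [PartialOrder A]
      [StarOrderedRing A] [NonUnitalCStarAlgebra B] [CStarAlgebra R] (π : B →⋆ₙₐ[ℂ] R) {ε : ℝ},
      0 < ε → ε ≤ 1 → ∀ ψ : A →L[ℂ] B, (∀ x, ψ (star x) = star (ψ x)) → IsEpsOrderZero ε ψ →
      (∃ Q : Polynomial ℂ, Q.Monic ∧ Q.natDegree ≤ N ∧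
        Polynomial.aeval (ψ 1 : Unitization ℂ B) Q = 0) →
      HasCornerDecomposition (doubleCommutant (Set.range π)) (π (ψ 1)) (fun x => π (ψ x))
        ((6 * K + 7) * ‖ψ‖ ^ ((4 : ℝ) / 5) * ε ^ ((1 : ℝ) / 16))
        (24 * (C N ^ 2 * (K + 2) ^ 5 + 10 * C N + 17) * ‖ψ‖ * ε ^ ((1 : ℝ) / 16)) := by
  refine ⟨7, fun N => N + 6, fun N A B R _ _ _ _ _ π ε hε hε1 ψ hstar hψ ⟨Q, hQ, hQN, hQ0⟩ => ?_⟩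
  have hbound : ∀ x, ‖π (ψ x)‖ ≤ ‖ψ‖ * ‖x‖ := fun x =>
    (NonUnitalStarAlgHom.norm_apply_le π _).trans (ψ.le_opNorm x)
  let Φ : A →L[ℂ] R := ((π : B →ₗ[ℂ] R) ∘ₗ (ψ : A →ₗ[ℂ] B)).mkContinuous ‖ψ‖ hbound
  have hΦ : ‖Φ‖ ≤ ‖ψ‖ := LinearMap.mkContinuous_norm_le _ (norm_nonneg _) hbound
  have hroot : Polynomial.aeval (π (ψ 1)) Q = 0 := by
    rw [← NonUnitalStarAlgHom.coe_toNonUnitalAlgHom, aeval_map_eq_lift_aeval, hQ0, map_zero]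
  obtain ⟨F, hF, hspec⟩ := exists_card_le_spectrum_subset_of_aeval_eq_zero hQ.ne_zero hroot
  have hψΦ : IsEpsOrderZero ε Φ := hψ.comp_nonUnitalStarAlgHom π fun _ => rfl
  have hstarΦ : ∀ x, Φ (star x) = star (Φ x) := fun x =>
    (congrArg π (hstar x)).trans (map_star π _)
  refine (hψΦ.hasCornerDecomposition hstarΦ hε hε1 hΦ (S := Set.range π) (fun x => ⟨ψ x, rfl⟩)
    (hF.trans hQN) hspec).mono ?_ ?_
  · rw [← mul_assoc]
    gcongr
    norm_num
  · rw [← mul_assoc, mul_assoc _ ‖ψ‖, mul_assoc _ ‖ψ‖]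
    refine mul_le_mul_of_nonneg_right ?_ (by positivity)
    nlinarith [N.cast_nonneg (α := ℝ)]

/-- There exist an absolute constant `K` and constants `C_N` (`N ∈ ℕ`) such
that every self-adjoint ε-order zero map `ψ : A → B` (`A` unital, `ε ∈ (0,1]`) whose value
`h := ψ(1)` is algebraic of degree at most `N`, composed with a nondegenerate representation
`π` of `B` on a Hilbert space `H`, decomposes as `π∘ψ = ψ_s + ψ_r` with `ψ_s, ψ_r` taking
values in `π(B)''`, `‖ψ_s‖ ≤ (6K+7)‖ψ‖^{4/5}ε^{1/16}`, `ψ_r` taking values in a corner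
`q·D·q` of the hereditary subalgebra `D = closure(π(h)·π(B)''·π(h))`, and either `ψ_r = 0` or
`ψ_r(1)` invertible in the corner with `x ↦ ψ_r(1)⁻¹ψ_r(x)` a unital δ-Jordan
*-homomorphism, `δ = 24(C_N²(K+2)⁵ + 10C_N + 17)‖ψ‖ε^{1/16}`. -/
theorem stmt_18 :
    ∃ K : ℝ, ∃ C : ℕ → ℝ, ∀ N : ℕ,
    ∀ (A B H : Type) (_ : CStarAlgebra A) (_ : PartialOrder A) (_ : StarOrderedRing A)
      (_ : NonUnitalCStarAlgebra B) (_ : NormedAddCommGroup H) (_ : InnerProductSpace ℂ H)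
      (_ : CompleteSpace H)
      (π : B →⋆ₙₐ[ℂ] (H →L[ℂ] H)),
      (Submodule.span ℂ {v : H | ∃ (b : B) (ξ : H), v = π b ξ}).topologicalClosure = ⊤ →
    ∀ ε : ℝ, 0 < ε → ε ≤ 1 →
    ∀ ψ : A →L[ℂ] B, (∀ x : A, ψ (star x) = star (ψ x)) → IsEpsOrderZero ε ψ →
    ∀ h : B, h = ψ 1 →
    (∃ Q : Polynomial ℂ, Q.Monic ∧ Q.natDegree ≤ N ∧
      Polynomial.aeval (h : Unitization ℂ B) Q = 0) →
    ∃ ψs ψr : A →L[ℂ] (H →L[ℂ] H),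
      (∀ x : A, ψs x ∈ doubleCommutant (Set.range (⇑π))) ∧
      (∀ x : A, ψr x ∈ doubleCommutant (Set.range (⇑π))) ∧
      (∀ x : A, π (ψ x) = ψs x + ψr x) ∧
      ‖ψs‖ ≤ (6 * K + 7) * ‖ψ‖ ^ ((4 : ℝ) / 5) * ε ^ ((1 : ℝ) / 16) ∧
      ∃ q : H →L[ℂ] H, q ∈ doubleCommutant (Set.range (⇑π)) ∧
        IsSelfAdjoint q ∧ q * q = q ∧
        (∀ x : A, ψr x ∈ cornerSet q
          (closure {y : H →L[ℂ] H |
            ∃ b ∈ doubleCommutant (Set.range (⇑π)), y = π h * b * π h})) ∧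
        (ψr = 0 ∨
          ∃ c : H →L[ℂ] H,
            c ∈ cornerSet q
              (closure {y : H →L[ℂ] H |
                ∃ b ∈ doubleCommutant (Set.range (⇑π)), y = π h * b * π h}) ∧
            c * ψr 1 = q ∧ ψr 1 * c = q ∧
            (∀ x : A, ‖c * ψr (star x) - star (c * ψr x)‖ ≤
              24 * ((C N) ^ 2 * (K + 2) ^ 5 + 10 * C N + 17) * ‖ψ‖ * ε ^ ((1 : ℝ) / 16)
                * ‖x‖) ∧
            (∀ x : A, ‖(c * ψr x) * (c * ψr x) - c * ψr (x * x)‖ ≤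
              24 * ((C N) ^ 2 * (K + 2) ^ 5 + 10 * C N + 17) * ‖ψ‖ * ε ^ ((1 : ℝ) / 16)
                * ‖x‖ ^ 2)) := by
  obtain ⟨K, C, h⟩ := stmt_18_general
  exact ⟨K, C, fun N _ _ _ _ _ _ _ _ _ _ π _ _ hε hε1 ψ hstar hψ _ hh hQ =>
    hh ▸ h N π hε hε1 ψ hstar hψ (hh ▸ hQ)⟩
end
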